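/- Fix 2 ≤ d ≤ n/2 with n sufficiently large, and let m = ⌊log log n⌋. There exists a collection of paths (P_T)_{T∈H} in Ω^B_n(d) (consecutive vertices adjacent with respect to Q_u), indexed by the set H of 4-tuples T = (G₁,G₁',G₂,G₂') with (G₁',G₂') ∈ I_{n,d}(m), G₁ ∈ SN(G₁'), G₂ ∈ SN(G₂'), such that: (i) for every 0 ≤ k₁, k₂ ≤ m and every T = (G₁,G₁',G₂,G₂') ∈ H with G₁' ∈ Cat_{n,d}(k₁) and G₂' ∈ Cat_{n,d}(k₂), the path P_T starts at G₁, ends at G₂, and has length at most C·(k₁+k₂) for a universal constant C > 0; (ii) for every pair of adjacent graphs H ~ H' in Ω^B_n(d), ∑_{T=(G₁,G₁',G₂,G₂')∈H : (H,H')∈P_T} (π_BC(G₁')·Q_c(G₁',G₂')/(|SN(G₁')|·|SN(G₂')|))·|P_T|² ≤ C·π_u(H)·Q_u(H,H')/√n, for a universal constant C > 0. -/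

import Mathlib

/-!
Write `M₁`, `M₂` for the two multigraphs of a tuple, `k₁`, `k₂` for their numbers of double edges,
and `⟨i, i', j, j'⟩` for the switching leading from `M₁` to `M₂`. A simple path from `M₁` performs,
for each double edge `e`, the switching `⟨e.1, x e, e.2, y e⟩`. Its endpoint `G₁` is thus `M₁` with
one copy of each `e` parked at an edge `(x e, y e)` (`park`, `PV`, `SN_park`), and likewise for
`G₂`, with parking rows `x'`.

**Paths.** Choose auxiliary parking edges `(P e, Q e)` far away from everything else
(`exists_aux`). Move the parked edges of `G₁` one at a time to their auxiliary positions, with two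
switchings each. Do the same, backwards, for `G₂`. Parked at the same auxiliary positions, `M₁` and
`M₂` are connected by at most three switchings. This depends on how `⟨i, i', j, j'⟩` meets the
double edges: it may leave them alone (`Cfg.alpha`), or create or destroy some of them
(`Cfg.caseA`, `Cfg.caseB`, `Cfg.caseC`, and their images under reversal `Cfg.rev` and relabelling
`Cfg.swap`). The length is at most `2 k₁ + 3 + 2 k₂ ≤ 5 (k₁ + k₂)`.

**Congestion.** A neighbourhood `SN` has at least `(n / O(1)) ^ k` elements (`SN_card`), while
`piBC ≤ piUval` (`piBC_le`) and `Qc ≤ 32 * QuC` (`Qc_le`). It remains to see that a transition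
`H → H'` is used by at most `n ^ (k₁ + k₂ - 1)` tuples, up to a factor smaller than `√n`: one factor
of `n` has to be gained over the number of choices of all the parking edges.

A parking edge is determined, up to boundedly many choices, by its row, because the graphs have
bounded degree. So up to `k₁ + k₂` rows and the switching have to be found. The gain comes from two
sources. First, the auxiliary rows `P e` lie in a short window `σ, …, σ + W - 1` of `ℤ/n`, and each
transition touches one of them, or a vertex at bounded distance from one. So `σ` comes almost for
free. Secondly, `σ` encodes what is missing, namely `σ = i + i' + x e` or `σ = i' + x e`. During the
first stage, a transition reveals the parking row of the edge being moved. So only the other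
`k₁ + k₂ - 1` parking rows must be supplied, and then `σ` yields the switching: the remaining
vertices of the switching are adjacent to known ones. This is where the pair not being perfect
enters, since some vertex of the switching is incident or adjacent to a double edge (`Comp`,
`comp_link`, `beta_comp1`, `beta_comp2`). In the middle stage the switching is seen directly, and
`σ` yields the missing parking row.

The bookkeeping is uniform: `RT W K` says that, once at most `K` rows are supplied, all four graphs
agree with `H` outside the block of rows and columns obtained from the touched vertices by 14 steps
of passing to neighbours in `H`, `H'` and to sums and differences of rows, shifted by less than `W`.
Here `d` is fixed and `W` is polynomial in `m = ⌊log log n⌋`, so the size `s` of the block is too.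
There are at most `3 ^ (s ^ 2)` possibilities for each graph, hence
`n ^ K * (3 ^ (s ^ 2)) ^ 4` tuples in all (`count_RT`). As `n ≥ 2 ^ f m` eventually for every
polynomial `f` (`PB.eventually`), this factor is absorbed by `√n`.
-/

open Finset

noncomputable section

attribute [local instance] Classical.propDecidable

/-- Bipartite multigraphs on `[n] ⊔ [n]` as matrices of multiplicities. -/
abbrev MG (n : ℕ) := Fin n → Fin n → ℕ

/-- `d`-regularity for multigraphs: all row and column sums equal `d`. -/
def IsMultiReg (n d : ℕ) (G : MG n) : Prop :=
  (∀ i, ∑ j, G i j = d) ∧ (∀ j, ∑ i, G i j = d)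

/-- `Ω^{BC}_n(d)`: the set of bipartite `d`-regular multigraphs. -/
abbrev OmegaBC (n d : ℕ) := {G : MG n // IsMultiReg n d G}

theorem entry_le {n d : ℕ} (G : OmegaBC n d) (i j : Fin n) : G.1 i j ≤ d := by
  calc G.1 i j ≤ ∑ j', G.1 i j' :=
        Finset.single_le_sum (fun _ _ => Nat.zero_le _) (Finset.mem_univ j)
    _ = d := G.2.1 i

instance (n d : ℕ) : Fintype (OmegaBC n d) :=
  Fintype.ofInjective
    (fun G : OmegaBC n d =>
      (fun i j => (⟨min (G.1 i j) d, Nat.lt_succ_of_le (min_le_right _ _)⟩ : Fin (d + 1)) :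
        Fin n → Fin n → Fin (d + 1)))
    (by
      intro G H h
      apply Subtype.ext; funext i j
      have h1 := congrFun (congrFun h i) j
      have hG := entry_le G i j
      have hH := entry_le H i j
      simpa [Fin.ext_iff, Nat.min_eq_left hG, Nat.min_eq_left hH] using h1)

/-- The configuration-model measure `π_BC`. -/
def piBC (n d : ℕ) (G : OmegaBC n d) : ℝ :=
  ((d.factorial : ℝ)) ^ (2 * n) /
    (((n * d).factorial : ℝ) * ∏ i, ∏ j, ((G.1 i j).factorial : ℝ))

/-- Result of the switching `⟨i, i', j, j'⟩` on a multigraph: multiplicities of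
`(i,j)` and `(i',j')` decrease by one, those of `(i,j')` and `(i',j)` increase by one. -/
def switchResMG {n : ℕ} (G : MG n) (i i' j j' : Fin n) : MG n :=
  fun a b =>
    if (a = i ∧ b = j) ∨ (a = i' ∧ b = j') then G a b - 1
    else if (a = i ∧ b = j') ∨ (a = i' ∧ b = j) then G a b + 1
    else G a b

/-- Off-diagonal entries of the switch chain generator `Q_c` on the configuration
model: if `G₂` is obtained from `G₁` by the switching `⟨i,i',j,j'⟩`, the rate is
`2 mult(i,j) mult(i',j') / (nd(nd-1))`; the factor `1/2` accounts for the double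
counting of the switching `⟨i',i,j',j⟩`. -/
def QcOff (n d : ℕ) (G₁ G₂ : OmegaBC n d) : ℝ :=
  (1 / 2) * ∑ i : Fin n, ∑ i' : Fin n, ∑ j : Fin n, ∑ j' : Fin n,
    if i ≠ i' ∧ j ≠ j' ∧ 1 ≤ G₁.1 i j ∧ 1 ≤ G₁.1 i' j' ∧ G₂.1 = switchResMG G₁.1 i i' j j'
    then ((G₁.1 i j : ℝ) * (G₁.1 i' j' : ℝ)) * (2 / ((n * d : ℝ) * ((n * d : ℝ) - 1)))
    else 0

/-- The switch chain generator `Q_c` on the configuration model. -/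
def Qc (n d : ℕ) (G₁ G₂ : OmegaBC n d) : ℝ :=
  if G₁ = G₂ then -∑ G' ∈ Finset.univ.filter (fun G' => G' ≠ G₁), QcOff n d G₁ G'
  else QcOff n d G₁ G₂

/-- Entropy `Ent_π(f) = E_π[f (log f - log E_π f)]`. -/
def entPi {Ω : Type*} [Fintype Ω] (π f : Ω → ℝ) : ℝ :=
  ∑ ω, π ω * f ω * (Real.log (f ω) - Real.log (∑ ω', π ω' * f ω'))

/-- Dirichlet form `E_π(log f, f)`. -/
def dirForm {Ω : Type*} [Fintype Ω] (π : Ω → ℝ) (Q : Ω → Ω → ℝ) (f : Ω → ℝ) : ℝ :=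
  (1 / 2) * ∑ ω, ∑ ω', π ω * Q ω ω' * (f ω - f ω') * Real.log (f ω / f ω')

/-- `m = ⌊log log n⌋`. -/
def mfl (n : ℕ) : ℕ := ⌊Real.log (Real.log n)⌋₊

/-- A multigraph is simple if all multiplicities are at most one, i.e. it belongs
to `Ω^B_n(d)`. -/
def IsSimpleG {n d : ℕ} (G : OmegaBC n d) : Prop := ∀ i j, G.1 i j ≤ 1

/-- Adjacency in `Ω^B_n(d)`: both graphs simple, `G₂` obtained from `G₁` by a
simple switching. -/
def SimpleAdj {n d : ℕ} (G₁ G₂ : OmegaBC n d) : Prop :=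
  IsSimpleG G₁ ∧ IsSimpleG G₂ ∧
    ∃ i i' j j' : Fin n, i ≠ i' ∧ j ≠ j' ∧
      G₁.1 i j = 1 ∧ G₁.1 i' j' = 1 ∧ G₁.1 i j' = 0 ∧ G₁.1 i' j = 0 ∧
      G₂.1 = switchResMG G₁.1 i i' j j'

/-- Adjacency in `Ω^{BC}_n(d)`: `G₂` is obtained from `G₁` by a valid switching. -/
def MultiAdj {n d : ℕ} (G₁ G₂ : OmegaBC n d) : Prop :=
  ∃ i i' j j' : Fin n, i ≠ i' ∧ j ≠ j' ∧ 1 ≤ G₁.1 i j ∧ 1 ≤ G₁.1 i' j' ∧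
    G₂.1 = switchResMG G₁.1 i i' j j'

/-- `G ∈ Cat_{n,d}(k)`: exactly `k` edges of multiplicity `2`, no two of them
incident, and no edges of multiplicity three or greater. -/
def InCat {n d : ℕ} (k : ℕ) (G : OmegaBC n d) : Prop :=
  ((Finset.univ ×ˢ Finset.univ).filter fun p : Fin n × Fin n => G.1 p.1 p.2 = 2).card = k ∧
    (∀ p q : Fin n × Fin n, G.1 p.1 p.2 = 2 → G.1 q.1 q.2 = 2 → p ≠ q →
      p.1 ≠ q.1 ∧ p.2 ≠ q.2) ∧
    ∀ i j, G.1 i j ≤ 2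

/-- `G ∈ Cat_{n,d}([a,b])`. -/
def InCatRange {n d : ℕ} (a b : ℕ) (G : OmegaBC n d) : Prop :=
  ∃ k, a ≤ k ∧ k ≤ b ∧ InCat k G

/-- `P` is a simple path of length `k` starting at `G'`: it destroys the `k`
double edges `e 0, …, e (k-1)` of `G'` (ordered by increasing left vertex) one at
a time via switchings `⟨(e t).1, i' t, (e t).2, j' t⟩` with the auxiliary vertices
fresh, pairwise distinct, and not creating nor destroying other multiedges. -/
def IsSimplePath {n d : ℕ} (G' : OmegaBC n d) (k : ℕ)
    (P : Fin (k + 1) → OmegaBC n d) : Prop :=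
  ∃ (e : Fin k → Fin n × Fin n) (i' j' : Fin k → Fin n),
    StrictMono (fun s => (e s).1) ∧
    (∀ p : Fin n × Fin n, G'.1 p.1 p.2 = 2 ↔ ∃ s, e s = p) ∧
    P 0 = G' ∧
    Function.Injective i' ∧ Function.Injective j' ∧
    (∀ s t, i' s ≠ (e t).1) ∧ (∀ s t, j' s ≠ (e t).2) ∧
    (∀ t : Fin k, G'.1 (i' t) ((e t).2) = 0 ∧ G'.1 ((e t).1) (j' t) = 0) ∧
    ∀ t : Fin k,
      1 ≤ (P t.castSucc).1 (i' t) (j' t) ∧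
      (P t.succ).1 = switchResMG (P t.castSucc).1 (e t).1 (i' t) (e t).2 (j' t)

/-- The `s`-neighborhood `SN(G')`: the set of endpoints of simple paths starting
at `G'` (equal to `{G'}` when `G'` is simple). -/
def SN {n d : ℕ} (G' : OmegaBC n d) : Set (OmegaBC n d) :=
  {H | ∃ (k : ℕ) (P : Fin (k + 1) → OmegaBC n d),
    IsSimplePath G' k P ∧ P (Fin.last k) = H}

/-- A left vertex `i` is neither incident to a multiedge nor adjacent to a (right)
vertex incident to a multiedge. -/
def GoodLeft {n d : ℕ} (G : OmegaBC n d) (i : Fin n) : Prop :=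
  (∀ j, G.1 i j ≤ 1) ∧ ∀ j, 1 ≤ G.1 i j → ∀ i₀, G.1 i₀ j ≤ 1

/-- A right vertex `j` is neither incident to a multiedge nor adjacent to a (left)
vertex incident to a multiedge. -/
def GoodRight {n d : ℕ} (G : OmegaBC n d) (j : Fin n) : Prop :=
  (∀ i, G.1 i j ≤ 1) ∧ ∀ i, 1 ≤ G.1 i j → ∀ j₀, G.1 i j₀ ≤ 1

/-- `(G₁', G₂')` is a perfect pair: both in `Cat_{n,d}(k)` for some `1 ≤ k ≤ m`,
adjacent via a switching `⟨i,i',j,j'⟩` whose vertices are neither incident to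
multiedges nor adjacent to vertices incident to multiedges. -/
def PerfectPair {n d : ℕ} (m : ℕ) (G₁' G₂' : OmegaBC n d) : Prop :=
  ∃ k, 1 ≤ k ∧ k ≤ m ∧ InCat k G₁' ∧ InCat k G₂' ∧
    ∃ i i' j j' : Fin n, i ≠ i' ∧ j ≠ j' ∧ 1 ≤ G₁'.1 i j ∧ 1 ≤ G₁'.1 i' j' ∧
      G₂'.1 = switchResMG G₁'.1 i i' j j' ∧
      GoodLeft G₁' i ∧ GoodLeft G₁' i' ∧ GoodRight G₁' j ∧ GoodRight G₁' j'

/-- Number of simple graphs, i.e. `|Ω^B_n(d)|`. -/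
def cardSimple (n d : ℕ) : ℕ :=
  (Finset.univ.filter fun G : OmegaBC n d => IsSimpleG G).card

/-- The uniform measure `π_u` on `Ω^B_n(d)` (the value at each simple graph). -/
def piUval (n d : ℕ) : ℝ := ((cardSimple n d : ℝ))⁻¹

/-- The (off-diagonal) switch chain rate `Q_u(H,H')` for distinct `H, H'`. -/
def QuC (n d : ℕ) (H H' : OmegaBC n d) : ℝ :=
  if SimpleAdj H H' then 2 / ((n * d : ℝ) * ((n * d : ℝ) - 1)) else 0

/-- The set `I_{n,d}(m)` of adjacent pairs in `Cat_{n,d}([0,m])`, not both simple,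
which do not form a perfect pair. -/
def IndSet (n d m : ℕ) : Set (OmegaBC n d × OmegaBC n d) :=
  {p | MultiAdj p.1 p.2 ∧ InCatRange 0 m p.1 ∧ InCatRange 0 m p.2 ∧
    ¬(IsSimpleG p.1 ∧ IsSimpleG p.2) ∧ ¬PerfectPair m p.1 p.2}

/-- The index set `ℋ` of 4-tuples `(G₁, G₁', G₂, G₂')`. -/
def TupleSet (n d m : ℕ) :
    Set (OmegaBC n d × OmegaBC n d × OmegaBC n d × OmegaBC n d) :=
  {T | (T.2.1, T.2.2.2) ∈ IndSet n d m ∧ T.1 ∈ SN T.2.1 ∧ T.2.2.1 ∈ SN T.2.2.2}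

/-! ### Switchings and parked states as integer matrices -/

/-- The multiplicity matrix of a multigraph, with integer entries. -/
def cz {n d : ℕ} (G : OmegaBC n d) : Fin n → Fin n → ℤ := fun u v => (G.1 u v : ℤ)

theorem cz_inj {n d : ℕ} {G H : OmegaBC n d} (h : cz G = cz H) : G = H := by
  apply Subtype.ext
  funext u v
  have := congrFun (congrFun h u) v
  simpa [cz] using this

/-- Kronecker delta with integer values. -/
def dl {n : ℕ} (u i : Fin n) : ℤ := if u = i then 1 else 0

@[simp] theorem dl_self {n : ℕ} (u : Fin n) : dl u u = 1 := by simp [dl]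
theorem dl_ne {n : ℕ} {u i : Fin n} (h : u ≠ i) : dl u i = 0 := by simp [dl, h]

/-- The rank-one matrix subtracted by the switching `⟨i, i', j, j'⟩`. -/
def rk {n : ℕ} (i i' j j' u v : Fin n) : ℤ := (dl u i - dl u i') * (dl v j - dl v j')

theorem switch_iff {n d : ℕ} {G G' : OmegaBC n d} {i i' j j' : Fin n} (hi : i ≠ i') (hj : j ≠ j')
    (h1 : 1 ≤ G.1 i j) (h2 : 1 ≤ G.1 i' j') :
    G'.1 = switchResMG G.1 i i' j j' ↔ ∀ u v, cz G' u v = cz G u v - rk i i' j j' u v := by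
  have key : ∀ u v, ((switchResMG G.1 i i' j j' u v : ℕ) : ℤ) = cz G u v - rk i i' j j' u v := by
    intro u v
    unfold switchResMG cz rk dl
    by_cases a1 : u = i
    · subst a1
      by_cases b1 : v = j
      · subst b1
        simp [hi, hj]
        omega
      · by_cases b2 : v = j'
        · subst b2
          simp [hi, b1]
        · simp [hi, b1, b2]
    · by_cases a2 : u = i'
      · subst a2
        by_cases b1 : v = j
        · subst b1
          simp [hj, a1]
        · by_cases b2 : v = j'
          · subst b2
            simp [a1, b1]
            omega
          · simp [a1, b1, b2]
      · simp [a1, a2]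
  constructor
  · intro h u v
    rw [← key, ← h, cz]
  · intro h
    funext u v
    have := h u v
    rw [← key, cz] at this
    exact_mod_cast this

theorem sum_dl_sub {n : ℕ} (j j' : Fin n) : ∑ v, (dl v j - dl v j') = 0 := by
  simp [dl, Finset.sum_sub_distrib]

theorem rk_row {n : ℕ} (i i' j j' u : Fin n) : ∑ v, rk i i' j j' u v = 0 := by
  unfold rk
  rw [← Finset.mul_sum, sum_dl_sub, mul_zero]

theorem rk_col {n : ℕ} (i i' j j' v : Fin n) : ∑ u, rk i i' j j' u v = 0 := by
  unfold rk
  rw [← Finset.sum_mul, sum_dl_sub, zero_mul]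

/-- All row and column sums of an integer matrix equal `d`. -/
def RegZ {n : ℕ} (d : ℕ) (f : Fin n → Fin n → ℤ) : Prop :=
  (∀ u, ∑ v, f u v = d) ∧ ∀ v, ∑ u, f u v = d

theorem cz_reg {n d : ℕ} (G : OmegaBC n d) : RegZ d (cz G) := by
  refine ⟨fun u => ?_, fun v => ?_⟩
  · have := G.2.1 u
    unfold cz
    exact_mod_cast this
  · have := G.2.2 v
    unfold cz
    exact_mod_cast this

theorem RegZ.sub_rk {n d : ℕ} {f : Fin n → Fin n → ℤ} (h : RegZ d f) (i i' j j' : Fin n) :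
    RegZ d (fun u v => f u v - rk i i' j j' u v) := by
  refine ⟨fun u => ?_, fun v => ?_⟩
  · rw [Finset.sum_sub_distrib, rk_row, h.1, sub_zero]
  · rw [Finset.sum_sub_distrib, rk_col, h.2, sub_zero]

theorem of_int {n d : ℕ} {f : Fin n → Fin n → ℤ} (h : RegZ d f) (h0 : ∀ u v, 0 ≤ f u v) :
    ∃ G : OmegaBC n d, cz G = f := by
  refine ⟨⟨fun u v => (f u v).toNat, ?_, ?_⟩, ?_⟩
  · intro u
    have := h.1 u
    zify
    rw [← this]
    exact Finset.sum_congr rfl fun v _ => Int.toNat_of_nonneg (h0 u v)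
  · intro v
    have := h.2 v
    zify
    rw [← this]
    exact Finset.sum_congr rfl fun u _ => Int.toNat_of_nonneg (h0 u v)
  · funext u v
    exact Int.toNat_of_nonneg (h0 u v)

theorem cz_nonneg {n d : ℕ} (G : OmegaBC n d) (u v : Fin n) : 0 ≤ cz G u v := Int.natCast_nonneg _

theorem simple_of {n d : ℕ} {G : OmegaBC n d} (h : ∀ u v, cz G u v ≤ 1) : IsSimpleG G := by
  intro u v
  have := h u v
  unfold cz at this
  exact_mod_cast this

theorem simple_cz {n d : ℕ} {G : OmegaBC n d} (h : IsSimpleG G) (u v) : cz G u v ≤ 1 := by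
  have := h u v
  unfold cz
  exact_mod_cast this

/-- Two simple graphs whose matrices differ by the rank-one matrix of a switching are adjacent:
the multiplicities at the four corners are forced. -/
theorem simpleAdj_of {n d : ℕ} {H H' : OmegaBC n d} (h : IsSimpleG H) (h' : IsSimpleG H')
    {i i' j j' : Fin n} (hi : i ≠ i') (hj : j ≠ j')
    (e : ∀ u v, cz H' u v = cz H u v - rk i i' j j' u v) : SimpleAdj H H' := by
  have a := e i j
  have b := e i' j'
  have c := e i j'
  have f := e i' j
  simp only [rk, dl_self, dl_ne hi, dl_ne hi.symm, dl_ne hj, dl_ne hj.symm] at a b c f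
  have A := simple_cz h i j
  have B := simple_cz h i' j'
  have C := cz_nonneg H' i j
  have D := cz_nonneg H' i' j'
  have E := simple_cz h' i j'
  have F := simple_cz h' i' j
  have I := cz_nonneg H i j'
  have J := cz_nonneg H i' j
  have x1 : cz H i j = 1 := by linarith
  have x2 : cz H i' j' = 1 := by linarith
  have x3 : cz H i j' = 0 := by linarith
  have x4 : cz H i' j = 0 := by linarith
  have y1 : H.1 i j = 1 := by unfold cz at x1; exact_mod_cast x1
  have y2 : H.1 i' j' = 1 := by unfold cz at x2; exact_mod_cast x2
  have y3 : H.1 i j' = 0 := by unfold cz at x3; exact_mod_cast x3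
  have y4 : H.1 i' j = 0 := by unfold cz at x4; exact_mod_cast x4
  exact ⟨h, h', i, i', j, j', hi, hj, y1, y2, y3, y4,
    (switch_iff hi hj y1.ge y2.ge).2 e⟩

theorem SimpleAdj.symm {n d : ℕ} {H H' : OmegaBC n d} (h : SimpleAdj H H') : SimpleAdj H' H := by
  obtain ⟨a, b, i, i', j, j', hi, hj, h1, h2, h3, h4, e⟩ := h
  have e' := (switch_iff hi hj h1.ge h2.ge).1 e
  refine simpleAdj_of b a hi hj.symm fun u v => ?_
  rw [e' u v]
  unfold rk
  ring

/-- The matrix `M` after the switchings `⟨e.1, x e, e.2, y e⟩` for all `e ∈ D`: the pair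
`(x e, y e)` stores (parks) one copy of the edge `e`. -/
def park {n : ℕ} (M : Fin n → Fin n → ℤ) (D : Finset (Fin n × Fin n))
    (x y : Fin n × Fin n → Fin n) (u v : Fin n) : ℤ :=
  M u v - ∑ e ∈ D, rk e.1 (x e) e.2 (y e) u v

/-- The parking positions `(x e, y e)` are pairwise disjoint edges of `M` of multiplicity one. They
have no endpoint in common with an edge of `D`, and `e` is not joined to `(x e, y e)`. -/
structure PV {n : ℕ} (M : Fin n → Fin n → ℤ) (D : Finset (Fin n × Fin n))
    (x y : Fin n × Fin n → Fin n) : Prop where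
  xi : ∀ e ∈ D, ∀ f ∈ D, x e = x f → e = f
  yi : ∀ e ∈ D, ∀ f ∈ D, y e = y f → e = f
  xn : ∀ e ∈ D, ∀ f ∈ D, x e ≠ f.1
  yn : ∀ e ∈ D, ∀ f ∈ D, y e ≠ f.2
  x0 : ∀ e ∈ D, M (x e) e.2 = 0
  y0 : ∀ e ∈ D, M e.1 (y e) = 0
  xy : ∀ e ∈ D, M (x e) (y e) = 1
  pos : ∀ e ∈ D, 1 ≤ M e.1 e.2

section park
variable {n : ℕ} {M : Fin n → Fin n → ℤ} {D : Finset (Fin n × Fin n)}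
  {x y : Fin n × Fin n → Fin n}

theorem park_reg {d : ℕ} (h : RegZ d M) : RegZ d (park M D x y) := by
  refine ⟨fun u => ?_, fun v => ?_⟩
  · unfold park
    rw [Finset.sum_sub_distrib, Finset.sum_comm, h.1]
    simp [rk_row]
  · unfold park
    rw [Finset.sum_sub_distrib, Finset.sum_comm, h.2]
    simp [rk_col]

theorem park_x (p : PV M D x y) {f} (hf : f ∈ D) (v : Fin n) :
    park M D x y (x f) v = M (x f) v + dl v f.2 - dl v (y f) := by
  unfold park
  rw [Finset.sum_eq_single f]
  · unfold rk
    rw [dl_ne (p.xn f hf f hf), dl_self]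
    ring
  · intro e he hne
    unfold rk
    rw [dl_ne (p.xn f hf e he), dl_ne (fun h => hne (p.xi f hf e he h).symm)]
    ring
  · exact fun h => absurd hf h

theorem park_y (p : PV M D x y) {f} (hf : f ∈ D) (u : Fin n) :
    park M D x y u (y f) = M u (y f) + dl u f.1 - dl u (x f) := by
  unfold park
  rw [Finset.sum_eq_single f]
  · unfold rk
    rw [dl_ne (p.yn f hf f hf), dl_self]
    ring
  · intro e he hne
    unfold rk
    rw [dl_ne (p.yn f hf e he), dl_ne (fun h => hne (p.yi f hf e he h).symm)]
    ring
  · exact fun h => absurd hf h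

theorem park_off {u v : Fin n} (hu : ∀ e ∈ D, u ≠ x e) (hv : ∀ e ∈ D, v ≠ y e) :
    park M D x y u v = M u v - if (u, v) ∈ D then 1 else 0 := by
  unfold park
  congr 1
  rw [Finset.sum_congr rfl (g := fun e => if (u, v) = e then 1 else 0)]
  · simp
  · intro e he
    unfold rk
    rw [dl_ne (hu e he), dl_ne (hv e he)]
    unfold dl
    rcases e with ⟨a, b⟩
    by_cases h1 : u = a <;> by_cases h2 : v = b <;> simp [h1, h2]

theorem park_loc {u v : Fin n} (h : (∀ e ∈ D, u ≠ e.1 ∧ u ≠ x e) ∨ ∀ e ∈ D, v ≠ e.2 ∧ v ≠ y e) :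
    park M D x y u v = M u v := by
  unfold park
  rw [Finset.sum_eq_zero, sub_zero]
  intro e he
  unfold rk
  rcases h with h | h
  · rw [dl_ne (h e he).1, dl_ne (h e he).2]; ring
  · rw [dl_ne (h e he).1, dl_ne (h e he).2]; ring

theorem park_nonneg (p : PV M D x y) (h0 : ∀ u v, 0 ≤ M u v) (u v : Fin n) :
    0 ≤ park M D x y u v := by
  by_cases hu : ∀ e ∈ D, u ≠ x e
  · by_cases hv : ∀ e ∈ D, v ≠ y e
    · rw [park_off hu hv]
      split_ifs with h
      · have := p.pos _ h
        simp at this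
        omega
      · simpa using h0 u v
    · push Not at hv
      obtain ⟨f, hf, rfl⟩ := hv
      rw [park_y p hf, dl_ne (hu f hf)]
      have := h0 u (y f)
      unfold dl
      split_ifs <;> omega
  · push Not at hu
    obtain ⟨f, hf, rfl⟩ := hu
    rw [park_x p hf]
    have := h0 (x f) v
    by_cases h : v = y f
    · subst h
      rw [p.xy f hf, dl_self]
      unfold dl
      split_ifs <;> omega
    · rw [dl_ne h]
      unfold dl
      split_ifs <;> omega

theorem park_le_one (p : PV M D x y) (h2 : ∀ u v, M u v ≤ 2)
    (cov : ∀ u v, M u v = 2 → (u, v) ∈ D) (u v : Fin n) :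
    park M D x y u v ≤ 1 := by
  by_cases hu : ∀ e ∈ D, u ≠ x e
  · by_cases hv : ∀ e ∈ D, v ≠ y e
    · rw [park_off hu hv]
      have := h2 u v
      have := cov u v
      split_ifs with h
      · omega
      · have : M u v ≠ 2 := fun h' => h (this h')
        omega
    · push Not at hv
      obtain ⟨f, hf, rfl⟩ := hv
      rw [park_y p hf, dl_ne (hu f hf)]
      by_cases h : u = f.1
      · subst h
        rw [p.y0 f hf, dl_self]
        norm_num
      · rw [dl_ne h]
        have := h2 u (y f)
        have : M u (y f) ≠ 2 := fun h' => p.yn f hf _ (cov _ _ h') rfl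
        omega
  · push Not at hu
    obtain ⟨f, hf, rfl⟩ := hu
    rw [park_x p hf]
    have : 0 ≤ dl v (y f) := by unfold dl; split_ifs <;> norm_num
    by_cases h : v = f.2
    · subst h
      rw [p.x0 f hf, dl_self]
      linarith
    · rw [dl_ne h]
      have := h2 (x f) v
      have : M (x f) v ≠ 2 := fun h' => p.xn f hf _ (cov _ _ h') rfl
      omega

/-- Parking all double edges (and possibly some simple ones) yields a simple graph. -/
theorem park_graph {d : ℕ} {G : OmegaBC n d} (p : PV (cz G) D x y) (h2 : ∀ u v, cz G u v ≤ 2)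
    (cov : ∀ u v, cz G u v = 2 → (u, v) ∈ D) :
    ∃ H : OmegaBC n d, cz H = park (cz G) D x y ∧ IsSimpleG H := by
  obtain ⟨H, hH⟩ := of_int (park_reg (D := D) (x := x) (y := y) (cz_reg G))
    (park_nonneg p (cz_nonneg G))
  refine ⟨H, hH, simple_of fun u v => ?_⟩
  rw [hH]
  exact park_le_one p h2 cov u v

/-- Parking the edges of `D` uses up exactly one copy of each of them. -/
theorem park_edge (p : PV M D x y) {e} (he : e ∈ D) :
    park M D x y e.1 e.2 = M e.1 e.2 - 1 := by
  rw [park_off (fun f hf => (p.xn f hf e he).symm) (fun f hf => (p.yn f hf e he).symm)]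
  simp [he]

theorem park_x_snd (p : PV M D x y) {e} (he : e ∈ D) : park M D x y (x e) e.2 = 1 := by
  rw [park_x p he, p.x0 e he, dl_self, dl_ne (p.yn e he e he).symm]; norm_num

theorem park_fst_y (p : PV M D x y) {e} (he : e ∈ D) : park M D x y e.1 (y e) = 1 := by
  rw [park_y p he, p.y0 e he, dl_self, dl_ne (p.xn e he e he).symm]; norm_num

end park

/-! ### Endpoints of simple paths are parked states -/

/-- The set of double edges. -/
def dbl {n d : ℕ} (G : OmegaBC n d) : Finset (Fin n × Fin n) :=
  univ.filter fun p => G.1 p.1 p.2 = 2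

theorem mem_dbl {n d : ℕ} {G : OmegaBC n d} {p : Fin n × Fin n} :
    p ∈ dbl G ↔ G.1 p.1 p.2 = 2 := by simp [dbl]

theorem mem_dbl_cz {n d : ℕ} {G : OmegaBC n d} {p : Fin n × Fin n} :
    p ∈ dbl G ↔ cz G p.1 p.2 = 2 := by
  rw [mem_dbl, cz]; norm_cast

theorem InCat.card {n d k : ℕ} {G : OmegaBC n d} (h : InCat k G) : (dbl G).card = k := by
  rw [← h.1, dbl, univ_product_univ]

theorem InCat.inj1 {n d k : ℕ} {G : OmegaBC n d} (h : InCat k G) :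
    ∀ p ∈ dbl G, ∀ q ∈ dbl G, p.1 = q.1 → p = q := by
  intro p hp q hq e
  by_contra hne
  exact (h.2.1 p q (mem_dbl.1 hp) (mem_dbl.1 hq) hne).1 e

theorem InCat.inj2 {n d k : ℕ} {G : OmegaBC n d} (h : InCat k G) :
    ∀ p ∈ dbl G, ∀ q ∈ dbl G, p.2 = q.2 → p = q := by
  intro p hp q hq e
  by_contra hne
  exact (h.2.1 p q (mem_dbl.1 hp) (mem_dbl.1 hq) hne).2 e

theorem InCat.le_two {n d k : ℕ} {G : OmegaBC n d} (h : InCat k G) (u v) : cz G u v ≤ 2 := by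
  have := h.2.2 u v
  unfold cz
  exact_mod_cast this

theorem PV.mono {n : ℕ} {M : Fin n → Fin n → ℤ} {D D' : Finset (Fin n × Fin n)}
    {x y : Fin n × Fin n → Fin n} (p : PV M D x y) (h : D' ⊆ D) : PV M D' x y where
  xi e he f hf := p.xi e (h he) f (h hf)
  yi e he f hf := p.yi e (h he) f (h hf)
  xn e he f hf := p.xn e (h he) f (h hf)
  yn e he f hf := p.yn e (h he) f (h hf)
  x0 e he := p.x0 e (h he)
  y0 e he := p.y0 e (h he)
  xy e he := p.xy e (h he)
  pos e he := p.pos e (h he)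

theorem filter_succ {k : ℕ} (t : Fin k) :
    (univ.filter fun s : Fin k => s.castSucc < t.succ) =
      insert t (univ.filter fun s : Fin k => s.castSucc < t.castSucc) := by
  ext s
  simp only [mem_filter, mem_univ, true_and, mem_insert, Fin.lt_def, Fin.ext_iff,
    Fin.val_castSucc, Fin.val_succ]
  omega

theorem SN_park {n d k : ℕ} {G H : OmegaBC n d} (hc : InCat k G) (h : H ∈ SN G) :
    ∃ x y, PV (cz G) (dbl G) x y ∧ cz H = park (cz G) (dbl G) x y := by
  obtain ⟨l, P, ⟨e, i', j', hmono, hD, hP0, hi, hj, hie, hje, hz, hst⟩, rfl⟩ := h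
  have einj : Function.Injective e := fun s t hst' => hmono.injective (by simp [hst'])
  have hDe : dbl G = univ.image e := by
    ext p; rw [mem_dbl, hD]; simp
  have hrow : ∀ s t, s ≠ t → (e t).1 ≠ (e s).1 := fun s t h h' => h (hmono.injective h'.symm)
  have stepv : ∀ t : Fin (l + 1), ∀ u v, cz (P t) u v = cz G u v -
      ∑ s ∈ univ.filter (fun s : Fin l => s.castSucc < t),
        rk (e s).1 (i' s) (e s).2 (j' s) u v := by
    intro t
    induction t using Fin.induction with
    | zero => intro u v; simp [hP0]
    | succ t ih =>
      have h2 : 1 ≤ (P t.castSucc).1 (e t).1 (e t).2 := by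
        have := ih (e t).1 (e t).2
        rw [Finset.sum_eq_zero] at this
        · have h2 : G.1 (e t).1 (e t).2 = 2 := (hD _).2 ⟨t, rfl⟩
          unfold cz at this
          omega
        · intro s hs
          have hne : s ≠ t := by
            rintro rfl
            simp at hs
          unfold rk
          rw [dl_ne (hrow s t hne), dl_ne (hie s t).symm]; ring
      intro u v
      rw [(switch_iff (hie t t).symm (hje t t).symm h2 (hst t).1).1 (hst t).2 u v, ih u v,
        filter_succ, sum_insert (by simp)]
      ring
  refine ⟨Function.extend e i' Prod.fst, Function.extend e j' Prod.snd, ?_, ?_⟩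
  · rw [hDe]
    refine ⟨?_, ?_, ?_, ?_, ?_, ?_, ?_, ?_⟩
    all_goals simp only [mem_image, mem_univ, true_and, forall_exists_index,
        forall_apply_eq_imp_iff, einj.extend_apply]
    · intro s t h; rw [hi h]
    · intro s t h; rw [hj h]
    · exact hie
    · exact hje
    · intro s; simp [cz, (hz s).1]
    · intro s; simp [cz, (hz s).2]
    · intro t
      have h1 := stepv t.castSucc (i' t) (j' t)
      rw [Finset.sum_eq_zero] at h1
      · have h2 := (hst t).1
        have h3 := hc.2.2 (i' t) (j' t)
        have h4 : G.1 (i' t) (j' t) ≠ 2 := by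
          intro h
          obtain ⟨s, hs⟩ := (hD (i' t, j' t)).1 h
          exact hie t s (by rw [hs])
        unfold cz at h1 ⊢
        omega
      · intro s hs
        have hne : t ≠ s := by
          rintro rfl
          simp at hs
        unfold rk
        rw [dl_ne (hie t s), dl_ne (fun h => hne (hi h))]; ring
    · intro s
      have := (hD _).2 ⟨s, rfl⟩
      simp [cz, this]
  · funext u v
    rw [stepv, park, hDe, sum_image (fun a _ b _ h => einj h)]
    congr 1
    refine Finset.sum_congr ?_ fun s _ => by rw [einj.extend_apply, einj.extend_apply]
    ext s
    simp [Fin.lt_def]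

theorem park_SN {n d k : ℕ} {G : OmegaBC n d} (hc : InCat k G) {x y : Fin n × Fin n → Fin n}
    (p : PV (cz G) (dbl G) x y) : ∃ H ∈ SN G, cz H = park (cz G) (dbl G) x y := by
  have hcard : ((dbl G).image Prod.fst).card = k := by
    rw [card_image_of_injOn, hc.card]
    intro a ha b hb h
    exact hc.inj1 a ha b hb h
  set o := ((dbl G).image Prod.fst).orderEmbOfFin hcard with ho
  have hex : ∀ s, ∃ q ∈ dbl G, q.1 = o s := fun s => by
    have := ((dbl G).image Prod.fst).orderEmbOfFin_mem hcard s
    simpa only [mem_image] using this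
  choose e he1 he2 using hex
  have hmono : StrictMono (fun s => (e s).1) := by
    intro s t h
    simp only [he2]
    exact o.strictMono h
  have einj : Function.Injective e := fun s t hst' => hmono.injective (by simp [hst'])
  have hDe : dbl G = univ.image e := by
    refine (eq_of_subset_of_card_le ?_ ?_).symm
    · intro q hq
      simp only [mem_image, mem_univ, true_and] at hq
      obtain ⟨s, rfl⟩ := hq
      exact he1 s
    · rw [card_image_of_injective _ einj, hc.card]; simp
  have hex2 : ∀ t : Fin (k + 1), ∃ Pt : OmegaBC n d, cz Pt = park (cz G)
      ((univ.filter (fun s : Fin k => s.castSucc < t)).image e) x y := by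
    intro t
    refine of_int (park_reg (cz_reg G)) (park_nonneg (p.mono ?_) (cz_nonneg G))
    rw [hDe]
    exact image_subset_image (subset_univ _)
  choose P hP using hex2
  have hPs : ∀ t u v, cz (P t) u v = cz G u v -
      ∑ s ∈ univ.filter (fun s : Fin k => s.castSucc < t),
        rk (e s).1 (x (e s)) (e s).2 (y (e s)) u v := by
    intro t u v
    rw [hP, park, sum_image (fun a _ b _ h => einj h)]
  refine ⟨P (Fin.last k), ⟨k, P, ⟨e, fun s => x (e s), fun s => y (e s), hmono, ?_, ?_, ?_, ?_,
    ?_, ?_, ?_, ?_⟩, rfl⟩, ?_⟩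
  · intro q
    rw [← mem_dbl, hDe]; simp
  · apply cz_inj
    funext u v
    simp [hPs]
  · intro s t h
    exact einj (p.xi _ (he1 s) _ (he1 t) h)
  · intro s t h
    exact einj (p.yi _ (he1 s) _ (he1 t) h)
  · exact fun s t => p.xn _ (he1 s) _ (he1 t)
  · exact fun s t => p.yn _ (he1 s) _ (he1 t)
  · intro t
    have a := p.x0 _ (he1 t)
    have b := p.y0 _ (he1 t)
    unfold cz at a b
    exact ⟨by exact_mod_cast a, by exact_mod_cast b⟩
  · intro t
    have h1 : 1 ≤ (P t.castSucc).1 (x (e t)) (y (e t)) := by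
      have h1 := hPs t.castSucc (x (e t)) (y (e t))
      rw [Finset.sum_eq_zero, p.xy _ (he1 t)] at h1
      · unfold cz at h1; omega
      · intro s hs
        have hne : t ≠ s := by
          rintro rfl
          simp at hs
        unfold rk
        rw [dl_ne (p.xn _ (he1 t) _ (he1 s)),
          dl_ne (fun h => hne (einj (p.xi _ (he1 t) _ (he1 s) h)))]; ring
    have h2 : 1 ≤ (P t.castSucc).1 (e t).1 (e t).2 := by
      have h1 := hPs t.castSucc (e t).1 (e t).2
      rw [Finset.sum_eq_zero, mem_dbl_cz.1 (he1 t)] at h1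
      · unfold cz at h1; omega
      · intro s hs
        have hne : t ≠ s := by
          rintro rfl
          simp at hs
        unfold rk
        rw [dl_ne (fun h => hne (hmono.injective h)), dl_ne (p.xn _ (he1 s) _ (he1 t)).symm]; ring
    refine ⟨h1, (switch_iff (p.xn _ (he1 t) _ (he1 t)).symm (p.yn _ (he1 t) _ (he1 t)).symm
      h2 h1).2 fun u v => ?_⟩
    rw [hPs, hPs, filter_succ, sum_insert (by simp)]
    ring
  · rw [hP, hDe]
    congr 2
    ext s
    simp [Fin.lt_def]

/-! ### Parking positions far away from a given set -/

theorem card_nbL {n d : ℕ} (G : OmegaBC n d) (v : Fin n) :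
    (univ.filter fun u => G.1 u v ≠ 0).card ≤ d := by
  refine le_trans ?_ (G.2.2 v).le
  rw [card_eq_sum_ones, sum_filter]
  refine sum_le_sum fun u _ => ?_
  split_ifs <;> omega

theorem card_nbR {n d : ℕ} (G : OmegaBC n d) (u : Fin n) :
    (univ.filter fun v => G.1 u v ≠ 0).card ≤ d := by
  refine le_trans ?_ (G.2.1 u).le
  rw [card_eq_sum_ones, sum_filter]
  refine sum_le_sum fun u _ => ?_
  split_ifs <;> omega

/-- Rows too close to the given sets of rows and columns. -/
def closeRows {n d : ℕ} (G : OmegaBC n d) (BL BR : Finset (Fin n)) : Finset (Fin n) :=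
  BL ∪ (BR.biUnion fun v => univ.filter fun u => G.1 u v ≠ 0) ∪
    BL.biUnion fun w => (univ.filter fun v => G.1 w v ≠ 0).biUnion
      fun v => univ.filter fun u => G.1 u v ≠ 0

theorem card_closeRows {n d b : ℕ} (G : OmegaBC n d) {BL BR : Finset (Fin n)}
    (h1 : BL.card ≤ b) (h2 : BR.card ≤ b) :
    (closeRows G BL BR).card ≤ b * (1 + d + d ^ 2) := by
  have e1 : (BR.biUnion fun v => univ.filter fun u => G.1 u v ≠ 0).card ≤ b * d :=
    (card_biUnion_le_card_mul _ _ d fun v _ => card_nbL G v).trans (Nat.mul_le_mul_right _ h2)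
  have e2 : (BL.biUnion fun w => (univ.filter fun v => G.1 w v ≠ 0).biUnion
      fun v => univ.filter fun u => G.1 u v ≠ 0).card ≤ b * d ^ 2 := by
    refine (card_biUnion_le_card_mul _ _ (d ^ 2) fun w _ => ?_).trans
      (Nat.mul_le_mul_right _ h1)
    rw [pow_two]
    exact (card_biUnion_le_card_mul _ _ d fun v _ => card_nbL G v).trans
      (Nat.mul_le_mul_right _ (card_nbR G w))
  unfold closeRows
  have := card_union_le (BL ∪ (BR.biUnion fun v => univ.filter fun u => G.1 u v ≠ 0))
    (BL.biUnion fun w => (univ.filter fun v => G.1 w v ≠ 0).biUnion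
      fun v => univ.filter fun u => G.1 u v ≠ 0)
  have := card_union_le BL (BR.biUnion fun v => univ.filter fun u => G.1 u v ≠ 0)
  have : b * (1 + d + d ^ 2) = b + b * d + b * d ^ 2 := by ring
  omega

theorem exists_far {n d b W : ℕ} (hd : 1 ≤ d) (G : OmegaBC n d) {c : ℕ → Fin n}
    (hc : ∀ s < W, ∀ t < W, c s = c t → s = t) {BL BR : Finset (Fin n)}
    (h1 : BL.card ≤ b) (h2 : BR.card ≤ b) (hb : b * (1 + d + d ^ 2) < W) :
    ∃ s < W, ∃ q, c s ∉ BL ∧ q ∉ BR ∧ (∀ v ∈ BR, G.1 (c s) v = 0) ∧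
      (∀ u ∈ BL, G.1 u q = 0) ∧ 1 ≤ G.1 (c s) q := by
  have hlt : (closeRows G BL BR).card < ((range W).image c).card := by
    rw [card_image_of_injOn, card_range]
    · exact (card_closeRows G h1 h2).trans_lt hb
    · intro s hs t ht
      exact hc s (by simpa using hs) t (by simpa using ht)
  obtain ⟨p, hp, hp'⟩ := exists_mem_notMem_of_card_lt_card hlt
  simp only [mem_image, mem_range] at hp
  obtain ⟨s, hs, rfl⟩ := hp
  have hq : ∃ q, 1 ≤ G.1 (c s) q := by
    by_contra! h
    have := G.2.1 (c s)
    rw [sum_eq_zero fun q _ => by have := h q; omega] at this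
    omega
  obtain ⟨q, hq⟩ := hq
  simp only [closeRows, mem_union, mem_biUnion, mem_filter, mem_univ, true_and, not_or,
    not_exists, not_and, not_not] at hp'
  obtain ⟨⟨p1, p2⟩, p3⟩ := hp'
  refine ⟨s, hs, q, p1, fun h => ?_, p2, fun u hu => ?_, hq⟩
  · have := p2 q h; omega
  · by_contra hne
    have := p3 u hu q hne
    omega

/-- Greedy choice of edges `(P e, Q e)` of `G` indexed by `D`, all far from the rows `BL` and
the columns `BR`, with the rows `P e` taken among the candidates `c 0, …, c (W - 1)`. -/
theorem exists_aux {α : Type*} {n d W : ℕ} (hd : 1 ≤ d) (G : OmegaBC n d) {c : ℕ → Fin n}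
    (hc : ∀ s < W, ∀ t < W, c s = c t → s = t) (D : Finset α) :
    ∀ (b : ℕ) (BL BR : Finset (Fin n)), BL.card ≤ b → BR.card ≤ b →
    (b + D.card) * (1 + d + d ^ 2) ≤ W → ∃ P Q : α → Fin n,
      (∀ e ∈ D, P e ∉ BL ∧ Q e ∉ BR ∧ (∀ v ∈ BR, G.1 (P e) v = 0) ∧
        (∀ u ∈ BL, G.1 u (Q e) = 0) ∧ 1 ≤ G.1 (P e) (Q e) ∧ ∃ s < W, P e = c s) ∧
      (∀ e ∈ D, ∀ f ∈ D, P e = P f → e = f) ∧ (∀ e ∈ D, ∀ f ∈ D, Q e = Q f → e = f) := by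
  induction D using Finset.induction_on with
  | empty =>
    intro b BL BR h1 h2 h3
    have hn : 0 < n := by
      have : Nonempty (Fin n) := ⟨c 0⟩
      exact Fin.pos_iff_nonempty.2 this
    exact ⟨fun _ => ⟨0, hn⟩, fun _ => ⟨0, hn⟩, by simp, by simp, by simp⟩
  | insert a D ha ih =>
    intro b BL BR h1 h2 h3
    rw [card_insert_of_notMem ha] at h3
    obtain ⟨s, hs, q, g1, g2, g3, g4, g5⟩ := exists_far hd G hc h1 h2 (W := W) (by nlinarith)
    obtain ⟨P, Q, i1, i2, i3⟩ := ih (b + 1) (insert (c s) BL) (insert q BR)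
      ((card_insert_le _ _).trans (by omega)) ((card_insert_le _ _).trans (by omega))
      (by rw [show b + 1 + D.card = b + (D.card + 1) by ring]; exact h3)
    have nea : ∀ e ∈ D, e ≠ a := fun e he h => ha (h ▸ he)
    refine ⟨fun e => if e = a then c s else P e, fun e => if e = a then q else Q e, ?_, ?_, ?_⟩
    · intro e he
      rcases mem_insert.1 he with rfl | he
      · simp only [if_true]
        exact ⟨g1, g2, g3, g4, g5, s, hs, rfl⟩
      · simp only [nea e he, if_false]
        obtain ⟨j1, j2, j3, j4, j5⟩ := i1 e he
        exact ⟨fun h => j1 (mem_insert_of_mem h), fun h => j2 (mem_insert_of_mem h),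
          fun v hv => j3 v (mem_insert_of_mem hv), fun u hu => j4 u (mem_insert_of_mem hu), j5⟩
    · intro e he f hf h
      rcases mem_insert.1 he with he' | he' <;> rcases mem_insert.1 hf with hf' | hf'
      · exact he'.trans hf'.symm
      · simp only [he', if_true, nea f hf', if_false] at h
        exact absurd (h ▸ mem_insert_self _ _) (i1 f hf').1
      · simp only [hf', if_true, nea e he', if_false] at h
        exact absurd (h ▸ mem_insert_self _ _) (i1 e he').1
      · simp only [nea f hf', nea e he', if_false] at h
        exact i2 e he' f hf' h
    · intro e he f hf h
      rcases mem_insert.1 he with he' | he' <;> rcases mem_insert.1 hf with hf' | hf'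
      · exact he'.trans hf'.symm
      · simp only [he', if_true, nea f hf', if_false] at h
        exact absurd (h ▸ mem_insert_self _ _) (i1 f hf').2.1
      · simp only [hf', if_true, nea e he', if_false] at h
        exact absurd (h ▸ mem_insert_self _ _) (i1 e he').2.1
      · simp only [nea f hf', nea e he', if_false] at h
        exact i3 e he' f hf' h

/-! ### Lower bound on the number of endpoints -/

theorem SN_card {n d k : ℕ} (hd : 1 ≤ d) {G : OmegaBC n d} (hc : InCat k G) {N : ℕ}
    (hN : (k + N) * (1 + d + d ^ 2) ≤ n) (hk : 2 * k ≤ N + 1) :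
    N ^ k ≤ 2 ^ k * (SN G).ncard := by
  rcases Nat.eq_zero_or_pos k with rfl | hk0
  · obtain ⟨H, hH, -⟩ := park_SN hc (x := Prod.fst) (y := Prod.snd) (by
      have : dbl G = ∅ := card_eq_zero.1 hc.card
      rw [this]
      constructor <;> simp)
    have : 0 < (SN G).ncard := Set.ncard_pos (Set.toFinite _) |>.2 ⟨H, hH⟩
    simpa using Nat.succ_le_of_lt this
  have hn : 0 < n := by
    have : 0 < (k + N) * (1 + d + d ^ 2) := by positivity
    omega
  obtain ⟨P, Q, h1, h2, h3⟩ := exists_aux hd G (W := n) (c := fun s => (⟨s % n, Nat.mod_lt _ hn⟩))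
    (by
      intro s hs t ht h
      simp only [Fin.mk.injEq] at h
      rwa [Nat.mod_eq_of_lt hs, Nat.mod_eq_of_lt ht] at h) (univ : Finset (Fin N)) k
    ((dbl G).image Prod.fst) ((dbl G).image Prod.snd)
    (card_image_le.trans hc.card.le) (card_image_le.trans hc.card.le) (by simpa using hN)
  simp only [mem_univ, forall_const] at h1 h2 h3
  have N0 : 0 < N := by omega
  have pv : ∀ f : (dbl G) ↪ Fin N, ∃ x y, PV (cz G) (dbl G) x y ∧
      ∀ e : dbl G, x e = P (f e) ∧ y e = Q (f e) := by
    intro f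
    set g : Fin n × Fin n → Fin N := fun p => if h : p ∈ dbl G then f ⟨p, h⟩ else ⟨0, N0⟩ with hg
    have gv : ∀ p (h : p ∈ dbl G), g p = f ⟨p, h⟩ := fun p h => by simp [hg, h]
    have ginj : ∀ e ∈ dbl G, ∀ e' ∈ dbl G, g e = g e' → e = e' := by
      intro e he e' he' h
      rw [gv e he, gv e' he'] at h
      have := f.injective h
      simpa using this
    have z : ∀ a : ℕ, a = 0 → (a : ℤ) = 0 := by intro a h; simp [h]
    refine ⟨fun p => P (g p), fun p => Q (g p), ?_, fun e => by simp [gv e e.2]⟩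
    refine ⟨?_, ?_, ?_, ?_, ?_, ?_, ?_, ?_⟩
    · exact fun e he e' he' h => ginj e he e' he' (h2 _ _ h)
    · exact fun e he e' he' h => ginj e he e' he' (h3 _ _ h)
    · exact fun e he e' he' h => (h1 (g e)).1 (h ▸ mem_image_of_mem _ he')
    · exact fun e he e' he' h => (h1 (g e)).2.1 (h ▸ mem_image_of_mem _ he')
    · exact fun e he => z _ ((h1 (g e)).2.2.1 _ (mem_image_of_mem _ he))
    · exact fun e he => z _ ((h1 (g e)).2.2.2.1 _ (mem_image_of_mem _ he))
    · intro e he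
      have a1 := (h1 (g e)).2.2.2.2.1
      have a2 := hc.2.2 (P (g e)) (Q (g e))
      have a3 : G.1 (P (g e)) (Q (g e)) ≠ 2 := fun h =>
        (h1 (g e)).1 (mem_image.2 ⟨(P (g e), Q (g e)), mem_dbl.2 h, rfl⟩)
      unfold cz
      omega
    · intro e he
      rw [mem_dbl_cz.1 he]
      norm_num
  choose x y hpv hxy using pv
  have hS := fun f => park_SN hc (hpv f)
  choose S hS1 hS2 using hS
  have Sinj : Function.Injective S := by
    intro f f' h
    ext e : 1
    by_contra hne
    -- the entry `(P (f e), e.2)` tells the two endpoints apart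
    have e1 := park_x_snd (hpv f) e.2
    have e2 := park_loc (D := dbl G) (M := cz G) (x := x f') (y := y f') (u := x f e) (v := e.1.2)
    have e3 : park (cz G) (dbl G) (x f') (y f') (x f e) e.1.2 = 0 := by
      by_cases hx : ∃ e' : dbl G, x f e = x f' e'
      · obtain ⟨e', he'⟩ := hx
        have hee : e ≠ e' := by
          rintro rfl
          rw [(hxy f e).1, (hxy f' e).1] at he'
          exact hne (h2 _ _ he')
        have h5 : e.1.2 ≠ e'.1.2 := fun h => hee (Subtype.ext (hc.inj2 _ e.2 _ e'.2 h))
        rw [he', park_x (hpv f') e'.2, dl_ne h5, dl_ne ((hpv f').yn _ e'.2 _ e.2).symm, ← he',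
          (hpv f).x0 _ e.2]
        norm_num
      · push Not at hx
        rw [e2 (Or.inl fun e' he' => ⟨(hpv f).xn _ e.2 _ he', hx ⟨e', he'⟩⟩), (hpv f).x0 _ e.2]
    rw [← hS2 f, h, hS2 f', e3] at e1
    exact absurd e1 (by norm_num)
  have hle : Fintype.card ((dbl G) ↪ Fin N) ≤ (SN G).ncard := by
    rw [← Nat.card_eq_fintype_card, ← Nat.card_coe_set_eq]
    exact Nat.card_le_card_of_injective (fun f => (⟨S f, hS1 f⟩ : SN G))
      fun f f' h => Sinj (by simpa using h)
  rw [Fintype.card_embedding_eq, Fintype.card_coe, Fintype.card_fin, hc.card] at hle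
  have h5 := Nat.pow_sub_le_descFactorial N k
  calc N ^ k ≤ (2 * (N + 1 - k)) ^ k := Nat.pow_le_pow_left (by omega) _
    _ = 2 ^ k * (N + 1 - k) ^ k := mul_pow _ _ _
    _ ≤ 2 ^ k * (SN G).ncard := Nat.mul_le_mul_left _ (h5.trans hle)

/-! ### Vertices recoverable from a transition, and the number of possibilities -/

/-- Two increasing families `A`, `B` of sets of rows and columns which contain the vertices
touched by the transition `H → H'`, and are closed (with a shift of the index by one) under
passing to neighbours in `H` or `H'` and, for rows, under the sums and differences in `ℤ/n`
through which the parking rows encode the other vertices. -/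
structure Clos {n d : ℕ} [NeZero n] (W : ℕ) (H H' : OmegaBC n d) (A B : ℕ → Finset (Fin n)) :
    Prop where
  mA : ∀ l l', l ≤ l' → A l ⊆ A l'
  mB : ∀ l l', l ≤ l' → B l ⊆ B l'
  nA : ∀ l u v, v ∈ B l → (cz H u v ≠ 0 ∨ cz H' u v ≠ 0) → u ∈ A (l + 1)
  nB : ∀ l u v, u ∈ A l → (cz H u v ≠ 0 ∨ cz H' u v ≠ 0) → v ∈ B (l + 1)
  hp : ∀ l u v w s, u ∈ A l → v ∈ A l → w ∈ A l → s < W → u + v + w + Fin.ofNat n s ∈ A (l + 1)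
  hm : ∀ l u v w s, u ∈ A l → v ∈ A l → w ∈ A l → s < W → u - v - w - Fin.ofNat n s ∈ A (l + 1)
  z : 0 ∈ A 0
  tA : ∀ u v, cz H u v ≠ cz H' u v → u ∈ A 0
  tB : ∀ u v, cz H u v ≠ cz H' u v → v ∈ B 0

theorem Clos.symm {n d W : ℕ} [NeZero n] {H H' : OmegaBC n d} {A B : ℕ → Finset (Fin n)}
    (c : Clos W H H' A B) : Clos W H' H A B where
  mA := c.mA
  mB := c.mB
  nA l u v h1 h2 := c.nA l u v h1 h2.symm
  nB l u v h1 h2 := c.nB l u v h1 h2.symm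
  hp := c.hp
  hm := c.hm
  z := c.z
  tA u v h := c.tA u v h.symm
  tB u v h := c.tB u v h.symm

/-- `G` agrees with `H` outside `A × B`. -/
def Agr {n d : ℕ} (H G : OmegaBC n d) (A B : Finset (Fin n)) : Prop :=
  ∀ u v, cz G u v ≠ cz H u v → u ∈ A ∧ v ∈ B

/-- Given the rows in `need`, the transition `H → H'` determines the four graphs up to the
entries in a bounded block. -/
def Kn {n d : ℕ} [NeZero n] (W : ℕ) (G₁ M₁ G₂ M₂ : OmegaBC n d) (need : Finset (Fin n))
    (H H' : OmegaBC n d) : Prop :=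
  ∀ A B, Clos W H H' A B → need ⊆ A 0 →
    Agr H G₁ (A 14) (B 14) ∧ Agr H M₁ (A 14) (B 14) ∧ Agr H G₂ (A 14) (B 14) ∧
      Agr H M₂ (A 14) (B 14)

/-- The relation imposed on every transition of the path: it is a simple switching, and it
determines the four graphs up to few entries once at most `K` further rows are given. -/
def RT {n d : ℕ} [NeZero n] (W K : ℕ) (G₁ M₁ G₂ M₂ : OmegaBC n d) (H H' : OmegaBC n d) : Prop :=
  SimpleAdj H H' ∧ ∃ need : Finset (Fin n), need.card ≤ K ∧ Kn W G₁ M₁ G₂ M₂ need H H'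

theorem Agr.of_clos {n d W : ℕ} [NeZero n] {H H' G : OmegaBC n d} {A B : ℕ → Finset (Fin n)}
    (c : Clos W H H' A B) {l : ℕ} (h : Agr H G (A l) (B l)) : Agr H' G (A l) (B l) := by
  intro u v hne
  by_cases e : cz H u v = cz H' u v
  · exact h u v (by rwa [e])
  · exact ⟨c.mA 0 l (Nat.zero_le _) (c.tA u v e), c.mB 0 l (Nat.zero_le _) (c.tB u v e)⟩

theorem RT.rev {n d W K : ℕ} [NeZero n] {G₁ M₁ G₂ M₂ H H' : OmegaBC n d}
    (h : RT W K G₁ M₁ G₂ M₂ H H') : RT W K G₂ M₂ G₁ M₁ H' H := by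
  obtain ⟨h1, need, h2, h3⟩ := h
  refine ⟨h1.symm, need, h2, fun A B c hn => ?_⟩
  obtain ⟨a1, a2, a3, a4⟩ := h3 A B c.symm hn
  exact ⟨a3.of_clos c.symm, a4.of_clos c.symm, a1.of_clos c.symm, a2.of_clos c.symm⟩

/-- One closure step on sets of rows and columns. -/
def stepC {n d : ℕ} [NeZero n] (W : ℕ) (H H' : OmegaBC n d)
    (p : Finset (Fin n) × Finset (Fin n)) : Finset (Fin n) × Finset (Fin n) :=
  (p.1 ∪ (p.2.biUnion fun v => univ.filter fun u => cz H u v ≠ 0 ∨ cz H' u v ≠ 0) ∪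
      (p.1 ×ˢ p.1 ×ˢ p.1 ×ˢ range W).image
        (fun q => q.1 + q.2.1 + q.2.2.1 + Fin.ofNat n q.2.2.2) ∪
      (p.1 ×ˢ p.1 ×ˢ p.1 ×ˢ range W).image
        (fun q => q.1 - q.2.1 - q.2.2.1 - Fin.ofNat n q.2.2.2),
    p.2 ∪ p.1.biUnion fun u => univ.filter fun v => cz H u v ≠ 0 ∨ cz H' u v ≠ 0)

/-- The closure after `l` steps, starting from the touched vertices and the rows in `ρ`. -/
def lev {n d : ℕ} [NeZero n] (W : ℕ) (H H' : OmegaBC n d) (ρ : Finset (Fin n)) :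
    ℕ → Finset (Fin n) × Finset (Fin n)
  | 0 => ((univ.filter fun u => ∃ v, cz H u v ≠ cz H' u v) ∪ ρ ∪ {0},
      univ.filter fun v => ∃ u, cz H u v ≠ cz H' u v)
  | l + 1 => stepC W H H' (lev W H H' ρ l)

theorem lev_clos {n d : ℕ} [NeZero n] (W : ℕ) (H H' : OmegaBC n d) (ρ : Finset (Fin n)) :
    Clos W H H' (fun l => (lev W H H' ρ l).1) (fun l => (lev W H H' ρ l).2) where
  mA l l' h := by
    induction h with
    | refl => exact subset_rfl
    | step _ ih =>
      refine ih.trans fun u hu => ?_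
      simp [lev, stepC, hu]
  mB l l' h := by
    induction h with
    | refl => exact subset_rfl
    | step _ ih =>
      refine ih.trans fun u hu => ?_
      simp [lev, stepC, hu]
  nA l u v h1 h2 := by
    have : u ∈ (lev W H H' ρ l).2.biUnion
        fun v => univ.filter fun u => cz H u v ≠ 0 ∨ cz H' u v ≠ 0 :=
      mem_biUnion.2 ⟨v, h1, by simpa using h2⟩
    simp only [lev, stepC, mem_union, this, true_or, or_true]
  nB l u v h1 h2 := by
    have : v ∈ (lev W H H' ρ l).1.biUnion
        fun u => univ.filter fun v => cz H u v ≠ 0 ∨ cz H' u v ≠ 0 :=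
      mem_biUnion.2 ⟨u, h1, by simpa using h2⟩
    simp only [lev, stepC, mem_union, this, or_true]
  hp l u v w s hu hv hw hs := by
    refine mem_union_left _ (mem_union_right _ (mem_image.2 ⟨(u, v, w, s), ?_, rfl⟩))
    simp only [mem_product, mem_range]
    exact ⟨hu, hv, hw, hs⟩
  hm l u v w s hu hv hw hs := by
    refine mem_union_right _ (mem_image.2 ⟨(u, v, w, s), ?_, rfl⟩)
    simp only [mem_product, mem_range]
    exact ⟨hu, hv, hw, hs⟩
  z := by simp [lev]
  tA u v h := by
    simp only [lev, mem_union, mem_filter, mem_univ, true_and]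
    exact Or.inl (Or.inl ⟨v, h⟩)
  tB u v h := by
    simp only [lev, mem_filter, mem_univ, true_and]
    exact ⟨u, h⟩

/-- Bound on the size of the closure after `l` steps. -/
def sB (d W s : ℕ) : ℕ → ℕ
  | 0 => s
  | l + 1 => sB d W s l + sB d W s l * (2 * d) + 2 * (sB d W s l ^ 3 * W)

theorem cz_ne {n d : ℕ} (G : OmegaBC n d) (u v) : cz G u v ≠ 0 ↔ G.1 u v ≠ 0 := by
  simp [cz]

theorem card_nb2L {n d : ℕ} (H H' : OmegaBC n d) (v : Fin n) :
    (univ.filter fun u => cz H u v ≠ 0 ∨ cz H' u v ≠ 0).card ≤ 2 * d := by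
  rw [filter_or]
  refine (card_union_le _ _).trans ?_
  simp only [cz_ne]
  have := card_nbL H v
  have := card_nbL H' v
  omega

theorem card_nb2R {n d : ℕ} (H H' : OmegaBC n d) (u : Fin n) :
    (univ.filter fun v => cz H u v ≠ 0 ∨ cz H' u v ≠ 0).card ≤ 2 * d := by
  rw [filter_or]
  refine (card_union_le _ _).trans ?_
  simp only [cz_ne]
  have := card_nbR H u
  have := card_nbR H' u
  omega

theorem card_touch {n d : ℕ} {H H' : OmegaBC n d} (h : SimpleAdj H H') :
    (univ.filter fun u => ∃ v, cz H u v ≠ cz H' u v).card ≤ 2 ∧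
    (univ.filter fun v => ∃ u, cz H u v ≠ cz H' u v).card ≤ 2 := by
  obtain ⟨-, -, i, i', j, j', hi, hj, h1, h2, -, -, e⟩ := h
  have e' := (switch_iff hi hj h1.ge h2.ge).1 e
  constructor
  · refine (card_le_card (t := {i, i'}) fun u hu => ?_).trans card_le_two
    simp only [mem_filter, mem_univ, true_and] at hu
    obtain ⟨v, hv⟩ := hu
    by_contra hne
    simp only [mem_insert, mem_singleton, not_or] at hne
    rw [e', rk, dl_ne hne.1, dl_ne hne.2] at hv
    simp at hv
  · refine (card_le_card (t := {j, j'}) fun v hv => ?_).trans card_le_two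
    simp only [mem_filter, mem_univ, true_and] at hv
    obtain ⟨u, hu⟩ := hv
    by_contra hne
    simp only [mem_insert, mem_singleton, not_or] at hne
    rw [e', rk, dl_ne hne.1, dl_ne hne.2] at hu
    simp at hu

theorem lev_card {n d : ℕ} [NeZero n] (W : ℕ) {H H' : OmegaBC n d} (h : SimpleAdj H H')
    {ρ : Finset (Fin n)} {s : ℕ} (hρ : ρ.card + 3 ≤ s) (l : ℕ) :
    (lev W H H' ρ l).1.card ≤ sB d W s l ∧ (lev W H H' ρ l).2.card ≤ sB d W s l := by
  induction l with
  | zero =>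
    obtain ⟨h1, h2⟩ := card_touch h
    constructor
    · refine (card_union_le _ _).trans ?_
      have := card_union_le (univ.filter fun u => ∃ v, cz H u v ≠ cz H' u v) ρ
      rw [card_singleton]
      unfold sB
      omega
    · unfold sB
      exact h2.trans (by omega)
  | succ l ih =>
    obtain ⟨h1, h2⟩ := ih
    set p := lev W H H' ρ l with hp
    have i1 : ∀ f : Fin n × Fin n × Fin n × ℕ → Fin n,
        ((p.1 ×ˢ p.1 ×ˢ p.1 ×ˢ range W).image f).card ≤ sB d W s l ^ 3 * W := by
      intro f
      refine card_image_le.trans ?_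
      rw [card_product, card_product, card_product, card_range]
      calc _ = p.1.card ^ 3 * W := by ring
        _ ≤ _ := Nat.mul_le_mul_right _ (Nat.pow_le_pow_left h1 3)
    have i2 : (p.2.biUnion fun v => univ.filter fun u => cz H u v ≠ 0 ∨ cz H' u v ≠ 0).card ≤
        sB d W s l * (2 * d) :=
      (card_biUnion_le_card_mul _ _ _ fun v _ => card_nb2L H H' v).trans
        (Nat.mul_le_mul_right _ h2)
    have i3 : (p.1.biUnion fun u => univ.filter fun v => cz H u v ≠ 0 ∨ cz H' u v ≠ 0).card ≤
        sB d W s l * (2 * d) :=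
      (card_biUnion_le_card_mul _ _ _ fun v _ => card_nb2R H H' v).trans
        (Nat.mul_le_mul_right _ h1)
    constructor
    · refine (card_union_le _ _).trans ((Nat.add_le_add (card_union_le _ _) le_rfl).trans ?_)
      refine (Nat.add_le_add (Nat.add_le_add (card_union_le _ _) le_rfl) le_rfl).trans ?_
      refine (Nat.add_le_add (Nat.add_le_add (Nat.add_le_add h1 i2) (i1 _)) (i1 _)).trans ?_
      simp only [sB]
      omega
    · refine (card_union_le _ _).trans ((Nat.add_le_add h2 i3).trans ?_)
      simp only [sB]
      omega

theorem count_one {n d : ℕ} (H : OmegaBC n d) (A B : Finset (Fin n)) {s : ℕ} (hA : A.card ≤ s)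
    (hB : B.card ≤ s) :
    (univ.filter fun G : OmegaBC n d => Agr H G A B ∧ ∀ u v, G.1 u v ≤ 2).card ≤ 3 ^ s ^ 2 := by
  have : (univ.filter fun G : OmegaBC n d => Agr H G A B ∧ ∀ u v, G.1 u v ≤ 2).card ≤
      (univ : Finset ((A ×ˢ B : Finset _) → Fin 3)).card := by
    refine card_le_card_of_injOn (fun G p => Fin.ofNat 3 (G.1 p.1.1 p.1.2)) (by simp) ?_
    intro G hG G' hG' e
    simp only [coe_filter, mem_univ, true_and, Set.mem_ofPred_eq] at hG hG'
    apply cz_inj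
    funext u v
    by_cases huv : u ∈ A ∧ v ∈ B
    · have := congrFun e ⟨(u, v), mem_product.2 huv⟩
      simp only [Fin.ext_iff, Fin.val_ofNat] at this
      rw [Nat.mod_eq_of_lt (Nat.lt_succ_of_le (hG.2 u v)),
        Nat.mod_eq_of_lt (Nat.lt_succ_of_le (hG'.2 u v))] at this
      simp [cz, this]
    · have a := mt (hG.1 u v) huv
      have b := mt (hG'.1 u v) huv
      push Not at a b
      rw [a, b]
  refine this.trans ?_
  rw [card_univ, Fintype.card_fun, Fintype.card_coe, Fintype.card_fin, card_product, pow_two]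
  exact Nat.pow_le_pow_right (by norm_num) (Nat.mul_le_mul hA hB)

theorem exists_enum {n : ℕ} [NeZero n] {K : ℕ} {S : Finset (Fin n)} (h : S.card ≤ K) :
    ∃ r : Fin K → Fin n, S ⊆ univ.image r := by
  obtain ⟨f⟩ : Nonempty (S ↪ Fin K) := by
    rw [Function.Embedding.nonempty_iff_card_le]; simpa using h
  refine ⟨fun t => if h : ∃ a : S, f a = t then h.choose.1 else 0, fun a ha => ?_⟩
  rw [mem_image]
  refine ⟨f ⟨a, ha⟩, mem_univ _, ?_⟩
  have h : ∃ b : S, f b = f ⟨a, ha⟩ := ⟨_, rfl⟩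
  rw [dif_pos h, f.injective h.choose_spec]

/-- For a fixed transition, the number of quadruples satisfying the path relation. -/
theorem count_RT {n d : ℕ} [NeZero n] (W K : ℕ) {H H' : OmegaBC n d} (h : SimpleAdj H H') :
    (univ.filter fun T : OmegaBC n d × OmegaBC n d × OmegaBC n d × OmegaBC n d =>
      RT W K T.1 T.2.1 T.2.2.1 T.2.2.2 H H' ∧ (∀ u v, T.1.1 u v ≤ 2) ∧ (∀ u v, T.2.1.1 u v ≤ 2) ∧
        (∀ u v, T.2.2.1.1 u v ≤ 2) ∧ (∀ u v, T.2.2.2.1 u v ≤ 2)).card ≤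
      n ^ K * (3 ^ (sB d W (K + 3) 14) ^ 2) ^ 4 := by
  set F : (Fin K → Fin n) → Finset (OmegaBC n d) := fun r => univ.filter fun G : OmegaBC n d =>
    Agr H G (lev W H H' (univ.image r) 14).1 (lev W H H' (univ.image r) 14).2 ∧
      ∀ u v, G.1 u v ≤ 2 with hF
  have hsub : (univ.filter fun T : OmegaBC n d × OmegaBC n d × OmegaBC n d × OmegaBC n d =>
      RT W K T.1 T.2.1 T.2.2.1 T.2.2.2 H H' ∧ (∀ u v, T.1.1 u v ≤ 2) ∧ (∀ u v, T.2.1.1 u v ≤ 2) ∧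
        (∀ u v, T.2.2.1.1 u v ≤ 2) ∧ (∀ u v, T.2.2.2.1 u v ≤ 2)) ⊆
      (univ : Finset (Fin K → Fin n)).biUnion fun r => F r ×ˢ F r ×ˢ F r ×ˢ F r := by
    intro T hT
    simp only [mem_filter, mem_univ, true_and] at hT
    obtain ⟨⟨-, need, hc, hk⟩, b1, b2, b3, b4⟩ := hT
    obtain ⟨r, hr⟩ := exists_enum hc
    obtain ⟨a1, a2, a3, a4⟩ := hk _ _ (lev_clos W H H' (univ.image r)) (by
      intro u hu
      simp only [lev, mem_union]
      exact Or.inl (Or.inr (hr hu)))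
    simp only [mem_biUnion, mem_univ, true_and, mem_product, hF, mem_filter]
    exact ⟨r, ⟨a1, b1⟩, ⟨a2, b2⟩, ⟨a3, b3⟩, ⟨a4, b4⟩⟩
  refine (card_le_card hsub).trans ((card_biUnion_le_card_mul _ _
    ((3 ^ (sB d W (K + 3) 14) ^ 2) ^ 4) fun r _ => ?_).trans ?_)
  · have hr : (univ.image r).card + 3 ≤ K + 3 := by
      have := card_image_le (s := (univ : Finset (Fin K))) (f := r)
      simpa using this
    obtain ⟨c1, c2⟩ := lev_card W h hr 14
    have := count_one H _ _ c1 c2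
    rw [card_product, card_product, card_product]
    calc _ = (F r).card ^ 4 := by ring
      _ ≤ _ := Nat.pow_le_pow_left this 4
  · rw [card_univ, Fintype.card_fun, Fintype.card_fin, Fintype.card_fin]

/-! ### Comparison of the two measures and of the two generators -/

theorem card_ones_row {n d : ℕ} {G : OmegaBC n d} (h : IsSimpleG G) (i : Fin n) :
    Fintype.card {j // G.1 i j = 1} = d := by
  refine Eq.trans ?_ (G.2.1 i)
  rw [Fintype.card_subtype, card_eq_sum_ones, sum_filter]
  refine sum_congr rfl fun j _ => ?_
  have := h i j
  split_ifs <;> omega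

theorem card_ones_col {n d : ℕ} {G : OmegaBC n d} (h : IsSimpleG G) (j : Fin n) :
    Fintype.card {i // G.1 i j = 1} = d := by
  refine Eq.trans ?_ (G.2.2 j)
  rw [Fintype.card_subtype, card_eq_sum_ones, sum_filter]
  refine sum_congr rfl fun i _ => ?_
  have := h i j
  split_ifs <;> omega

/-- Orderings of the edges at each left vertex and at each right vertex. -/
abbrev Ords {n d : ℕ} (G : OmegaBC n d) :=
  (∀ i, {j // G.1 i j = 1} ≃ Fin d) × (∀ j, {i // G.1 i j = 1} ≃ Fin d)

/-- The matching of half-edges defined by a simple graph with ordered edges. -/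
def toMatch {n d : ℕ} (G : OmegaBC n d) (o : Ords G) : (Fin n × Fin d) ↪ (Fin n × Fin d) where
  toFun p := (((o.1 p.1).symm p.2).1, o.2 ((o.1 p.1).symm p.2).1 ⟨p.1, ((o.1 p.1).symm p.2).2⟩)
  inj' := by
    rintro ⟨i, a⟩ ⟨i', a'⟩ h
    simp only [Prod.mk.injEq] at h
    obtain ⟨h1, h2⟩ := h
    generalize h3 : (o.1 i).symm a = s at h1 h2
    generalize h4 : (o.1 i').symm a' = t at h1 h2
    obtain ⟨s, hs⟩ := s
    obtain ⟨t, ht⟩ := t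
    simp only at h1
    subst h1
    have h5 := (o.2 s).injective h2
    simp only [Subtype.mk.injEq] at h5
    subst h5
    rw [Equiv.symm_apply_eq] at h3 h4
    rw [h3, h4]

theorem toMatch_apply {n d : ℕ} (G : OmegaBC n d) (o : Ords G) (i : Fin n) (a : Fin d)
    (s : {j // G.1 i j = 1}) (h : (o.1 i).symm a = s) :
    toMatch G o (i, a) = (s.1, o.2 s.1 ⟨i, s.2⟩) := by
  subst h
  rfl

theorem toMatch_edge {n d : ℕ} (G : OmegaBC n d) (o : Ords G) (i j : Fin n) :
    G.1 i j = 1 ↔ ∃ a, (toMatch G o (i, a)).1 = j := by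
  constructor
  · intro h
    exact ⟨o.1 i ⟨j, h⟩, by rw [toMatch_apply G o i _ ⟨j, h⟩ (by simp)]⟩
  · rintro ⟨a, rfl⟩
    exact ((o.1 i).symm a).2

theorem toMatch_inj {n d : ℕ} (G : OmegaBC n d) : Function.Injective (toMatch G) := by
  intro o o' h
  have h1 : ∀ i, o.1 i = o'.1 i := by
    intro i
    apply Equiv.symm_bijective.injective
    ext a
    have := congrArg (fun φ => (φ (i, a)).1) h
    simp only [toMatch_apply _ _ _ _ _ rfl] at this
    rw [this]
  have h1' : o.1 = o'.1 := funext h1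
  obtain ⟨l, r⟩ := o
  obtain ⟨l', r'⟩ := o'
  simp only at h1'
  subst h1'
  congr 1
  funext j
  apply Equiv.ext
  rintro ⟨i, hi⟩
  have e1 := toMatch_apply G (l, r) i (l i ⟨j, hi⟩) ⟨j, hi⟩ (by simp)
  have e2 := toMatch_apply G (l, r') i (l i ⟨j, hi⟩) ⟨j, hi⟩ (by simp)
  rw [h, e2, Prod.mk.injEq] at e1
  exact e1.2.symm

theorem cardSimple_le (n d : ℕ) :
    cardSimple n d * d.factorial ^ (2 * n) ≤ (n * d).factorial := by
  have hdis : ((univ.filter fun G : OmegaBC n d => IsSimpleG G : Finset _) :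
      Set (OmegaBC n d)).PairwiseDisjoint
      (fun G => (univ : Finset (Ords G)).image (toMatch G)) := by
    intro G hG G' hG' hne
    simp only [coe_filter, mem_univ, true_and, Set.mem_ofPred_eq] at hG hG'
    rw [Function.onFun, disjoint_left]
    intro φ h1 h2
    simp only [mem_image, mem_univ, true_and] at h1 h2
    obtain ⟨o, rfl⟩ := h1
    obtain ⟨o', ho'⟩ := h2
    apply hne
    apply Subtype.ext
    funext i j
    have := (toMatch_edge G o i j).trans ((ho' ▸ toMatch_edge G' o' i j).symm)
    have a := hG i j
    have b := hG' i j
    omega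
  have h1 := card_le_univ ((univ.filter fun G : OmegaBC n d => IsSimpleG G).biUnion
    (fun G => (univ : Finset (Ords G)).image (toMatch G)))
  rw [card_biUnion hdis, Fintype.card_embedding_eq, Fintype.card_prod, Fintype.card_fin,
    Fintype.card_fin, Nat.descFactorial_self] at h1
  refine le_trans (le_of_eq ?_) h1
  rw [sum_congr rfl (g := fun _ => d.factorial ^ (2 * n)), sum_const, smul_eq_mul]
  · rfl
  · intro G hG
    simp only [mem_filter, mem_univ, true_and] at hG
    rw [card_image_of_injective _ (toMatch_inj G), card_univ, Fintype.card_prod, Fintype.card_pi,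
      Fintype.card_pi]
    have e1 : ∀ i, Fintype.card ({j // G.1 i j = 1} ≃ Fin d) = d.factorial := fun i => by
      rw [Fintype.card_equiv (Fintype.equivFinOfCardEq (card_ones_row hG i)), card_ones_row hG i]
    have e2 : ∀ j, Fintype.card ({i // G.1 i j = 1} ≃ Fin d) = d.factorial := fun j => by
      rw [Fintype.card_equiv (Fintype.equivFinOfCardEq (card_ones_col hG j)), card_ones_col hG j]
    rw [prod_congr rfl fun i _ => e1 i, prod_congr rfl fun i _ => e2 i]
    simp only [prod_const, card_univ, Fintype.card_fin]
    rw [← pow_add, two_mul]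

theorem piBC_nonneg {n d : ℕ} (G : OmegaBC n d) : 0 ≤ piBC n d G := by
  unfold piBC; positivity

theorem piBC_le {n d : ℕ} (G : OmegaBC n d) {H : OmegaBC n d} (hH : IsSimpleG H) :
    piBC n d G ≤ piUval n d := by
  have h0 : 0 < cardSimple n d := card_pos.2 ⟨H, by simpa using hH⟩
  have h1 : (1 : ℝ) ≤ ∏ i, ∏ j, ((G.1 i j).factorial : ℝ) := by
    have : 1 ≤ ∏ i, ∏ j, (G.1 i j).factorial :=
      Nat.succ_le_of_lt (prod_pos fun i _ => prod_pos fun j _ => Nat.factorial_pos _)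
    exact_mod_cast this
  have h2 : (cardSimple n d : ℝ) * (d.factorial : ℝ) ^ (2 * n) ≤ ((n * d).factorial : ℝ) := by
    exact_mod_cast cardSimple_le n d
  have h3 : (0 : ℝ) < ((n * d).factorial : ℝ) := by exact_mod_cast Nat.factorial_pos _
  have h4 : (0 : ℝ) < cardSimple n d := by exact_mod_cast h0
  unfold piBC piUval
  rw [div_le_iff₀ (by positivity), inv_mul_eq_div, le_div_iff₀ h4]
  calc _ = (cardSimple n d : ℝ) * (d.factorial : ℝ) ^ (2 * n) := by ring
    _ ≤ ((n * d).factorial : ℝ) * 1 := by simpa using h2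
    _ ≤ _ := mul_le_mul_of_nonneg_left h1 h3.le

theorem sum_le_two {n : ℕ} {f : Fin n → ℝ} {S : Finset (Fin n)} (hS : S.card ≤ 2) {b : ℝ}
    (hb : 0 ≤ b) (h0 : ∀ i, i ∉ S → f i ≤ 0) (h1 : ∀ i, f i ≤ b) : ∑ i, f i ≤ 2 * b := by
  calc ∑ i, f i ≤ ∑ i, if i ∈ S then b else 0 := by
        refine sum_le_sum fun i _ => ?_
        split_ifs with h
        · exact h1 i
        · exact h0 i h
    _ = S.card * b := by simp
    _ ≤ 2 * b := mul_le_mul_of_nonneg_right (by exact_mod_cast hS) hb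

theorem QcOff_nonneg {n d : ℕ} (h : 1 ≤ n * d) (G G' : OmegaBC n d) : 0 ≤ QcOff n d G G' := by
  have : (1 : ℝ) ≤ n * d := by exact_mod_cast h
  unfold QcOff
  refine mul_nonneg (by norm_num) (sum_nonneg fun i _ => sum_nonneg fun i' _ =>
    sum_nonneg fun j _ => sum_nonneg fun j' _ => ?_)
  split_ifs
  · exact mul_nonneg (by positivity) (div_nonneg (by norm_num)
      (mul_nonneg (by positivity) (by linarith)))
  · exact le_rfl

theorem Qc_le {n d : ℕ} (h : 1 ≤ n * d) {M₁ M₂ : OmegaBC n d} (hM : MultiAdj M₁ M₂)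
    (h2 : ∀ u v, M₁.1 u v ≤ 2) :
    0 ≤ Qc n d M₁ M₂ ∧ Qc n d M₁ M₂ ≤ 32 * (2 / ((n * d : ℝ) * ((n * d : ℝ) - 1))) := by
  obtain ⟨a, a', b, b', ha, hb, p1, p2, e⟩ := hM
  have e' := (switch_iff ha hb p1 p2).1 e
  have hne : M₁ ≠ M₂ := by
    rintro rfl
    have := e' a b
    simp only [rk, dl_self, dl_ne ha, dl_ne hb] at this
    omega
  rw [Qc, if_neg hne]
  refine ⟨QcOff_nonneg h _ _, ?_⟩
  have h1 : (1 : ℝ) ≤ n * d := by exact_mod_cast h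
  set c : ℝ := 2 / ((n * d : ℝ) * ((n * d : ℝ) - 1)) with hc
  have c0 : 0 ≤ c := div_nonneg (by norm_num) (mul_nonneg (by positivity) (by linarith))
  have sa : ({a, a'} : Finset (Fin n)).card ≤ 2 := card_le_two
  have sb : ({b, b'} : Finset (Fin n)).card ≤ 2 := card_le_two
  -- any switching from `M₁` to `M₂` uses the rows and columns in which they differ
  have key : ∀ i i' j j', (i ≠ i' ∧ j ≠ j' ∧ 1 ≤ M₁.1 i j ∧ 1 ≤ M₁.1 i' j' ∧
      M₂.1 = switchResMG M₁.1 i i' j j') → (i ∈ ({a, a'} : Finset (Fin n)) ∧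
      i' ∈ ({a, a'} : Finset (Fin n))) ∧ j ∈ ({b, b'} : Finset (Fin n)) ∧
      j' ∈ ({b, b'} : Finset (Fin n)) := by
    rintro i i' j j' ⟨q1, q2, q3, q4, q5⟩
    have q := (switch_iff q1 q2 q3 q4).1 q5
    have hd : ∀ u v, rk i i' j j' u v ≠ 0 → u ∈ ({a, a'} : Finset (Fin n)) ∧
        v ∈ ({b, b'} : Finset (Fin n)) := by
      intro u v hr
      have : rk a a' b b' u v ≠ 0 := by
        have := q u v
        have := e' u v
        intro h0
        apply hr
        linarith
      unfold rk at this
      simp only [mem_insert, mem_singleton]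
      constructor
      · by_contra hh
        push Not at hh
        exact this (by rw [dl_ne hh.1, dl_ne hh.2]; ring)
      · by_contra hh
        push Not at hh
        exact this (by rw [dl_ne hh.1, dl_ne hh.2]; ring)
    have r1 := hd i j (by simp [rk, dl_ne q1, dl_ne q2])
    have r2 := hd i' j' (by simp [rk, dl_ne q1.symm, dl_ne q2.symm])
    exact ⟨⟨r1.1, r2.1⟩, r1.2, r2.2⟩
  have bound : (∑ i : Fin n, ∑ i' : Fin n, ∑ j : Fin n, ∑ j' : Fin n,
      if i ≠ i' ∧ j ≠ j' ∧ 1 ≤ M₁.1 i j ∧ 1 ≤ M₁.1 i' j' ∧ M₂.1 = switchResMG M₁.1 i i' j j'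
      then ((M₁.1 i j : ℝ) * (M₁.1 i' j' : ℝ)) * c else 0) ≤
      2 * (2 * (2 * (2 * (4 * c)))) := by
    have l0 : ∀ i i' j j', (if i ≠ i' ∧ j ≠ j' ∧ 1 ≤ M₁.1 i j ∧ 1 ≤ M₁.1 i' j' ∧
        M₂.1 = switchResMG M₁.1 i i' j j'
        then ((M₁.1 i j : ℝ) * (M₁.1 i' j' : ℝ)) * c else 0) ≤ 4 * c := by
      intro i i' j j'
      split_ifs
      · have x1 : (M₁.1 i j : ℝ) ≤ 2 := by exact_mod_cast h2 i j
        have x2 : (M₁.1 i' j' : ℝ) ≤ 2 := by exact_mod_cast h2 i' j'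
        refine mul_le_mul_of_nonneg_right ?_ c0
        have x3 : (0 : ℝ) ≤ M₁.1 i j := by positivity
        have x4 : (0 : ℝ) ≤ M₁.1 i' j' := by positivity
        nlinarith
      · positivity
    have l1 : ∀ i i' j, _ ≤ 2 * (4 * c) := fun i i' j => sum_le_two sb (by positivity)
      (fun j' hj' => (if_neg (fun hh => hj' (key i i' j j' hh).2.2)).le) (l0 i i' j)
    have l2 : ∀ i i', _ ≤ 2 * (2 * (4 * c)) := fun i i' => sum_le_two sb (by positivity)
      (fun j hj => sum_nonpos fun j' _ => (if_neg (fun hh => hj (key i i' j j' hh).2.1)).le)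
      (l1 i i')
    have l3 : ∀ i, _ ≤ 2 * (2 * (2 * (4 * c))) := fun i => sum_le_two sa (by positivity)
      (fun i' hi' => sum_nonpos fun j _ => sum_nonpos fun j' _ =>
        (if_neg (fun hh => hi' (key i i' j j' hh).1.2)).le) (l2 i)
    exact sum_le_two sa (by positivity)
      (fun i hi => sum_nonpos fun i' _ => sum_nonpos fun j _ => sum_nonpos fun j' _ =>
        (if_neg (fun hh => hi (key i i' j j' hh).1.1)).le) l3
  unfold QcOff
  rw [← hc]
  linarith

/-! ### Polynomially bounded functions of `⌊log log n⌋` -/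

/-- Bounded by a polynomial. -/
def PB (f : ℕ → ℕ) : Prop := ∃ c k : ℕ, ∀ m, f m ≤ c * (m + 1) ^ k

theorem PB.const (a : ℕ) : PB fun _ => a := ⟨a, 0, by simp⟩

theorem PB.id : PB fun m => m := ⟨1, 1, by simp⟩

theorem PB.add {f g : ℕ → ℕ} (hf : PB f) (hg : PB g) : PB fun m => f m + g m := by
  obtain ⟨c, k, h⟩ := hf
  obtain ⟨c', k', h'⟩ := hg
  refine ⟨c + c', k + k', fun m => ?_⟩
  have h1 : (m + 1) ^ k ≤ (m + 1) ^ (k + k') := Nat.pow_le_pow_right (by omega) (by omega)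
  have h2 : (m + 1) ^ k' ≤ (m + 1) ^ (k + k') := Nat.pow_le_pow_right (by omega) (by omega)
  rw [add_mul]
  exact Nat.add_le_add ((h m).trans (Nat.mul_le_mul_left _ h1))
    ((h' m).trans (Nat.mul_le_mul_left _ h2))

theorem PB.mul {f g : ℕ → ℕ} (hf : PB f) (hg : PB g) : PB fun m => f m * g m := by
  obtain ⟨c, k, h⟩ := hf
  obtain ⟨c', k', h'⟩ := hg
  refine ⟨c * c', k + k', fun m => (Nat.mul_le_mul (h m) (h' m)).trans (le_of_eq ?_)⟩
  ring

theorem PB.pow {f : ℕ → ℕ} (hf : PB f) (a : ℕ) : PB fun m => f m ^ a := by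
  induction a with
  | zero => simpa using PB.const 1
  | succ a ih => simpa only [pow_succ] using ih.mul hf

theorem PB.sB {d : ℕ} {W s : ℕ → ℕ} (hW : PB W) (hs : PB s) (l : ℕ) :
    PB fun m => sB d (W m) (s m) l := by
  induction l with
  | zero => exact hs
  | succ l ih =>
    exact (ih.add (ih.mul (PB.const _))).add ((PB.const 2).mul ((ih.pow 3).mul hW))

theorem sB_mono {d W s s' : ℕ} (h : s ≤ s') (l : ℕ) : sB d W s l ≤ sB d W s' l := by
  induction l with
  | zero => exact h
  | succ l ih =>
    unfold sB
    gcongr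

/-- Since `log n ≥ exp ⌊log log n⌋`, powers of two with polynomially bounded exponents in
`⌊log log n⌋` are at most `n`. -/
theorem PB.eventually {f : ℕ → ℕ} (hf : PB f) :
    ∃ N : ℕ, ∀ n : ℕ, N ≤ n → 2 ^ f (mfl n) ≤ n := by
  obtain ⟨c, k, h⟩ := hf
  have h1 : ∀ᶠ x : ℝ in Filter.atTop, (c : ℝ) * (x + 1) ^ k ≤ Real.exp x := by
    have h0 : (fun x : ℝ => x ^ k) =o[Filter.atTop] Real.exp := Real.isLittleO_pow_exp_atTop
    have h2 := h0.bound (c := 1 / (2 ^ k * (c + 1))) (by positivity)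
    filter_upwards [h2, Filter.eventually_ge_atTop 1] with x hx hx1
    rw [Real.norm_of_nonneg (by positivity), Real.norm_of_nonneg (Real.exp_pos _).le,
      div_mul_eq_mul_div, one_mul, le_div_iff₀ (by positivity)] at hx
    calc (c : ℝ) * (x + 1) ^ k ≤ (c + 1) * (2 * x) ^ k := by
          gcongr <;> linarith
      _ = x ^ k * (2 ^ k * (c + 1)) := by rw [mul_pow]; ring
      _ ≤ _ := hx
  obtain ⟨M, hM⟩ := Filter.eventually_atTop.1 h1
  refine ⟨⌈Real.exp (Real.exp (|M| + 1))⌉₊, fun n hn => ?_⟩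
  have hn' : Real.exp (Real.exp (|M| + 1)) ≤ n := Nat.ceil_le.1 hn
  have hn0 : (0 : ℝ) < n := (Real.exp_pos _).trans_le hn'
  have l1 : Real.exp (|M| + 1) ≤ Real.log n := (Real.le_log_iff_exp_le hn0).2 hn'
  have l0 : 0 < Real.log n := (Real.exp_pos _).trans_le l1
  have l2 : |M| + 1 ≤ Real.log (Real.log n) := (Real.le_log_iff_exp_le l0).2 l1
  have f1 : (mfl n : ℝ) ≤ Real.log (Real.log n) :=
    Nat.floor_le (by have := abs_nonneg M; linarith)
  have f2 : Real.log (Real.log n) < mfl n + 1 := Nat.lt_floor_add_one _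
  have f3 : M ≤ (mfl n : ℝ) := by have := le_abs_self M; linarith
  have f4 : Real.exp (mfl n) ≤ Real.log n := (Real.le_log_iff_exp_le l0).1 f1
  have f5 : (f (mfl n) : ℝ) ≤ Real.log n := by
    refine le_trans ?_ ((hM _ f3).trans f4)
    exact_mod_cast h (mfl n)
  have f6 : Real.exp (f (mfl n)) ≤ n := (Real.le_log_iff_exp_le hn0).1 f5
  have f7 : ((2 : ℝ)) ^ f (mfl n) ≤ n := by
    refine le_trans ?_ f6
    rw [← Real.exp_one_pow]
    exact pow_le_pow_left₀ (by norm_num) (by have := Real.add_one_le_exp 1; linarith) _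
  exact_mod_cast f7

/-! ### Walks -/

/-- `Walk R l a b`: there is a walk of `l` steps of the relation `R` from `a` to `b`. -/
inductive Walk {α : Type} (R : α → α → Prop) : ℕ → α → α → Prop
  | nil (a : α) : Walk R 0 a a
  | cons {l : ℕ} {a b c : α} : R a b → Walk R l b c → Walk R (l + 1) a c

theorem Walk.single {α : Type} {R : α → α → Prop} {a b : α} (h : R a b) : Walk R 1 a b :=
  Walk.cons h (Walk.nil b)

theorem Walk.trans {α : Type} {R : α → α → Prop} {l l' : ℕ} {a b c : α} (h : Walk R l a b)
    (h' : Walk R l' b c) : Walk R (l + l') a c := by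
  induction h with
  | nil a => simpa using h'
  | cons r _ ih =>
    rw [Nat.add_right_comm]
    exact Walk.cons r (ih h')

theorem Walk.rev {α : Type} {R S : α → α → Prop} (hS : ∀ a b, R a b → S b a) {l : ℕ} {a b : α}
    (h : Walk R l a b) : Walk S l b a := by
  induction h with
  | nil a => exact Walk.nil a
  | cons r _ ih => exact ih.trans (Walk.single (hS _ _ r))

theorem Walk.toList {α : Type} {R : α → α → Prop} {l : ℕ} {a b : α} (h : Walk R l a b) :
    ∃ L : List α, L.length = l + 1 ∧ L.head? = some a ∧ L.getLast? = some b ∧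
      L.IsChain R ∧ ∀ p ∈ L.zip L.tail, R p.1 p.2 := by
  induction h with
  | nil a => exact ⟨[a], by simp, by simp, by simp, by simp, by simp⟩
  | @cons l a b c r _ ih =>
    obtain ⟨L, h1, h2, h3, h4, h5⟩ := ih
    cases L with
    | nil => simp at h1
    | cons x L =>
      simp only [List.head?_cons, Option.some.injEq] at h2
      subst h2
      refine ⟨a :: x :: L, by simpa using h1, by simp, by simpa using h3, ?_, ?_⟩
      · rw [List.isChain_cons]
        exact ⟨by simpa using r, h4⟩
      · intro p hp
        simp only [List.tail_cons, List.zip_cons_cons, List.mem_cons] at hp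
        rcases hp with rfl | hp
        · exact r
        · exact h5 p (by simpa using hp)

/-! ### Configurations -/

/-- A quadruple of graphs to be connected, with the data exhibiting it as such: the switching
`⟨i, i', j, j'⟩` from `M₁` to `M₂`, and the parking positions `(x, y)`, `(x', y')` used by the
simple paths from `M₁` to `G₁` and from `M₂` to `G₂`. -/
structure Cfg {n d : ℕ} (G₁ M₁ G₂ M₂ : OmegaBC n d) (x y x' y' : Fin n × Fin n → Fin n)
    (i i' j j' : Fin n) : Prop where
  hi : i ≠ i'
  hj : j ≠ j'
  p : 1 ≤ cz M₁ i j
  p' : 1 ≤ cz M₁ i' j'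
  e : ∀ u v, cz M₂ u v = cz M₁ u v - rk i i' j j' u v
  t1 : ∀ u v, cz M₁ u v ≤ 2
  t2 : ∀ u v, cz M₂ u v ≤ 2
  v1 : PV (cz M₁) (dbl M₁) x y
  v2 : PV (cz M₂) (dbl M₂) x' y'
  g1 : cz G₁ = park (cz M₁) (dbl M₁) x y
  g2 : cz G₂ = park (cz M₂) (dbl M₂) x' y'

theorem rk_rev {n : ℕ} (i i' j j' u v : Fin n) : rk i i' j' j u v = -rk i i' j j' u v := by
  unfold rk; ring

theorem rk_swap {n : ℕ} (i i' j j' u v : Fin n) : rk i' i j' j u v = rk i i' j j' u v := by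
  unfold rk; ring

theorem rk_ne_zero {n : ℕ} {i i' j j' u v : Fin n} (h : rk i i' j j' u v ≠ 0) :
    (u = i ∨ u = i') ∧ (v = j ∨ v = j') := by
  unfold rk at h
  constructor
  · by_contra hh
    push Not at hh
    exact h (by rw [dl_ne hh.1, dl_ne hh.2]; ring)
  · by_contra hh
    push Not at hh
    exact h (by rw [dl_ne hh.1, dl_ne hh.2]; ring)

theorem park_ne {n : ℕ} {M : Fin n → Fin n → ℤ} {D : Finset (Fin n × Fin n)}
    {x y : Fin n × Fin n → Fin n} {u v : Fin n} (h : park M D x y u v ≠ M u v) :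
    (∃ e ∈ D, u = e.1 ∨ u = x e) ∧ ∃ e ∈ D, v = e.2 ∨ v = y e := by
  constructor
  · by_contra hh
    push Not at hh
    exact h (park_loc (Or.inl hh))
  · by_contra hh
    push Not at hh
    exact h (park_loc (Or.inr hh))

section cfg
variable {n d : ℕ} {G₁ M₁ G₂ M₂ : OmegaBC n d} {x y x' y' : Fin n × Fin n → Fin n}
  {i i' j j' : Fin n}

theorem Cfg.rev (c : Cfg G₁ M₁ G₂ M₂ x y x' y' i i' j j') :
    Cfg G₂ M₂ G₁ M₁ x' y' x y i i' j' j where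
  hi := c.hi
  hj := c.hj.symm
  p := by
    have := cz_nonneg M₁ i j'
    rw [c.e, rk, dl_self, dl_self, dl_ne c.hi, dl_ne c.hj.symm]; linarith
  p' := by
    have := cz_nonneg M₁ i' j
    rw [c.e, rk, dl_self, dl_self, dl_ne c.hi.symm, dl_ne c.hj]; linarith
  e u v := by rw [c.e, rk_rev]; ring
  t1 := c.t2
  t2 := c.t1
  v1 := c.v2
  v2 := c.v1
  g1 := c.g2
  g2 := c.g1

theorem Cfg.swap (c : Cfg G₁ M₁ G₂ M₂ x y x' y' i i' j j') :
    Cfg G₁ M₁ G₂ M₂ x y x' y' i' i j' j where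
  hi := c.hi.symm
  hj := c.hj.symm
  p := c.p'
  p' := c.p
  e u v := by rw [c.e, rk_swap]
  t1 := c.t1
  t2 := c.t2
  v1 := c.v1
  v2 := c.v2
  g1 := c.g1
  g2 := c.g2

variable [NeZero n] {W : ℕ} {H H' : OmegaBC n d} {A B : ℕ → Finset (Fin n)}

/-- Rows known at a certain stage make the columns adjacent to them in `M` known, when `H`
agrees with `M` outside the known block. -/
theorem Clos.pL (k : Clos W H H' A B) {M : OmegaBC n d} {l : ℕ} (h : Agr H M (A l) (B l))
    {l' : ℕ} (hl : l ≤ l') {u v : Fin n} (hu : u ∈ A l') (hm : cz M u v ≠ 0) : v ∈ B (l' + 1) := by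
  by_cases e : cz M u v = cz H u v
  · exact k.nB l' u v hu (Or.inl (e ▸ hm))
  · exact k.mB l _ (by omega) (h u v e).2

theorem Clos.pR (k : Clos W H H' A B) {M : OmegaBC n d} {l : ℕ} (h : Agr H M (A l) (B l))
    {l' : ℕ} (hl : l ≤ l') {u v : Fin n} (hv : v ∈ B l') (hm : cz M u v ≠ 0) : u ∈ A (l' + 1) := by
  by_cases e : cz M u v = cz H u v
  · exact k.nA l' u v hv (Or.inl (e ▸ hm))
  · exact k.mA l _ (by omega) (h u v e).1

/-- Once the switching, the double edges of `M₁` and the parking rows are known, so are all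
four graphs. -/
theorem Cfg.fin (c : Cfg G₁ M₁ G₂ M₂ x y x' y' i i' j j') (k : Clos W H H' A B) {l : ℕ}
    (hl : l + 1 ≤ 14) (hH : Agr H M₁ (A l) (B l))
    (h1 : ∀ f ∈ dbl M₁, f.1 ∈ A l ∧ f.2 ∈ B l ∧ x f ∈ A l) (h2 : ∀ f ∈ dbl M₂, x' f ∈ A l)
    (ai : i ∈ A l) (ai' : i' ∈ A l) (bj : j ∈ B l) (bj' : j' ∈ B l) :
    Agr H G₁ (A 14) (B 14) ∧ Agr H M₁ (A 14) (B 14) ∧ Agr H G₂ (A 14) (B 14) ∧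
      Agr H M₂ (A 14) (B 14) := by
  have mA : A l ⊆ A 14 := k.mA _ _ (by omega)
  have mB : B l ⊆ B 14 := k.mB _ _ (by omega)
  have mB' : B (l + 1) ⊆ B 14 := k.mB _ _ hl
  have hrk : ∀ {u v}, cz M₂ u v ≠ cz M₁ u v → u ∈ A l ∧ v ∈ B l := by
    intro u v h
    have : rk i i' j j' u v ≠ 0 := by
      intro h0
      rw [c.e, h0, sub_zero] at h
      exact h rfl
    obtain ⟨r1, r2⟩ := rk_ne_zero this
    constructor
    · rcases r1 with rfl | rfl <;> assumption
    · rcases r2 with rfl | rfl <;> assumption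
  have hy : ∀ f ∈ dbl M₁, y f ∈ B (l + 1) := by
    intro f hf
    exact k.pL hH le_rfl (h1 f hf).2.2 (by rw [c.v1.xy f hf]; norm_num)
  have hD2 : ∀ f ∈ dbl M₂, f.1 ∈ A l ∧ f.2 ∈ B l := by
    intro f hf
    by_cases e : cz M₂ f.1 f.2 = cz M₁ f.1 f.2
    · have := h1 f (mem_dbl_cz.2 (by rw [← e]; exact mem_dbl_cz.1 hf))
      exact ⟨this.1, this.2.1⟩
    · exact hrk e
  have hy' : ∀ f ∈ dbl M₂, y' f ∈ B (l + 1) := by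
    intro f hf
    by_cases e : cz M₂ (x' f) (y' f) = cz M₁ (x' f) (y' f)
    · exact k.pL hH le_rfl (h2 f hf) (by rw [← e, c.v2.xy f hf]; norm_num)
    · exact k.mB l _ (by omega) (hrk e).2
  have a2 : Agr H M₂ (A 14) (B 14) := by
    intro u v h
    by_cases e : cz M₂ u v = cz M₁ u v
    · rw [e] at h
      exact ⟨mA (hH u v h).1, mB (hH u v h).2⟩
    · exact ⟨mA (hrk e).1, mB (hrk e).2⟩
  have a1 : Agr H M₁ (A 14) (B 14) := fun u v h => ⟨mA (hH u v h).1, mB (hH u v h).2⟩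
  refine ⟨?_, a1, ?_, a2⟩
  · intro u v h
    by_cases e : cz G₁ u v = cz M₁ u v
    · exact a1 u v (e ▸ h)
    · rw [c.g1] at e
      obtain ⟨⟨f, hf, q⟩, g, hg, q'⟩ := park_ne e
      constructor
      · rcases q with rfl | rfl
        · exact mA (h1 f hf).1
        · exact mA (h1 f hf).2.2
      · rcases q' with rfl | rfl
        · exact mB (h1 g hg).2.1
        · exact mB' (hy g hg)
  · intro u v h
    by_cases e : cz G₂ u v = cz M₂ u v
    · exact a2 u v (e ▸ h)
    · rw [c.g2] at e
      obtain ⟨⟨f, hf, q⟩, g, hg, q'⟩ := park_ne e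
      constructor
      · rcases q with rfl | rfl
        · exact mA (hD2 f hf).1
        · exact mA (h2 f hf)
      · rcases q' with rfl | rfl
        · exact mB (hD2 g hg).2
        · exact mB' (hy' g hg)

/-! ### Moving the parked edges to the auxiliary positions -/

/-- Auxiliary parking positions `(P e, Q e)`, far from the rows `BL` and the columns `BR`, with
all rows `P e` in the window `σ, σ + 1, …, σ + W - 1`. -/
structure Far (W : ℕ) (M : OmegaBC n d) (D : Finset (Fin n × Fin n)) (BL BR : Finset (Fin n))
    (σ : Fin n) (P Q : Fin n × Fin n → Fin n) : Prop where
  pl : ∀ e ∈ D, P e ∉ BL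
  qr : ∀ e ∈ D, Q e ∉ BR
  p0 : ∀ e ∈ D, ∀ v ∈ BR, cz M (P e) v = 0
  q0 : ∀ e ∈ D, ∀ u ∈ BL, cz M u (Q e) = 0
  pq : ∀ e ∈ D, cz M (P e) (Q e) = 1
  pi : ∀ e ∈ D, ∀ f ∈ D, P e = P f → e = f
  qi : ∀ e ∈ D, ∀ f ∈ D, Q e = Q f → e = f
  s : ∀ e ∈ D, ∃ s < W, P e = σ + Fin.ofNat n s

theorem Far.sig {M : OmegaBC n d} {D : Finset (Fin n × Fin n)} {BL BR : Finset (Fin n)}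
    {σ : Fin n} {P Q : Fin n × Fin n → Fin n} (F : Far W M D BL BR σ P Q) (k : Clos W H H' A B)
    {l : ℕ} {e} (he : e ∈ D) (h : P e ∈ A l) : σ ∈ A (l + 1) := by
  obtain ⟨s, hs, hP⟩ := F.s e he
  have z := k.mA 0 l (Nat.zero_le _) k.z
  have := k.hm l _ _ _ s h z z hs
  rw [hP] at this
  simpa using this

theorem Far.row {M : OmegaBC n d} {D : Finset (Fin n × Fin n)} {BL BR : Finset (Fin n)}
    {σ : Fin n} {P Q : Fin n × Fin n → Fin n} (F : Far W M D BL BR σ P Q) (k : Clos W H H' A B)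
    {l : ℕ} {e} (he : e ∈ D) (h : σ ∈ A l) : P e ∈ A (l + 1) := by
  obtain ⟨s, hs, hP⟩ := F.s e he
  have z := k.mA 0 l (Nat.zero_le _) k.z
  have := k.hp l _ _ _ s h z z hs
  rw [hP]
  simpa using this

/-- The switching is recoverable from `M` outside a known block, the double edges, the base `σ`
of the window and one parking row `z`. -/
def Comp (W : ℕ) (M : OmegaBC n d) (D : Finset (Fin n × Fin n)) (σ z i i' j j' : Fin n) : Prop :=
  ∀ (H H' : OmegaBC n d) (A B : ℕ → Finset (Fin n)) (l : ℕ), Clos W H H' A B →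
    Agr H M (A l) (B l) → (∀ f ∈ D, f.1 ∈ A l ∧ f.2 ∈ B l) → σ ∈ A l → z ∈ A l →
    i ∈ A (l + 5) ∧ i' ∈ A (l + 5) ∧ j ∈ B (l + 5) ∧ j' ∈ B (l + 5)

/-- The parking function which agrees with `P` on `S` and with `x` elsewhere. -/
def mix (S : Finset (Fin n × Fin n)) (P x : Fin n × Fin n → Fin n) (e : Fin n × Fin n) : Fin n :=
  if e ∈ S then P e else x e

/-- The double edges and their parking positions avoid the auxiliary ones. -/
structure Base (M : OmegaBC n d) (x y : Fin n × Fin n → Fin n) (BL BR : Finset (Fin n)) :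
    Prop where
  d1 : ∀ e ∈ dbl M, e.1 ∈ BL
  d2 : ∀ e ∈ dbl M, e.2 ∈ BR
  bx : ∀ e ∈ dbl M, x e ∈ BL
  bY : ∀ e ∈ dbl M, y e ∈ BR

theorem PV.mix {M : OmegaBC n d} (v : PV (cz M) (dbl M) x y) {BL BR : Finset (Fin n)}
    (b : Base M x y BL BR) {σ : Fin n} {P Q : Fin n × Fin n → Fin n}
    (F : Far W M (dbl M) BL BR σ P Q) (S : Finset (Fin n × Fin n)) :
    PV (cz M) (dbl M) (mix S P x) (mix S Q y) where
  xi e he f hf h := by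
    unfold _root_.mix at h
    split_ifs at h
    · exact F.pi e he f hf h
    · exact absurd (h ▸ b.bx f hf) (F.pl e he)
    · exact absurd (h.symm ▸ b.bx e he) (F.pl f hf)
    · exact v.xi e he f hf h
  yi e he f hf h := by
    unfold _root_.mix at h
    split_ifs at h
    · exact F.qi e he f hf h
    · exact absurd (h ▸ b.bY f hf) (F.qr e he)
    · exact absurd (h.symm ▸ b.bY e he) (F.qr f hf)
    · exact v.yi e he f hf h
  xn e he f hf h := by
    unfold _root_.mix at h
    split_ifs at h
    · exact F.pl e he (h ▸ b.d1 f hf)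
    · exact v.xn e he f hf h
  yn e he f hf h := by
    unfold _root_.mix at h
    split_ifs at h
    · exact F.qr e he (h ▸ b.d2 f hf)
    · exact v.yn e he f hf h
  x0 e he := by
    unfold _root_.mix
    split_ifs
    · exact F.p0 e he _ (b.d2 e he)
    · exact v.x0 e he
  y0 e he := by
    unfold _root_.mix
    split_ifs
    · exact F.q0 e he _ (b.d1 e he)
    · exact v.y0 e he
  xy e he := by
    unfold _root_.mix
    split_ifs
    · exact F.pq e he
    · exact v.xy e he
  pos := v.pos

/-- Every transition moving a parked edge to its auxiliary position determines the four graphs,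
given all the parking rows except the one being vacated. -/
theorem Cfg.stageKn (c : Cfg G₁ M₁ G₂ M₂ x y x' y' i i' j j') {BL BR : Finset (Fin n)}
    (b : Base M₁ x y BL BR) {σ z : Fin n} {P Q : Fin n × Fin n → Fin n}
    (F : Far W M₁ (dbl M₁) BL BR σ P Q) (hz : (∃ f ∈ dbl M₁, z = x f) ∨ ∃ f ∈ dbl M₂, z = x' f)
    (C : Comp W M₁ (dbl M₁) σ z i i' j j') {S : Finset (Fin n × Fin n)} {e : Fin n × Fin n}
    (he : e ∈ dbl M₁) (k : Clos W H H' A B) {X : OmegaBC n d} (hX : X = H ∨ X = H')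
    (cX : cz X = park (cz M₁) (dbl M₁) (mix S P x) (mix S Q y))
    (h0 : ∀ f ∈ dbl M₁, f ≠ e → x f ∈ A 0) (h0' : ∀ f ∈ dbl M₂, x' f ∈ A 0)
    (e1 : e.1 ∈ A 2) (e2 : e.2 ∈ B 2) (ex : x e ∈ A 2) (ey : y e ∈ B 2) (eP : P e ∈ A 0)
    (eQ : Q e ∈ B 2) :
    Agr H G₁ (A 14) (B 14) ∧ Agr H M₁ (A 14) (B 14) ∧ Agr H G₂ (A 14) (B 14) ∧
      Agr H M₂ (A 14) (B 14) := by
  have pv := c.v1.mix b F S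
  have nA : ∀ l u v, v ∈ B l → cz X u v ≠ 0 → u ∈ A (l + 1) := fun l u v h h' =>
    k.nA l u v h (by rcases hX with rfl | rfl <;> simp [h'])
  have nB : ∀ l u v, u ∈ A l → cz X u v ≠ 0 → v ∈ B (l + 1) := fun l u v h h' =>
    k.nB l u v h (by rcases hX with rfl | rfl <;> simp [h'])
  have sig : σ ∈ A 1 := F.sig k he eP
  have hP : ∀ f ∈ dbl M₁, P f ∈ A 2 := fun f hf => F.row k hf sig
  have uA : ∀ {l l' : ℕ} (_ : l ≤ l') {u : Fin n}, u ∈ A l → u ∈ A l' := by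
    intro l l' h u hu; exact k.mA _ _ h hu
  have uB : ∀ {l l' : ℕ} (_ : l ≤ l') {u : Fin n}, u ∈ B l → u ∈ B l' := by
    intro l l' h u hu; exact k.mB _ _ h hu
  have all : ∀ f ∈ dbl M₁, (f.1 ∈ A 5 ∧ x f ∈ A 5 ∧ P f ∈ A 5) ∧ f.2 ∈ B 5 ∧ y f ∈ B 5 ∧
      Q f ∈ B 5 := by
    intro f hf
    by_cases hfe : f = e
    · subst hfe
      exact ⟨⟨uA (by omega) e1, uA (by omega) ex, uA (by omega) eP⟩, uB (by omega) e2,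
        uB (by omega) ey, uB (by omega) eQ⟩
    have hx0 := h0 f hf hfe
    have ed : cz X f.1 f.2 ≠ 0 := by
      rw [cX, park_edge pv hf, mem_dbl_cz.1 hf]; norm_num
    have xe : cz X (mix S P x f) f.2 ≠ 0 := by
      rw [cX, park_x_snd pv hf]; norm_num
    have ye : cz X f.1 (mix S Q y f) ≠ 0 := by
      rw [cX, park_fst_y pv hf]; norm_num
    by_cases hS : f ∈ S
    · simp only [mix, hS, if_true] at xe ye
      have f2 : f.2 ∈ B 3 := nB 2 _ _ (hP f hf) xe
      have f1 : f.1 ∈ A 4 := nA 3 _ _ f2 ed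
      have fq : Q f ∈ B 5 := nB 4 _ _ f1 ye
      have fy : y f ∈ B 1 := by
        refine nB 0 _ _ hx0 ?_
        rw [cX, park_loc (Or.inl fun g hg => ⟨c.v1.xn f hf g hg, fun hh => ?_⟩), c.v1.xy f hf]
        · norm_num
        · unfold mix at hh
          split_ifs at hh with hg'
          · exact F.pl g hg (hh ▸ b.bx f hf)
          · exact hg' (c.v1.xi f hf g hg hh ▸ hS)
      exact ⟨⟨uA (by omega) f1, uA (by omega) hx0, uA (by omega) (hP f hf)⟩, uB (by omega) f2,
        uB (by omega) fy, fq⟩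
    · simp only [mix, hS, if_false] at xe ye
      have f2 : f.2 ∈ B 1 := nB 0 _ _ hx0 xe
      have f1 : f.1 ∈ A 2 := nA 1 _ _ f2 ed
      have fy : y f ∈ B 3 := nB 2 _ _ f1 ye
      have fq : Q f ∈ B 3 := by
        refine nB 2 _ _ (hP f hf) ?_
        rw [cX, park_loc (Or.inl fun g hg => ⟨fun hh => F.pl f hf (by rw [hh]; exact b.d1 g hg), fun hh => ?_⟩),
          F.pq f hf]
        · norm_num
        · unfold mix at hh
          split_ifs at hh with hg'
          · exact hS (F.pi f hf g hg hh ▸ hg')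
          · exact F.pl f hf (hh ▸ b.bx g hg)
      exact ⟨⟨uA (by omega) f1, uA (by omega) hx0, uA (by omega) (hP f hf)⟩, uB (by omega) f2,
        uB (by omega) fy, uB (by omega) fq⟩
  have hXM : ∀ u v, cz X u v ≠ cz M₁ u v → u ∈ A 5 ∧ v ∈ B 5 := by
    intro u v h
    rw [cX] at h
    obtain ⟨⟨f, hf, q⟩, g, hg, q'⟩ := park_ne h
    obtain ⟨⟨r1, r2, r3⟩, -⟩ := all f hf
    obtain ⟨-, r4, r5, r6⟩ := all g hg
    constructor
    · rcases q with rfl | rfl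
      · exact r1
      · unfold mix; split_ifs <;> assumption
    · rcases q' with rfl | rfl
      · exact r4
      · unfold mix; split_ifs <;> assumption
  have hH : Agr H M₁ (A 5) (B 5) := by
    intro u v h
    by_cases hh : cz H u v = cz H' u v
    · refine hXM u v fun h' => h ?_
      rcases hX with rfl | rfl
      · exact h'.symm
      · rw [← h', hh]
    · exact ⟨uA (by omega) (k.tA u v hh), uB (by omega) (k.tB u v hh)⟩
  have zA : z ∈ A 5 := by
    rcases hz with ⟨f, hf, rfl⟩ | ⟨f, hf, rfl⟩
    · exact (all f hf).1.2.1
    · exact uA (by omega) (h0' f hf)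
  obtain ⟨q1, q2, q3, q4⟩ := C H H' A B 5 k hH (fun f hf => ⟨(all f hf).1.1, (all f hf).2.1⟩)
    (uA (by omega) sig) zA
  refine c.fin k (l := 10) (by norm_num)
    (fun u v h => ⟨uA (by omega) (hH u v h).1, uB (by omega) (hH u v h).2⟩)
    (fun f hf => ?_) (fun f hf => uA (by omega) (h0' f hf)) q1 q2 q3 q4
  exact ⟨uA (by omega) (all f hf).1.1, uB (by omega) (all f hf).2.1, uA (by omega) (all f hf).1.2.1⟩

end cfg

/-! ### The walk to the auxiliary parking positions -/

section stage
variable {n d : ℕ} {G₁ M₁ G₂ M₂ : OmegaBC n d} {x y x' y' : Fin n × Fin n → Fin n}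
  {i i' j j' : Fin n}

theorem park_mix_insert {M : Fin n → Fin n → ℤ} {D S : Finset (Fin n × Fin n)}
    {x y P Q : Fin n × Fin n → Fin n} {e : Fin n × Fin n} (he : e ∈ D) (hS : e ∉ S) (u v : Fin n) :
    park M D (mix (insert e S) P x) (mix (insert e S) Q y) u v =
      park M D (mix S P x) (mix S Q y) u v - rk e.1 (P e) (y e) (Q e) u v -
        rk (x e) (P e) e.2 (y e) u v := by
  unfold park
  rw [← Finset.add_sum_erase D _ he, ← Finset.add_sum_erase D
    (fun e => rk e.1 (mix S P x e) e.2 (mix S Q y e) u v) he]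
  have : ∑ g ∈ D.erase e, rk g.1 (mix (insert e S) P x g) g.2 (mix (insert e S) Q y g) u v =
      ∑ g ∈ D.erase e, rk g.1 (mix S P x g) g.2 (mix S Q y g) u v := by
    refine Finset.sum_congr rfl fun g hg => ?_
    have hge : g ≠ e := (Finset.mem_erase.1 hg).1
    simp [mix, hge]
  rw [this]
  simp only [mix, Finset.mem_insert_self, if_true, hS, if_false]
  unfold rk
  ring

variable [NeZero n] {W : ℕ} {H H' : OmegaBC n d} {A B : ℕ → Finset (Fin n)}

theorem Clos.touch (k : Clos W H H' A B) {a a' b b' : Fin n} (ha : a ≠ a') (hb : b ≠ b')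
    (h : ∀ u v, cz H' u v = cz H u v - rk a a' b b' u v) :
    (a ∈ A 0 ∧ a' ∈ A 0) ∧ b ∈ B 0 ∧ b' ∈ B 0 := by
  have h1 : cz H a b ≠ cz H' a b := by
    rw [h]; simp [rk, dl_ne ha, dl_ne hb]; omega
  have h2 : cz H a' b' ≠ cz H' a' b' := by
    rw [h]; simp [rk, dl_ne ha.symm, dl_ne hb.symm]; omega
  exact ⟨⟨k.tA _ _ h1, k.tA _ _ h2⟩, k.tB _ _ h1, k.tB _ _ h2⟩

theorem Cfg.stage (c : Cfg G₁ M₁ G₂ M₂ x y x' y' i i' j j') {BL BR : Finset (Fin n)}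
    (b : Base M₁ x y BL BR) {σ z : Fin n} {P Q : Fin n × Fin n → Fin n}
    (F : Far W M₁ (dbl M₁) BL BR σ P Q) (hz : (∃ f ∈ dbl M₁, z = x f) ∨ ∃ f ∈ dbl M₂, z = x' f)
    (C : Comp W M₁ (dbl M₁) σ z i i' j j') {K : ℕ}
    (hK : (dbl M₁).card + (dbl M₂).card ≤ K + 1) (S : Finset (Fin n × Fin n)) :
    S ⊆ dbl M₁ → ∃ X, cz X = park (cz M₁) (dbl M₁) (mix S P x) (mix S Q y) ∧
      Walk (RT W K G₁ M₁ G₂ M₂) (2 * S.card) G₁ X := by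
  have cov : ∀ u v, cz M₁ u v = 2 → (u, v) ∈ dbl M₁ := fun u v h => mem_dbl_cz.2 h
  induction S using Finset.induction_on with
  | empty =>
    intro _
    refine ⟨G₁, ?_, Walk.nil _⟩
    rw [c.g1]
    rfl
  | insert e S heS ih =>
    intro hS
    obtain ⟨X, cX, w⟩ := ih fun f hf => hS (Finset.mem_insert_of_mem hf)
    have he : e ∈ dbl M₁ := hS (Finset.mem_insert_self _ _)
    have pv := c.v1.mix b F S
    have pv' := c.v1.mix b F (insert e S)
    have sX : IsSimpleG X := by
      obtain ⟨Y, hY, sY⟩ := park_graph pv c.t1 cov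
      rwa [cz_inj (cX.trans hY.symm)]
    obtain ⟨X', cX', sX'⟩ := park_graph pv' c.t1 cov
    have hXX : ∀ u v, cz X' u v = cz X u v - rk e.1 (P e) (y e) (Q e) u v -
        rk (x e) (P e) e.2 (y e) u v := by
      intro u v
      rw [cX', cX, park_mix_insert he heS]
    have eP : e.1 ≠ P e := fun h => F.pl e he (h ▸ b.d1 e he)
    have ex : e.1 ≠ x e := (c.v1.xn e he e he).symm
    have xP : x e ≠ P e := fun h => F.pl e he (h ▸ b.bx e he)
    have yQ : y e ≠ Q e := fun h => F.qr e he (h ▸ b.bY e he)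
    have ey : e.2 ≠ y e := (c.v1.yn e he e he).symm
    -- the intermediate graph is simple: its row `e.1` is that of `X'`, its row `P e` is explicit
    have mid : ∀ u v, 0 ≤ cz X u v - rk e.1 (P e) (y e) (Q e) u v ∧
        cz X u v - rk e.1 (P e) (y e) (Q e) u v ≤ 1 := by
      intro u v
      by_cases h1 : u = e.1
      · subst h1
        have : cz X e.1 v - rk e.1 (P e) (y e) (Q e) e.1 v = cz X' e.1 v := by
          rw [hXX]
          have : rk (x e) (P e) e.2 (y e) e.1 v = 0 := by
            unfold rk; rw [dl_ne eP, dl_ne ex]; ring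
          rw [this, sub_zero]
        rw [this]
        exact ⟨cz_nonneg _ _ _, simple_cz sX' _ _⟩
      by_cases h2 : u = P e
      · subst h2
        have hM : cz X (P e) v = cz M₁ (P e) v := by
          rw [cX, park_loc (Or.inl fun g hg =>
            ⟨fun hh => F.pl e he (by rw [hh]; exact b.d1 g hg), fun hh => ?_⟩)]
          unfold mix at hh
          split_ifs at hh with hg'
          · exact heS (F.pi e he g hg hh ▸ hg')
          · exact F.pl e he (by rw [hh]; exact b.bx g hg)
        have hr : rk e.1 (P e) (y e) (Q e) (P e) v = dl v (Q e) - dl v (y e) := by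
          unfold rk; rw [dl_self, dl_ne eP.symm]; ring
        rw [hM, hr]
        by_cases v1 : v = y e
        · subst v1
          rw [F.p0 e he _ (b.bY e he), dl_self, dl_ne yQ]; norm_num
        by_cases v2 : v = Q e
        · subst v2
          rw [F.pq e he, dl_self, dl_ne yQ.symm]; norm_num
        rw [dl_ne v1, dl_ne v2]
        have := cz_nonneg M₁ (P e) v
        have := c.t1 (P e) v
        have : cz M₁ (P e) v ≠ 2 := fun h => F.pl e he (b.d1 _ (cov _ _ h))
        omega
      · have : rk e.1 (P e) (y e) (Q e) u v = 0 := by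
          unfold rk; rw [dl_ne h1, dl_ne h2]; ring
        rw [this, sub_zero]
        exact ⟨cz_nonneg _ _ _, simple_cz sX _ _⟩
    obtain ⟨Y, hY⟩ := of_int ((cz_reg X).sub_rk e.1 (P e) (y e) (Q e)) fun u v => (mid u v).1
    have sY : IsSimpleG Y := simple_of fun u v => by rw [hY]; exact (mid u v).2
    have hY1 : ∀ u v, cz Y u v = cz X u v - rk e.1 (P e) (y e) (Q e) u v := fun u v => by rw [hY]
    have hY2 : ∀ u v, cz X' u v = cz Y u v - rk (x e) (P e) e.2 (y e) u v := fun u v => by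
      rw [hXX, hY1]
    have need : (((dbl M₁).erase e).image x ∪ (dbl M₂).image x').card ≤ K := by
      refine (Finset.card_union_le _ _).trans ?_
      have q1 := Finset.card_image_le (s := (dbl M₁).erase e) (f := x)
      have q2 := Finset.card_image_le (s := dbl M₂) (f := x')
      have q3 := Finset.card_erase_add_one he
      omega
    have nd1 : ∀ A0 : Finset (Fin n), ((dbl M₁).erase e).image x ∪ (dbl M₂).image x' ⊆ A0 →
        (∀ f ∈ dbl M₁, f ≠ e → x f ∈ A0) ∧ ∀ f ∈ dbl M₂, x' f ∈ A0 := by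
      intro A0 h
      exact ⟨fun f hf hfe => h (Finset.mem_union_left _
        (Finset.mem_image_of_mem _ (Finset.mem_erase.2 ⟨hfe, hf⟩))),
        fun f hf => h (Finset.mem_union_right _ (Finset.mem_image_of_mem _ hf))⟩
    have r1 : RT W K G₁ M₁ G₂ M₂ X Y := by
      refine ⟨simpleAdj_of sX sY eP yQ hY1, _, need, fun A B k hn => ?_⟩
      obtain ⟨m1, m2⟩ := nd1 _ hn
      obtain ⟨⟨t1, t2⟩, t3, t4⟩ := k.touch eP yQ hY1
      have e2 : e.2 ∈ B 1 := k.nB 0 _ _ t1 (Or.inl (by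
        rw [cX, park_edge pv he, mem_dbl_cz.1 he]; norm_num))
      have exA : x e ∈ A 2 := k.nA 1 _ _ e2 (Or.inl (by
        have := park_x_snd pv he
        simp only [mix, heS, if_false] at this
        rw [cX, this]; norm_num))
      exact c.stageKn b F hz C he k (Or.inl rfl) cX m1 m2 (k.mA 0 2 (by omega) t1)
        (k.mB 1 2 (by omega) e2) exA (k.mB 0 2 (by omega) t3) t2 (k.mB 0 2 (by omega) t4)
    have r2 : RT W K G₁ M₁ G₂ M₂ Y X' := by
      refine ⟨simpleAdj_of sY sX' xP ey hY2, _, need, fun A B k hn => ?_⟩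
      obtain ⟨m1, m2⟩ := nd1 _ hn
      obtain ⟨⟨t1, t2⟩, t3, t4⟩ := k.touch xP ey hY2
      have e1 : e.1 ∈ A 1 := k.nA 0 _ _ t3 (Or.inr (by
        rw [cX', park_edge pv' he, mem_dbl_cz.1 he]; norm_num))
      have eQ : Q e ∈ B 2 := k.nB 1 _ _ e1 (Or.inr (by
        have := park_fst_y pv' he
        simp only [mix, Finset.mem_insert_self, if_true] at this
        rw [cX', this]; norm_num))
      exact c.stageKn b F hz C he k (Or.inr rfl) cX' m1 m2 (k.mA 1 2 (by omega) e1)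
        (k.mB 0 2 (by omega) t3) (k.mA 0 2 (by omega) t1) (k.mB 0 2 (by omega) t4) t2 eQ
    refine ⟨X', cX', ?_⟩
    have := w.trans ((Walk.single r1).trans (Walk.single r2))
    rwa [Finset.card_insert_of_notMem heS]

end stage

/-! ### Connecting the two parked graphs -/

section setup
variable {n d : ℕ} {G₁ M₁ G₂ M₂ : OmegaBC n d} {x y x' y' : Fin n × Fin n → Fin n}
  {i i' j j' : Fin n}

theorem mix_self {M : Fin n → Fin n → ℤ} {D : Finset (Fin n × Fin n)} (P Q x y) :
    park M D (mix D P x) (mix D Q y) = park M D P Q := by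
  funext u v
  unfold park
  congr 1
  refine Finset.sum_congr rfl fun e he => ?_
  simp [mix, he]

/-- Passing to a family of edges `D'` mapped injectively to the indexing family `D`. -/
theorem Far.pv {M M' : OmegaBC n d} [NeZero n] {W : ℕ} {D D' : Finset (Fin n × Fin n)}
    {BL BR : Finset (Fin n)}
    {σ : Fin n} {P Q : Fin n × Fin n → Fin n} (F : Far W M D BL BR σ P Q)
    {φ : Fin n × Fin n → Fin n × Fin n} (hφ : ∀ f ∈ D', φ f ∈ D)
    (inj : ∀ f ∈ D', ∀ g ∈ D', φ f = φ g → f = g)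
    (hr : ∀ u v, u ∉ BL → cz M' u v = cz M u v) (hc : ∀ u v, v ∉ BR → cz M' u v = cz M u v)
    (h1 : ∀ f ∈ D', f.1 ∈ BL) (h2 : ∀ f ∈ D', f.2 ∈ BR) (pos : ∀ f ∈ D', 1 ≤ cz M' f.1 f.2) :
    PV (cz M') D' (fun f => P (φ f)) (fun f => Q (φ f)) where
  xi e he f hf h := inj e he f hf (F.pi _ (hφ e he) _ (hφ f hf) h)
  yi e he f hf h := inj e he f hf (F.qi _ (hφ e he) _ (hφ f hf) h)
  xn e he f hf h := F.pl _ (hφ e he) (by rw [h]; exact h1 f hf)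
  yn e he f hf h := F.qr _ (hφ e he) (by rw [h]; exact h2 f hf)
  x0 e he := by rw [hr _ _ (F.pl _ (hφ e he))]; exact F.p0 _ (hφ e he) _ (h2 e he)
  y0 e he := by rw [hc _ _ (F.qr _ (hφ e he))]; exact F.q0 _ (hφ e he) _ (h1 e he)
  xy e he := by rw [hr _ _ (F.pl _ (hφ e he))]; exact F.pq _ (hφ e he)
  pos := pos

theorem Far.comp {M M' : OmegaBC n d} [NeZero n] {W : ℕ} {D D' : Finset (Fin n × Fin n)}
    {BL BR : Finset (Fin n)}
    {σ : Fin n} {P Q : Fin n × Fin n → Fin n} (F : Far W M D BL BR σ P Q)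
    {φ : Fin n × Fin n → Fin n × Fin n} (hφ : ∀ f ∈ D', φ f ∈ D)
    (inj : ∀ f ∈ D', ∀ g ∈ D', φ f = φ g → f = g)
    (hr : ∀ u v, u ∉ BL → cz M' u v = cz M u v) (hc : ∀ u v, v ∉ BR → cz M' u v = cz M u v) :
    Far W M' D' BL BR σ (fun f => P (φ f)) (fun f => Q (φ f)) where
  pl e he := F.pl _ (hφ e he)
  qr e he := F.qr _ (hφ e he)
  p0 e he v hv := by rw [hr _ _ (F.pl _ (hφ e he))]; exact F.p0 _ (hφ e he) v hv
  q0 e he u hu := by rw [hc _ _ (F.qr _ (hφ e he))]; exact F.q0 _ (hφ e he) u hu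
  pq e he := by rw [hr _ _ (F.pl _ (hφ e he))]; exact F.pq _ (hφ e he)
  pi e he f hf h := inj e he f hf (F.pi _ (hφ e he) _ (hφ f hf) h)
  qi e he f hf h := inj e he f hf (F.qi _ (hφ e he) _ (hφ f hf) h)
  s e he := F.s _ (hφ e he)

/-- A configuration together with the auxiliary positions for the double edges of `M₁`. The
bounds on `K` allow for the parking rows of all double edges but one. -/
structure Setup [NeZero n] (W K : ℕ) (G₁ M₁ G₂ M₂ : OmegaBC n d) (x y x' y' : Fin n × Fin n → Fin n)
    (i i' j j' : Fin n) (BL BR : Finset (Fin n)) (σ : Fin n) (P Q : Fin n × Fin n → Fin n) :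
    Prop where
  c : Cfg G₁ M₁ G₂ M₂ x y x' y' i i' j j'
  F : Far W M₁ (dbl M₁) BL BR σ P Q
  b : Base M₁ x y BL BR
  b' : Base M₂ x' y' BL BR
  ai : i ∈ BL
  ai' : i' ∈ BL
  bj : j ∈ BR
  bj' : j' ∈ BR
  hW : 0 < W
  hK : (dbl M₁).card + (dbl M₂).card ≤ K + 1

variable [NeZero n] {W K : ℕ} {BL BR : Finset (Fin n)} {σ : Fin n} {P Q : Fin n × Fin n → Fin n}

theorem Setup.row (s : Setup W K G₁ M₁ G₂ M₂ x y x' y' i i' j j' BL BR σ P Q) {u v : Fin n}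
    (hu : u ∉ BL) : cz M₂ u v = cz M₁ u v := by
  have h1 : u ≠ i := fun h => hu (h ▸ s.ai)
  have h2 : u ≠ i' := fun h => hu (h ▸ s.ai')
  rw [s.c.e, rk, dl_ne h1, dl_ne h2]; ring

theorem Setup.col (s : Setup W K G₁ M₁ G₂ M₂ x y x' y' i i' j j' BL BR σ P Q) {u v : Fin n}
    (hv : v ∉ BR) : cz M₂ u v = cz M₁ u v := by
  have h1 : v ≠ j := fun h => hv (h ▸ s.bj)
  have h2 : v ≠ j' := fun h => hv (h ▸ s.bj')
  rw [s.c.e, rk, dl_ne h1, dl_ne h2]; ring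

/-- A transition between the two parked graphs determines everything as soon as the switching
and one auxiliary position are recoverable. -/
theorem Setup.midRT (s : Setup W K G₁ M₁ G₂ M₂ x y x' y' i i' j j' BL BR σ P Q)
    {e₀ : Fin n × Fin n} (he₀ : e₀ ∈ dbl M₁) {X Y : OmegaBC n d}
    {a a' b b' : Fin n} (ha : a ≠ a') (hb : b ≠ b')
    (sX : IsSimpleG X) (sY : IsSimpleG Y) (hXY : ∀ u v, cz Y u v = cz X u v - rk a a' b b' u v)
    {M : OmegaBC n d}
    (hM : ∀ u v, cz M u v ≠ cz M₁ u v → (u = i ∨ u = i') ∧ (v = j ∨ v = j'))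
    {D : Finset (Fin n × Fin n)} {φ : Fin n × Fin n → Fin n × Fin n}
    (cX : cz X = park (cz M) D (fun f => P (φ f)) (fun f => Q (φ f)))
    (pv : PV (cz M) D (fun f => P (φ f)) (fun f => Q (φ f))) (hφ : ∀ f ∈ D, φ f ∈ dbl M₁)
    (hD : ∀ f ∈ D, cz M f.1 f.2 = 2 ∨ f.1 = i ∨ f.1 = i')
    (hD1 : ∀ f ∈ dbl M₁, f ∈ D ∨ ((f.1 = i ∨ f.1 = i') ∧ (f.2 = j ∨ f.2 = j')))
    (hσ : σ = i' + x e₀ ∨ σ = i + i' + x e₀)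
    (hk : ∀ A B, Clos W X Y A B → a ∈ A 0 → a' ∈ A 0 → b ∈ B 0 → b' ∈ B 0 →
      (i ∈ A 4 ∧ i' ∈ A 4 ∧ j ∈ B 4 ∧ j' ∈ B 4) ∧ ∃ e ∈ dbl M₁, P e ∈ A 4) :
    RT W K G₁ M₁ G₂ M₂ X Y := by
  refine ⟨simpleAdj_of sX sY ha hb hXY, ((dbl M₁).erase e₀).image x ∪ (dbl M₂).image x', ?_,
    fun A B k hn => ?_⟩
  · refine (Finset.card_union_le _ _).trans ?_
    have q1 := Finset.card_image_le (s := (dbl M₁).erase e₀) (f := x)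
    have q2 := Finset.card_image_le (s := dbl M₂) (f := x')
    have q3 := Finset.card_erase_add_one he₀
    have := s.hK
    omega
  obtain ⟨⟨t1, t2⟩, t3, t4⟩ := k.touch ha hb hXY
  obtain ⟨⟨k1, k2, k3, k4⟩, e, he, hPe⟩ := hk A B k t1 t2 t3 t4
  have uA : ∀ {l l' : ℕ} (_ : l ≤ l') {u : Fin n}, u ∈ A l → u ∈ A l' := by
    intro l l' h u hu; exact k.mA _ _ h hu
  have uB : ∀ {l l' : ℕ} (_ : l ≤ l') {u : Fin n}, u ∈ B l → u ∈ B l' := by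
    intro l l' h u hu; exact k.mB _ _ h hu
  have sg : σ ∈ A 5 := s.F.sig k he hPe
  have hP : ∀ f ∈ dbl M₁, P f ∈ A 6 := fun f hf => s.F.row k hf sg
  have hz : x e₀ ∈ A 6 := by
    have z0 := uA (Nat.zero_le 5) k.z
    rcases hσ with h | h
    · have := k.hm 5 σ i' 0 0 sg (uA (by omega) k2) z0 s.hW
      rw [h] at this
      simpa using this
    · have := k.hm 5 σ i i' 0 sg (uA (by omega) k1) (uA (by omega) k2) s.hW
      rw [h] at this
      have e : i + i' + x e₀ - i - i' - Fin.ofNat n 0 = x e₀ := by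
        have : (Fin.ofNat n 0 : Fin n) = 0 := by simp
        rw [this]; abel
      rwa [e] at this
  have hx : ∀ f ∈ dbl M₁, x f ∈ A 6 := by
    intro f hf
    by_cases h : f = e₀
    · rwa [h]
    · exact uA (by omega) (hn (Finset.mem_union_left _
        (Finset.mem_image_of_mem _ (Finset.mem_erase.2 ⟨h, hf⟩))))
  have hx' : ∀ f ∈ dbl M₂, x' f ∈ A 6 := fun f hf =>
    uA (by omega) (hn (Finset.mem_union_right _ (Finset.mem_image_of_mem _ hf)))
  have i9 : ∀ u, (u = i ∨ u = i') → u ∈ A 8 := by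
    rintro u (h | h) <;> rw [h]
    · exact uA (by omega) k1
    · exact uA (by omega) k2
  have j9 : ∀ u, (u = j ∨ u = j') → u ∈ B 9 := by
    rintro u (h | h) <;> rw [h]
    · exact uB (by omega) k3
    · exact uB (by omega) k4
  have all : ∀ f ∈ D, (f.1 ∈ A 9 ∧ P (φ f) ∈ A 9) ∧ f.2 ∈ B 9 ∧ Q (φ f) ∈ B 9 := by
    intro f hf
    have p6 := hP _ (hφ f hf)
    have f2 : f.2 ∈ B 7 := k.nB 6 _ _ p6 (Or.inl (by rw [cX, park_x_snd pv hf]; norm_num))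
    have f1 : f.1 ∈ A 8 := by
      rcases hD f hf with h | h
      · exact k.nA 7 _ _ f2 (Or.inl (by rw [cX, park_edge pv hf, h]; norm_num))
      · exact i9 _ h
    have fq : Q (φ f) ∈ B 9 :=
      k.nB 8 _ _ f1 (Or.inl (by rw [cX, park_fst_y pv hf]; norm_num))
    exact ⟨⟨uA (by omega) f1, uA (by omega) p6⟩, uB (by omega) f2, fq⟩
  have hX : Agr X M₁ (A 9) (B 9) := by
    intro u v h
    by_cases e1 : cz M u v = cz M₁ u v
    · rw [← e1, cX] at h
      obtain ⟨⟨f, hf, q⟩, g, hg, q'⟩ := park_ne h.symm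
      constructor
      · rcases q with rfl | rfl
        · exact (all f hf).1.1
        · exact (all f hf).1.2
      · rcases q' with rfl | rfl
        · exact (all g hg).2.1
        · exact (all g hg).2.2
    · exact ⟨uA (by omega) (i9 _ (hM u v e1).1), j9 _ (hM u v e1).2⟩
  refine s.c.fin k (l := 9) (by norm_num) hX (fun f hf => ?_)
    (fun f hf => uA (by omega) (hx' f hf)) (uA (by omega) k1) (uA (by omega) k2)
    (uB (by omega) k3) (uB (by omega) k4)
  rcases hD1 f hf with h | h
  · exact ⟨(all f h).1.1, (all f h).2.1, uA (by omega) (hx f hf)⟩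
  · exact ⟨uA (by omega) (i9 _ h.1), j9 _ h.2, uA (by omega) (hx f hf)⟩

/-- The parked graphs are linked to `G₁` and `G₂`, so that a walk between them suffices. -/
theorem Setup.conn (s : Setup W K G₁ M₁ G₂ M₂ x y x' y' i i' j j' BL BR σ P Q)
    {e₀ : Fin n × Fin n} (he₀ : e₀ ∈ dbl M₁) {φ : Fin n × Fin n → Fin n × Fin n}
    (hφ : ∀ f ∈ dbl M₂, φ f ∈ dbl M₁) (inj : ∀ f ∈ dbl M₂, ∀ g ∈ dbl M₂, φ f = φ g → f = g)
    (C₁ : Comp W M₁ (dbl M₁) σ (x e₀) i i' j j') (C₂ : Comp W M₂ (dbl M₂) σ (x e₀) i i' j' j)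
    (mid : ∀ X₁ X₂ : OmegaBC n d, IsSimpleG X₁ → IsSimpleG X₂ →
      cz X₁ = park (cz M₁) (dbl M₁) P Q →
      cz X₂ = park (cz M₂) (dbl M₂) (fun f => P (φ f)) (fun f => Q (φ f)) →
      PV (cz M₁) (dbl M₁) P Q →
      PV (cz M₂) (dbl M₂) (fun f => P (φ f)) (fun f => Q (φ f)) →
      ∃ l ≤ 3, Walk (RT W K G₁ M₁ G₂ M₂) l X₁ X₂) :
    ∃ l ≤ 2 * (dbl M₁).card + 3 + 2 * (dbl M₂).card, Walk (RT W K G₁ M₁ G₂ M₂) l G₁ G₂ := by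
  have F₂ : Far W M₂ (dbl M₂) BL BR σ (fun f => P (φ f)) (fun f => Q (φ f)) :=
    s.F.comp hφ inj (fun u v => s.row) (fun u v => s.col)
  have p1 := s.F.pv (M' := M₁) (D' := dbl M₁) (φ := id) (fun f hf => hf) (fun f _ g _ h => h)
    (fun _ _ _ => rfl) (fun _ _ _ => rfl) s.b.d1 s.b.d2
    (fun f hf => by rw [mem_dbl_cz.1 hf]; norm_num)
  have p2 := s.F.pv (M' := M₂) (D' := dbl M₂) hφ inj (fun u v => s.row) (fun u v => s.col)
    s.b'.d1 s.b'.d2 (fun f hf => by rw [mem_dbl_cz.1 hf]; norm_num)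
  obtain ⟨X₁, c1, s1⟩ := park_graph p1 s.c.t1 fun u v h => mem_dbl_cz.2 h
  obtain ⟨X₂, c2, s2⟩ := park_graph p2 s.c.t2 fun u v h => mem_dbl_cz.2 h
  obtain ⟨Y₁, d1, w1⟩ := s.c.stage s.b s.F (Or.inl ⟨e₀, he₀, rfl⟩) C₁ s.hK _ subset_rfl
  obtain ⟨Y₂, d2, w2⟩ := s.c.rev.stage s.b' F₂ (Or.inr ⟨e₀, he₀, rfl⟩) C₂
    (by rw [add_comm]; exact s.hK) _ subset_rfl
  rw [mix_self] at d1 d2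
  obtain rfl : X₁ = Y₁ := cz_inj (c1.trans d1.symm)
  obtain rfl : X₂ = Y₂ := cz_inj (c2.trans d2.symm)
  obtain ⟨l, hl, w⟩ := mid X₁ X₂ s1 s2 c1 c2 p1 p2
  refine ⟨_, ?_, (w1.trans w).trans (w2.rev fun a b h => h.rev)⟩
  omega

end setup

/-! ### Switchings which do not meet the double edges -/

section alpha
variable {n d : ℕ} {G₁ M₁ G₂ M₂ : OmegaBC n d} {x y x' y' : Fin n × Fin n → Fin n}
  {i i' j j' : Fin n}

theorem Cfg.corner (c : Cfg G₁ M₁ G₂ M₂ x y x' y' i i' j j') {u v : Fin n}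
    (h : cz M₂ u v ≠ cz M₁ u v) : (u = i ∨ u = i') ∧ (v = j ∨ v = j') := by
  refine rk_ne_zero fun h0 => h ?_
  rw [c.e, h0, sub_zero]

/-- An edge between vertices which are not auxiliary is still visible in a parked graph, unless
its only copy is parked. -/
theorem visible {M X : OmegaBC n d} {D : Finset (Fin n × Fin n)} {p q : Fin n × Fin n → Fin n}
    (cX : cz X = park (cz M) D p q) {BL BR : Finset (Fin n)} (hp : ∀ e ∈ D, p e ∉ BL)
    (hq : ∀ e ∈ D, q e ∉ BR) {u v : Fin n} (hu : u ∈ BL) (hv : v ∈ BR) (h : cz M u v ≠ 0)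
    (h2 : (u, v) ∈ D → cz M u v = 2) : cz X u v ≠ 0 := by
  rw [cX, park_off (fun e he hh => hp e he (by rw [← hh]; exact hu))
    (fun e he hh => hq e he (by rw [← hh]; exact hv))]
  split_ifs with hD
  · rw [h2 hD]; norm_num
  · simpa using h

variable [NeZero n] {W K : ℕ}

theorem Cfg.setup (c : Cfg G₁ M₁ G₂ M₂ x y x' y' i i' j j') {m : ℕ} (hd : 1 ≤ d)
    (h1 : (dbl M₁).card ≤ m) (h2 : (dbl M₂).card ≤ m)
    (hW : (5 * m + 2) * (1 + d + d ^ 2) = W) (hn : W ≤ n)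
    (hK : (dbl M₁).card + (dbl M₂).card ≤ K + 1) (σ : Fin n) :
    ∃ BL BR P Q, Setup W K G₁ M₁ G₂ M₂ x y x' y' i i' j j' BL BR σ P Q := by
  have cards : ∀ (D D' : Finset (Fin n × Fin n)) (f g f' g' : Fin n × Fin n → Fin n) (a b : Fin n),
      D.card ≤ m → D'.card ≤ m →
      (D.image f ∪ D.image g ∪ (D'.image f' ∪ D'.image g') ∪ {a, b}).card ≤ 4 * m + 2 := by
    intro D D' f g f' g' a b hD hD'
    have q1 := card_image_le (s := D) (f := f)
    have q2 := card_image_le (s := D) (f := g)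
    have q3 := card_image_le (s := D') (f := f')
    have q4 := card_image_le (s := D') (f := g')
    have q5 := card_union_le (D.image f) (D.image g)
    have q6 := card_union_le (D'.image f') (D'.image g')
    have q7 := card_union_le (D.image f ∪ D.image g) (D'.image f' ∪ D'.image g')
    have q8 := card_union_le (D.image f ∪ D.image g ∪ (D'.image f' ∪ D'.image g')) {a, b}
    have q9 : ({a, b} : Finset (Fin n)).card ≤ 2 := card_le_two
    omega
  obtain ⟨P, Q, a1, a2, a3⟩ := exists_aux (W := W) hd M₁ (c := fun s => σ + Fin.ofNat n s) (by
      intro s hs t ht h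
      have h' := congrArg Fin.val (add_left_cancel h)
      simp only [Fin.val_ofNat] at h'
      rwa [Nat.mod_eq_of_lt (by omega), Nat.mod_eq_of_lt (by omega)] at h') (dbl M₁) (4 * m + 2)
    ((dbl M₁).image Prod.fst ∪ (dbl M₁).image x ∪ ((dbl M₂).image Prod.fst ∪ (dbl M₂).image x') ∪
      {i, i'})
    ((dbl M₁).image Prod.snd ∪ (dbl M₁).image y ∪ ((dbl M₂).image Prod.snd ∪ (dbl M₂).image y') ∪
      {j, j'}) (cards _ _ _ _ _ _ _ _ h1 h2) (cards _ _ _ _ _ _ _ _ h1 h2) (by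
      rw [← hW]
      exact Nat.mul_le_mul_right _ (by omega))
  refine ⟨_, _, P, Q, c, ⟨fun e he => (a1 e he).1, fun e he => (a1 e he).2.1, ?_, ?_, ?_, a2, a3,
    fun e he => (a1 e he).2.2.2.2.2⟩, ⟨?_, ?_, ?_, ?_⟩, ⟨?_, ?_, ?_, ?_⟩, ?_, ?_, ?_, ?_, ?_, hK⟩
  · intro e he v hv
    unfold cz
    exact_mod_cast (a1 e he).2.2.1 v hv
  · intro e he u hu
    unfold cz
    exact_mod_cast (a1 e he).2.2.2.1 u hu
  · intro e he
    have q1 : 1 ≤ cz M₁ (P e) (Q e) := by unfold cz; exact_mod_cast (a1 e he).2.2.2.2.1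
    have q2 := c.t1 (P e) (Q e)
    have q3 : cz M₁ (P e) (Q e) ≠ 2 := fun h => (a1 e he).1 (by
      simp only [mem_union]
      exact Or.inl (Or.inl (Or.inl (mem_image_of_mem Prod.fst
        (mem_dbl_cz.2 h : (P e, Q e) ∈ dbl M₁)))))
    omega
  · intro e he
    simp only [mem_union]
    exact Or.inl (Or.inl (Or.inl (mem_image_of_mem Prod.fst he)))
  · intro e he
    simp only [mem_union]
    exact Or.inl (Or.inl (Or.inl (mem_image_of_mem Prod.snd he)))
  · intro e he
    simp only [mem_union]
    exact Or.inl (Or.inl (Or.inr (mem_image_of_mem x he)))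
  · intro e he
    simp only [mem_union]
    exact Or.inl (Or.inl (Or.inr (mem_image_of_mem y he)))
  · intro e he
    simp only [mem_union]
    exact Or.inl (Or.inr (Or.inl (mem_image_of_mem Prod.fst he)))
  · intro e he
    simp only [mem_union]
    exact Or.inl (Or.inr (Or.inl (mem_image_of_mem Prod.snd he)))
  · intro e he
    simp only [mem_union]
    exact Or.inl (Or.inr (Or.inr (mem_image_of_mem x' he)))
  · intro e he
    simp only [mem_union]
    exact Or.inl (Or.inr (Or.inr (mem_image_of_mem y' he)))
  · simp
  · simp
  · simp
  · simp
  · rw [← hW]; positivity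

theorem Clos.sub {H H' : OmegaBC n d} {A B : ℕ → Finset (Fin n)} (k : Clos W H H' A B)
    (hW : 0 < W) {l : ℕ} {u v w : Fin n} (hu : u ∈ A l) (hv : v ∈ A l) (hw : w ∈ A l) :
    u - v - w ∈ A (l + 1) := by
  have := k.hm l u v w 0 hu hv hw hW
  simpa using this

/-- A switching with some vertex adjacent to an endpoint of an edge of `D` is recoverable once `z`
and `i + i' + z` are known: the link reveals one edge of the switching, the sum the other row. -/
theorem comp_link {M M₀ : OmegaBC n d} {D : Finset (Fin n × Fin n)} (hW : 0 < W) {z : Fin n}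
    (h1 : cz M i j ≠ 0) (h2 : cz M i' j' ≠ 0)
    (hM : ∀ u v, cz M u v ≠ cz M₀ u v → (u = i ∨ u = i') ∧ (v = j ∨ v = j'))
    (link : ∃ e ∈ D, cz M₀ i e.2 ≠ 0 ∨ cz M₀ i' e.2 ≠ 0 ∨ cz M₀ e.1 j ≠ 0 ∨ cz M₀ e.1 j' ≠ 0) :
    Comp W M D (i + i' + z) z i i' j j' := by
  intro H H' A B l k hH hD hσ hz
  have uA : ∀ {l l' : ℕ} (_ : l ≤ l') {u : Fin n}, u ∈ A l → u ∈ A l' := by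
    intro l l' h u hu; exact k.mA _ _ h hu
  have uB : ∀ {l l' : ℕ} (_ : l ≤ l') {u : Fin n}, u ∈ B l → u ∈ B l' := by
    intro l l' h u hu; exact k.mB _ _ h hu
  have col : ∀ u e, e ∈ D → cz M₀ u e.2 ≠ 0 → u ∈ A (l + 1) ∨ e.2 = j ∨ e.2 = j' := by
    intro u e he h
    by_cases hh : cz M u e.2 = cz M₀ u e.2
    · exact Or.inl (k.pR hH le_rfl (hD e he).2 (hh ▸ h))
    · exact Or.inr (hM _ _ hh).2
  have row : ∀ v e, e ∈ D → cz M₀ e.1 v ≠ 0 → v ∈ B (l + 1) ∨ e.1 = i ∨ e.1 = i' := by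
    intro u e he h
    by_cases hh : cz M e.1 u = cz M₀ e.1 u
    · exact Or.inl (k.pL hH le_rfl (hD e he).1 (hh ▸ h))
    · exact Or.inr (hM _ _ hh).1
  have seed : i ∈ A (l + 1) ∨ i' ∈ A (l + 1) ∨ j ∈ B (l + 1) ∨ j' ∈ B (l + 1) := by
    obtain ⟨e, he, h⟩ := link
    have e1 := uA (Nat.le_succ l) (hD e he).1
    have e2 := uB (Nat.le_succ l) (hD e he).2
    rcases h with h | h | h | h
    · rcases col _ e he h with h | h | h
      · exact Or.inl h
      · exact Or.inr (Or.inr (Or.inl (h ▸ e2)))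
      · exact Or.inr (Or.inr (Or.inr (h ▸ e2)))
    · rcases col _ e he h with h | h | h
      · exact Or.inr (Or.inl h)
      · exact Or.inr (Or.inr (Or.inl (h ▸ e2)))
      · exact Or.inr (Or.inr (Or.inr (h ▸ e2)))
    · rcases row _ e he h with h | h | h
      · exact Or.inr (Or.inr (Or.inl h))
      · exact Or.inl (h ▸ e1)
      · exact Or.inr (Or.inl (h ▸ e1))
    · rcases row _ e he h with h | h | h
      · exact Or.inr (Or.inr (Or.inr h))
      · exact Or.inl (h ▸ e1)
      · exact Or.inr (Or.inl (h ▸ e1))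
  have two : i ∈ A (l + 3) ∧ i' ∈ A (l + 3) := by
    have f1 : i ∈ A (l + 2) → i ∈ A (l + 3) ∧ i' ∈ A (l + 3) := by
      intro h
      refine ⟨uA (by omega) h, ?_⟩
      have := k.sub hW (uA (by omega) hσ) h (uA (by omega) hz)
      rwa [show i + i' + z - i - z = i' by abel] at this
    have f2 : i' ∈ A (l + 2) → i ∈ A (l + 3) ∧ i' ∈ A (l + 3) := by
      intro h
      refine ⟨?_, uA (by omega) h⟩
      have := k.sub hW (uA (by omega) hσ) h (uA (by omega) hz)
      rwa [show i + i' + z - i' - z = i by abel] at this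
    rcases seed with h | h | h | h
    · exact f1 (uA (by omega) h)
    · exact f2 (uA (by omega) h)
    · exact f1 (k.pR hH (by omega) h h1)
    · exact f2 (k.pR hH (by omega) h h2)
  exact ⟨uA (by omega) two.1, uA (by omega) two.2,
    uB (show l + 4 ≤ l + 5 by omega) (k.pL hH (by omega) two.1 h1),
    uB (show l + 4 ≤ l + 5 by omega) (k.pL hH (by omega) two.2 h2)⟩

/-- If no double edge is created or destroyed, the parked graphs are adjacent. -/
theorem Cfg.alpha (c : Cfg G₁ M₁ G₂ M₂ x y x' y' i i' j j') {m : ℕ} (hd : 1 ≤ d)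
    (h1 : (dbl M₁).card ≤ m) (hDD : dbl M₂ = dbl M₁)
    (hW : (5 * m + 2) * (1 + d + d ^ 2) = W) (hn : W ≤ n)
    (hK : (dbl M₁).card + (dbl M₂).card ≤ K + 1)
    (link : ∃ e ∈ dbl M₁,
      cz M₁ i e.2 ≠ 0 ∨ cz M₁ i' e.2 ≠ 0 ∨ cz M₁ e.1 j ≠ 0 ∨ cz M₁ e.1 j' ≠ 0) :
    ∃ l ≤ 2 * (dbl M₁).card + 3 + 2 * (dbl M₂).card, Walk (RT W K G₁ M₁ G₂ M₂) l G₁ G₂ := by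
  obtain ⟨e, he, hl⟩ := id link
  obtain ⟨BL, BR, P, Q, s⟩ := c.setup hd h1 (hDD ▸ h1) hW hn hK (i + i' + x e)
  have c1 := c.p
  have c2 := c.p'
  have c3 := c.rev.p
  have c4 := c.rev.p'
  refine s.conn (φ := id) he (fun f hf => by rwa [← hDD]) (fun _ _ _ _ h => h)
    (comp_link s.hW (by omega) (by omega) (fun _ _ h => absurd rfl h) link)
    (comp_link (M₀ := M₁) s.hW (by omega) (by omega)
      (fun u v h => ⟨(c.corner h).1, (c.corner h).2.symm⟩) ?_) ?_
  · rw [hDD]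
    exact ⟨e, he, by tauto⟩
  · intro X₁ X₂ s1 s2 d1 d2 p1 p2
    refine ⟨1, by omega, Walk.single ?_⟩
    have vis : ∀ {u v : Fin n}, u ∈ BL → v ∈ BR → cz M₁ u v ≠ 0 → cz X₁ u v ≠ 0 :=
      fun hu hv h => visible d1 s.F.pl s.F.qr hu hv h fun hD => mem_dbl_cz.1 hD
    refine s.midRT (φ := id) he c.hi c.hj s1 s2 (fun u v => ?_) (M := M₁)
      (fun _ _ h => absurd rfl h) (D := dbl M₁) d1 p1 (fun f hf => hf)
      (fun f hf => Or.inl (mem_dbl_cz.1 hf)) (fun f hf => Or.inl hf) (Or.inr rfl)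
      fun A B k t1 t2 t3 t4 => ?_
    · rw [d1, d2, hDD]
      unfold park
      rw [c.e]
      simp only [id]
      ring
    · refine ⟨⟨k.mA 0 4 (by omega) t1, k.mA 0 4 (by omega) t2, k.mB 0 4 (by omega) t3,
        k.mB 0 4 (by omega) t4⟩, e, he, ?_⟩
      have snd : e.2 ∈ B 2 → P e ∈ A 4 := fun h => k.mA 3 4 (by omega)
        (k.nA 2 _ _ h (Or.inl (by rw [d1, park_x_snd p1 he]; norm_num)))
      have fst : e.1 ∈ A 1 → e.2 ∈ B 2 := fun h =>
        k.nB 1 _ _ h (Or.inl (by rw [d1, park_edge p1 he, mem_dbl_cz.1 he]; norm_num))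
      have b1 := s.b.d1 e he
      have b2 := s.b.d2 e he
      rcases hl with h | h | h | h
      · exact snd (k.mB 1 2 (by omega) (k.nB 0 _ _ t1 (Or.inl (vis s.ai b2 h))))
      · exact snd (k.mB 1 2 (by omega) (k.nB 0 _ _ t2 (Or.inl (vis s.ai' b2 h))))
      · exact snd (fst (k.nA 0 _ _ t3 (Or.inl (vis b1 s.bj h))))
      · exact snd (fst (k.nA 0 _ _ t4 (Or.inl (vis b1 s.bj' h))))

end alpha

/-! ### Switchings which create or destroy double edges -/

section beta
variable {n d : ℕ} {G₁ M₁ G₂ M₂ : OmegaBC n d} {x y x' y' : Fin n × Fin n → Fin n}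
  {i i' j j' : Fin n}

theorem park_insert {M : Fin n → Fin n → ℤ} {D : Finset (Fin n × Fin n)}
    {p q : Fin n × Fin n → Fin n} {f : Fin n × Fin n} (hf : f ∉ D) (u v : Fin n) :
    park M (insert f D) p q u v = park M D p q u v - rk f.1 (p f) f.2 (q f) u v := by
  unfold park
  rw [Finset.sum_insert hf]
  ring

/-- The pair `f` consists of vertices used by the switching. -/
def Cor (i i' j j' : Fin n) (f : Fin n × Fin n) : Prop :=
  (f.1 = i ∨ f.1 = i') ∧ (f.2 = j ∨ f.2 = j')

theorem Cor.cases {f : Fin n × Fin n} (h : Cor i i' j j' f) :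
    f = (i, j) ∨ f = (i', j') ∨ f = (i, j') ∨ f = (i', j) := by
  rcases f with ⟨u, v⟩
  obtain ⟨h1, h2⟩ := h
  simp only at h1 h2
  rcases h1 with rfl | rfl <;> rcases h2 with rfl | rfl <;> simp

/-- The double edges which are not affected by the switching. -/
def core (M : OmegaBC n d) (i i' j j' : Fin n) : Finset (Fin n × Fin n) :=
  (dbl M).filter fun f => ¬Cor i i' j j' f

theorem Cfg.vals (c : Cfg G₁ M₁ G₂ M₂ x y x' y' i i' j j') :
    (cz M₂ i j = cz M₁ i j - 1 ∧ cz M₂ i' j' = cz M₁ i' j' - 1) ∧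
      cz M₂ i j' = cz M₁ i j' + 1 ∧ cz M₂ i' j = cz M₁ i' j + 1 := by
  refine ⟨⟨?_, ?_⟩, ?_, ?_⟩ <;> rw [c.e, rk] <;>
    simp [dl_ne c.hi, dl_ne c.hi.symm, dl_ne c.hj, dl_ne c.hj.symm]

theorem Cfg.core_val (c : Cfg G₁ M₁ G₂ M₂ x y x' y' i i' j j') {f : Fin n × Fin n}
    (h : ¬Cor i i' j j' f) : cz M₂ f.1 f.2 = cz M₁ f.1 f.2 := by
  by_contra hh
  exact h (c.corner hh)

theorem Cfg.core₂ (c : Cfg G₁ M₁ G₂ M₂ x y x' y' i i' j j') :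
    core M₂ i i' j j' = core M₁ i i' j j' := by
  ext f
  simp only [core, mem_filter, mem_dbl_cz]
  by_cases h : Cor i i' j j' f
  · simp [h]
  · rw [c.core_val h]

theorem Cfg.corner_dbl₁ (c : Cfg G₁ M₁ G₂ M₂ x y x' y' i i' j j') {f : Fin n × Fin n}
    (h : f ∈ dbl M₁) : f ∈ core M₁ i i' j j' ∨ f = (i, j) ∨ f = (i', j') := by
  by_cases hc : Cor i i' j j' f
  · rw [mem_dbl_cz] at h
    obtain ⟨-, v1, v2⟩ := c.vals
    have t1 := c.t2 i j'
    have t2 := c.t2 i' j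
    rcases hc.cases with rfl | rfl | rfl | rfl
    · simp
    · simp
    · simp only at h; omega
    · simp only at h; omega
  · exact Or.inl (mem_filter.2 ⟨h, hc⟩)

theorem Cfg.corner_dbl₂ (c : Cfg G₁ M₁ G₂ M₂ x y x' y' i i' j j') {f : Fin n × Fin n}
    (h : f ∈ dbl M₂) : f ∈ core M₁ i i' j j' ∨ f = (i, j') ∨ f = (i', j) := by
  by_cases hc : Cor i i' j j' f
  · rw [mem_dbl_cz] at h
    obtain ⟨⟨v1, v2⟩, -⟩ := c.vals
    have t1 := c.t1 i j
    have t2 := c.t1 i' j'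
    rcases hc.cases with rfl | rfl | rfl | rfl
    · simp only at h; omega
    · simp only at h; omega
    · simp
    · simp
  · rw [← c.core₂]
    exact Or.inl (mem_filter.2 ⟨h, hc⟩)

variable [NeZero n] {W K : ℕ} {BL BR : Finset (Fin n)} {σ : Fin n} {P Q : Fin n × Fin n → Fin n}

theorem beta_comp1 {M : OmegaBC n d} {D : Finset (Fin n × Fin n)} (hW : 0 < W) {z : Fin n}
    (hij : (i, j) ∈ D) (h : cz M i' j' ≠ 0) : Comp W M D (i' + z) z i i' j j' := by
  intro H H' A B l k hH hD hσ hz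
  obtain ⟨a1, b1⟩ := hD _ hij
  have a2 : i' ∈ A (l + 1) := by
    have := k.sub hW hσ hz (k.mA 0 l (Nat.zero_le _) k.z)
    simpa using this
  exact ⟨k.mA l _ (by omega) a1, k.mA _ _ (by omega) a2, k.mB l _ (by omega) b1,
    k.mB (l + 2) _ (by omega) (k.pL hH (by omega) a2 h)⟩

theorem beta_comp2 {M : OmegaBC n d} {D : Finset (Fin n × Fin n)} (hW : 0 < W) {z : Fin n}
    (h1 : cz M i' j ≠ 0) (h2 : cz M i j ≠ 0) (h3 : cz M i j' ≠ 0) :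
    Comp W M D (i' + z) z i i' j' j := by
  intro H H' A B l k hH hD hσ hz
  have a2 : i' ∈ A (l + 1) := by
    have := k.sub hW hσ hz (k.mA 0 l (Nat.zero_le _) k.z)
    simpa using this
  have b1 : j ∈ B (l + 2) := k.pL hH (by omega) a2 h1
  have a1 : i ∈ A (l + 3) := k.pR hH (by omega) b1 h2
  have b2 : j' ∈ B (l + 4) := k.pL hH (by omega) a1 h3
  exact ⟨k.mA _ _ (by omega) a1, k.mA _ _ (by omega) a2, k.mB _ _ (by omega) b2,
    k.mB _ _ (by omega) b1⟩

/-- A family `D` of edges of `M₂` that contains all its double edges and, besides edges of the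
switching, nothing else; `φ` assigns to its members auxiliary positions. Parking all of `D` in
`M₂` gives a simple graph. -/
structure Par (M₁ M₂ : OmegaBC n d) (BL BR : Finset (Fin n)) (i i' j j' : Fin n)
    (D : Finset (Fin n × Fin n)) (φ : Fin n × Fin n → Fin n × Fin n) : Prop where
  hφ : ∀ f ∈ D, φ f ∈ dbl M₁
  inj : ∀ f ∈ D, ∀ g ∈ D, φ f = φ g → f = g
  sub : dbl M₂ ⊆ D
  pos : ∀ f ∈ D, 1 ≤ cz M₂ f.1 f.2
  bl : ∀ f ∈ D, f.1 ∈ BL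
  br : ∀ f ∈ D, f.2 ∈ BR
  hD : ∀ f ∈ D, cz M₂ f.1 f.2 = 2 ∨ Cor i i' j j' f
  hD1 : ∀ f ∈ dbl M₁, f ∈ D ∨ Cor i i' j j' f

theorem Setup.pv₁ (s : Setup W K G₁ M₁ G₂ M₂ x y x' y' i i' j j' BL BR σ P Q) :
    PV (cz M₁) (dbl M₁) P Q :=
  s.F.pv (M' := M₁) (D' := dbl M₁) (φ := id) (fun f hf => hf) (fun f _ g _ h => h)
    (fun _ _ _ => rfl) (fun _ _ _ => rfl) s.b.d1 s.b.d2
    (fun f hf => by rw [mem_dbl_cz.1 hf]; norm_num)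

theorem Setup.pv₂ (s : Setup W K G₁ M₁ G₂ M₂ x y x' y' i i' j j' BL BR σ P Q)
    {D : Finset (Fin n × Fin n)} {φ : Fin n × Fin n → Fin n × Fin n}
    (p : Par M₁ M₂ BL BR i i' j j' D φ) :
    PV (cz M₂) D (fun f => P (φ f)) (fun f => Q (φ f)) :=
  s.F.pv p.hφ p.inj (fun _ _ => s.row) (fun _ _ => s.col) p.bl p.br p.pos

/-- From the graph with `D` parked, one transition restores the edge `f` unless it is double. -/
theorem Setup.drop (s : Setup W K G₁ M₁ G₂ M₂ x y x' y' i i' j j' BL BR σ P Q)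
    {e₀ : Fin n × Fin n} (he₀ : e₀ ∈ dbl M₁) (hσ : σ = i' + x e₀)
    {D : Finset (Fin n × Fin n)} {φ : Fin n × Fin n → Fin n × Fin n}
    (p : Par M₁ M₂ BL BR i i' j j' D φ) {X : OmegaBC n d} (sX : IsSimpleG X)
    (cX : cz X = park (cz M₂) D (fun f => P (φ f)) (fun f => Q (φ f)))
    {f : Fin n × Fin n} (hf : f ∈ D) (hc : Cor i i' j j' f)
    (hk : ∀ Y A B, Clos W X Y A B → f.1 ∈ A 0 → P (φ f) ∈ A 0 → Q (φ f) ∈ B 0 → f.2 ∈ B 0 →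
      i ∈ A 4 ∧ i' ∈ A 4 ∧ j ∈ B 4 ∧ j' ∈ B 4) :
    ∃ l ≤ 1, ∃ Y : OmegaBC n d, IsSimpleG Y ∧
      cz Y = park (cz M₂) (D.filter fun g => g = f → g ∈ dbl M₂)
        (fun f => P (φ f)) (fun f => Q (φ f)) ∧
      Par M₁ M₂ BL BR i i' j j' (D.filter fun g => g = f → g ∈ dbl M₂) φ ∧
      Walk (RT W K G₁ M₁ G₂ M₂) l X Y := by
  by_cases h2 : f ∈ dbl M₂
  · have : (D.filter fun g => g = f → g ∈ dbl M₂) = D :=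
      filter_true_of_mem fun g _ h => h ▸ h2
    rw [this]
    exact ⟨0, by omega, X, sX, cX, p, Walk.nil X⟩
  · have eD : (D.filter fun g => g = f → g ∈ dbl M₂) = D.erase f := by
      ext g
      rw [mem_filter, mem_erase, and_comm]
      refine and_congr_left fun _ => ⟨fun h e => h2 (e ▸ h e), fun h e => absurd e h⟩
    rw [eD]
    have p' : Par M₁ M₂ BL BR i i' j j' (D.erase f) φ := by
      refine ⟨fun g hg => p.hφ g (mem_of_mem_erase hg), fun g hg g' hg' => p.inj g
        (mem_of_mem_erase hg) g' (mem_of_mem_erase hg'), fun g hg => mem_erase.2 ⟨?_, p.sub hg⟩,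
        fun g hg => p.pos g (mem_of_mem_erase hg), fun g hg => p.bl g (mem_of_mem_erase hg),
        fun g hg => p.br g (mem_of_mem_erase hg), fun g hg => p.hD g (mem_of_mem_erase hg),
        fun g hg => ?_⟩
      · rintro rfl
        exact h2 hg
      · by_cases hgf : g = f
        · exact Or.inr (hgf ▸ hc)
        · exact (p.hD1 g hg).imp_left fun h => mem_erase.2 ⟨hgf, h⟩
    obtain ⟨Y, cY, sY⟩ := park_graph (s.pv₂ p') s.c.t2 fun u v h => p'.sub (mem_dbl_cz.2 h)
    refine ⟨1, le_rfl, Y, sY, cY, p', Walk.single ?_⟩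
    have pv := s.pv₂ p
    refine s.midRT he₀ (a := f.1) (a' := P (φ f)) (b := Q (φ f)) (b' := f.2)
      (pv.xn f hf f hf).symm (pv.yn f hf f hf) sX sY (fun u v => ?_)
      (fun u v h => s.c.corner h) cX pv p.hφ (fun g hg => (p.hD g hg).imp_right fun h => h.1)
      p.hD1 (Or.inl hσ) fun A B k t1 t2 t3 t4 =>
        ⟨hk Y A B k t1 t2 t3 t4, φ f, p.hφ f hf, k.mA 0 4 (by omega) t2⟩
    have := park_insert (M := cz M₂) (p := fun f => P (φ f)) (q := fun f => Q (φ f))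
      (notMem_erase f D) u v
    rw [insert_erase hf] at this
    rw [cX, cY, this, rk_rev]
    ring

end beta

section beta
variable {n d : ℕ} {G₁ M₁ G₂ M₂ : OmegaBC n d} {x y x' y' : Fin n × Fin n → Fin n}
  {i i' j j' : Fin n}

theorem not_core {M : OmegaBC n d} {f : Fin n × Fin n} (h : Cor i i' j j' f) :
    f ∉ core M i i' j j' := fun h' => (mem_filter.1 h').2 h

theorem cor1 : Cor i i' j j' (i, j) := ⟨Or.inl rfl, Or.inl rfl⟩
theorem cor2 : Cor i i' j j' (i', j') := ⟨Or.inr rfl, Or.inr rfl⟩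
theorem cor3 : Cor i i' j j' (i, j') := ⟨Or.inl rfl, Or.inr rfl⟩
theorem cor4 : Cor i i' j j' (i', j) := ⟨Or.inr rfl, Or.inl rfl⟩

theorem Cfg.park_core (c : Cfg G₁ M₁ G₂ M₂ x y x' y' i i' j j') {P Q : Fin n × Fin n → Fin n}
    {φ : Fin n × Fin n → Fin n × Fin n} (hφ : ∀ f ∈ core M₁ i i' j j', φ f = f) (u v : Fin n) :
    park (cz M₂) (core M₁ i i' j j') (fun f => P (φ f)) (fun f => Q (φ f)) u v =
      park (cz M₁) (core M₁ i i' j j') P Q u v - rk i i' j j' u v := by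
  have h : ∑ f ∈ core M₁ i i' j j', rk f.1 (P (φ f)) f.2 (Q (φ f)) u v =
      ∑ f ∈ core M₁ i i' j j', rk f.1 (P f) f.2 (Q f) u v :=
    Finset.sum_congr rfl fun f hf => by rw [hφ f hf]
  simp only [park, c.e, h]
  ring

variable [NeZero n] {W K : ℕ} {BL BR : Finset (Fin n)} {σ : Fin n} {P Q : Fin n × Fin n → Fin n}

theorem Setup.vis₁ (s : Setup W K G₁ M₁ G₂ M₂ x y x' y' i i' j j' BL BR σ P Q) {X : OmegaBC n d}
    (cX : cz X = park (cz M₁) (dbl M₁) P Q) {u v : Fin n} (hu : u ∈ BL) (hv : v ∈ BR)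
    (h : cz M₁ u v ≠ 0) : cz X u v ≠ 0 :=
  visible cX s.F.pl s.F.qr hu hv h fun hD => mem_dbl_cz.1 hD

theorem Setup.vis₂ (s : Setup W K G₁ M₁ G₂ M₂ x y x' y' i i' j j' BL BR σ P Q)
    {D : Finset (Fin n × Fin n)} {φ : Fin n × Fin n → Fin n × Fin n}
    (p : Par M₁ M₂ BL BR i i' j j' D φ) {X : OmegaBC n d}
    (cX : cz X = park (cz M₂) D (fun f => P (φ f)) (fun f => Q (φ f))) {u v : Fin n}
    (hu : u ∈ BL) (hv : v ∈ BR) (h : cz M₂ u v ≠ 0) (hD : (u, v) ∉ D) : cz X u v ≠ 0 :=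
  visible cX (fun e he => s.F.pl _ (p.hφ e he)) (fun e he => s.F.qr _ (p.hφ e he)) hu hv h
    fun h => absurd h hD

/-- The graphs are connected if `(i, j)` is the only double edge destroyed and `(i', j)` the only
one created. -/
theorem Cfg.caseA (c : Cfg G₁ M₁ G₂ M₂ x y x' y' i i' j j') {m : ℕ} (hd : 1 ≤ d)
    (h1 : (dbl M₁).card ≤ m) (h2 : (dbl M₂).card ≤ m)
    (hW : (5 * m + 2) * (1 + d + d ^ 2) = W) (hn : W ≤ n)
    (hK : (dbl M₁).card + (dbl M₂).card ≤ K + 1)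
    (s1 : (i, j) ∈ dbl M₁) (s2 : (i', j') ∉ dbl M₁) (s3 : (i, j') ∉ dbl M₂)
    (s4 : (i', j) ∈ dbl M₂) :
    ∃ l ≤ 2 * (dbl M₁).card + 3 + 2 * (dbl M₂).card, Walk (RT W K G₁ M₁ G₂ M₂) l G₁ G₂ := by
  obtain ⟨BL, BR, P, Q, s⟩ := c.setup hd h1 h2 hW hn hK (i' + x (i, j))
  obtain ⟨⟨v1, v2⟩, v3, v4⟩ := c.vals
  have v0 : cz M₁ i j = 2 := mem_dbl_cz.1 s1
  have q1 := c.p'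
  have q2 := c.rev.p
  have q3 := c.rev.p'
  have e1 : dbl M₁ = insert (i, j) (core M₁ i i' j j') := by
    ext f
    rw [mem_insert]
    refine ⟨fun h => ?_, ?_⟩
    · rcases c.corner_dbl₁ h with h' | h' | h'
      · exact Or.inr h'
      · exact Or.inl h'
      · exact absurd (h' ▸ h) s2
    · rintro (rfl | h)
      · exact s1
      · exact (mem_filter.1 h).1
  have e2 : dbl M₂ = insert (i', j) (core M₁ i i' j j') := by
    ext f
    rw [mem_insert]
    refine ⟨fun h => ?_, ?_⟩
    · rcases c.corner_dbl₂ h with h' | h' | h'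
      · exact Or.inr h'
      · exact absurd (h' ▸ h) s3
      · exact Or.inl h'
    · rintro (rfl | h)
      · exact s4
      · rw [← c.core₂] at h
        exact (mem_filter.1 h).1
  let φ : Fin n × Fin n → Fin n × Fin n := fun f => if f = (i', j) then (i, j) else f
  have φ1 : φ (i', j) = (i, j) := if_pos rfl
  have φ2 : ∀ f ∈ core M₁ i i' j j', φ f = f := fun f hf => if_neg fun h => not_core cor4 (h ▸ hf)
  refine s.conn (φ := φ) s1 ?_ ?_ (beta_comp1 s.hW s1 (by omega))
    (beta_comp2 s.hW (by omega) (by omega) (by omega)) fun X₁ X₂ sX₁ sX₂ c1 c2 p1 p2 =>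
      ⟨1, by omega, Walk.single ?_⟩
  · intro f hf
    rw [e2, mem_insert] at hf
    rcases hf with rfl | hf
    · rwa [φ1]
    · rw [φ2 f hf]
      exact (mem_filter.1 hf).1
  · intro f hf g hg h
    rw [e2, mem_insert] at hf hg
    rcases hf with rfl | hf <;> rcases hg with rfl | hg
    · rfl
    · rw [φ1, φ2 g hg] at h
      exact absurd (h ▸ hg) (not_core cor1)
    · rw [φ1, φ2 f hf] at h
      exact absurd (h ▸ hf) (not_core cor1)
    · rwa [φ2 f hf, φ2 g hg] at h
  · refine s.midRT (φ := id) s1 c.hi (b := Q (i, j)) (b' := j')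
      (fun h => s.F.qr _ s1 (h ▸ s.bj')) sX₁ sX₂ (fun u v => ?_) (M := M₁)
      (fun _ _ h => absurd rfl h) (D := dbl M₁) c1 p1 (fun f hf => hf)
      (fun f hf => Or.inl (mem_dbl_cz.1 hf)) (fun f hf => Or.inl hf) (Or.inl rfl)
      fun A B k t1 t2 t3 t4 => ?_
    · rw [c1, c2, e1, e2, park_insert (not_core cor1), park_insert (not_core cor4),
        c.park_core φ2, φ1]
      unfold rk
      ring
    · have b1 : j ∈ B 1 := k.nB 0 _ _ t1 (Or.inl (s.vis₁ c1 s.ai s.bj (by omega)))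
      exact ⟨⟨k.mA 0 4 (by omega) t1, k.mA 0 4 (by omega) t2, k.mB 1 4 (by omega) b1,
        k.mB 0 4 (by omega) t4⟩, (i, j), s1, k.mA 2 4 (by omega)
          (k.nA 1 _ _ b1 (Or.inl (by rw [c1, park_x_snd p1 s1]; norm_num)))⟩

/-- The graphs are connected if `(i, j)` is the only double edge destroyed and `(i', j)` is not
created. -/
theorem Cfg.caseC (c : Cfg G₁ M₁ G₂ M₂ x y x' y' i i' j j') {m : ℕ} (hd : 1 ≤ d)
    (h1 : (dbl M₁).card ≤ m) (h2 : (dbl M₂).card ≤ m)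
    (hW : (5 * m + 2) * (1 + d + d ^ 2) = W) (hn : W ≤ n)
    (hK : (dbl M₁).card + (dbl M₂).card ≤ K + 1)
    (s1 : (i, j) ∈ dbl M₁) (s2 : (i', j') ∉ dbl M₁) (s4 : (i', j) ∉ dbl M₂) :
    ∃ l ≤ 2 * (dbl M₁).card + 3 + 2 * (dbl M₂).card, Walk (RT W K G₁ M₁ G₂ M₂) l G₁ G₂ := by
  obtain ⟨BL, BR, P, Q, s⟩ := c.setup hd h1 h2 hW hn hK (i' + x (i, j))
  obtain ⟨⟨v1, v2⟩, v3, v4⟩ := c.vals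
  have v0 : cz M₁ i j = 2 := mem_dbl_cz.1 s1
  have q1 := c.p'
  have q2 := c.rev.p
  have q3 := c.rev.p'
  have e1 : dbl M₁ = insert (i, j) (core M₁ i i' j j') := by
    ext f
    rw [mem_insert]
    refine ⟨fun h => ?_, ?_⟩
    · rcases c.corner_dbl₁ h with h' | h' | h'
      · exact Or.inr h'
      · exact Or.inl h'
      · exact absurd (h' ▸ h) s2
    · rintro (rfl | h)
      · exact s1
      · exact (mem_filter.1 h).1
  let φ : Fin n × Fin n → Fin n × Fin n := fun f => if f = (i, j') then (i, j) else f
  have φ1 : φ (i, j') = (i, j) := if_pos rfl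
  have φ2 : ∀ f ∈ core M₁ i i' j j', φ f = f := fun f hf => if_neg fun h => not_core cor3 (h ▸ hf)
  have core2 : ∀ f ∈ core M₁ i i' j j', cz M₂ f.1 f.2 = 2 := fun f hf => by
    rw [← c.core₂] at hf
    exact mem_dbl_cz.1 (mem_filter.1 hf).1
  have par : Par M₁ M₂ BL BR i i' j j' (insert (i, j') (core M₁ i i' j j')) φ := by
    refine ⟨fun f hf => ?_, fun f hf g hg h => ?_, fun f hf => ?_, fun f hf => ?_, fun f hf => ?_,
      fun f hf => ?_, fun f hf => ?_, fun f hf => ?_⟩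
    · rcases mem_insert.1 hf with rfl | hf
      · rwa [φ1]
      · rw [φ2 f hf]
        exact (mem_filter.1 hf).1
    · rcases mem_insert.1 hf with rfl | hf <;> rcases mem_insert.1 hg with rfl | hg
      · rfl
      · rw [φ1, φ2 g hg] at h
        exact absurd (h ▸ hg) (not_core cor1)
      · rw [φ1, φ2 f hf] at h
        exact absurd (h ▸ hf) (not_core cor1)
      · rwa [φ2 f hf, φ2 g hg] at h
    · rcases c.corner_dbl₂ hf with h | h | h
      · exact mem_insert_of_mem h
      · exact h ▸ mem_insert_self _ _
      · exact absurd (h ▸ hf) s4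
    · rcases mem_insert.1 hf with rfl | hf
      · exact q2
      · rw [core2 f hf]; norm_num
    · rcases mem_insert.1 hf with rfl | hf
      · exact s.ai
      · exact s.b.d1 f (mem_filter.1 hf).1
    · rcases mem_insert.1 hf with rfl | hf
      · exact s.bj'
      · exact s.b.d2 f (mem_filter.1 hf).1
    · rcases mem_insert.1 hf with rfl | hf
      · exact Or.inr cor3
      · exact Or.inl (core2 f hf)
    · rcases c.corner_dbl₁ hf with h | rfl | rfl
      · exact Or.inl (mem_insert_of_mem h)
      · exact Or.inr cor1
      · exact Or.inr cor2
  refine s.conn (φ := φ) s1 (fun f hf => par.hφ f (par.sub hf))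
    (fun f hf g hg => par.inj f (par.sub hf) g (par.sub hg)) (beta_comp1 s.hW s1 (by omega))
    (beta_comp2 s.hW (by omega) (by omega) (by omega)) fun X₁ X₂ sX₁ sX₂ c1 c2 p1 p2 => ?_
  obtain ⟨X, cX, sX⟩ := park_graph (s.pv₂ par) c.t2 fun u v h => par.sub (mem_dbl_cz.2 h)
  have R1 : RT W K G₁ M₁ G₂ M₂ X₁ X := by
    refine s.midRT (φ := id) s1 (a := P (i, j)) (a' := i') (fun h => s.F.pl _ s1 (h ▸ s.ai')) c.hj
      sX₁ sX (fun u v => ?_) (M := M₁)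
      (fun _ _ h => absurd rfl h) (D := dbl M₁) c1 p1 (fun f hf => hf)
      (fun f hf => Or.inl (mem_dbl_cz.1 hf)) (fun f hf => Or.inl hf) (Or.inl rfl)
      fun A B k t1 t2 t3 t4 => ?_
    · rw [c1, cX, e1, park_insert (not_core cor1), park_insert (not_core cor3),
        c.park_core φ2, φ1]
      unfold rk
      ring
    · have a1 : i ∈ A 1 := k.nA 0 _ _ t3 (Or.inl (s.vis₁ c1 s.ai s.bj (by omega)))
      exact ⟨⟨k.mA 1 4 (by omega) a1, k.mA 0 4 (by omega) t2, k.mB 0 4 (by omega) t3,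
        k.mB 0 4 (by omega) t4⟩, (i, j), s1, k.mA 0 4 (by omega) t1⟩
  have m1 : cz M₂ i j ≠ 0 := by omega
  have m2 : cz M₂ i' j ≠ 0 := by omega
  have n1 : (i, j) ∉ insert (i, j') (core M₁ i i' j j') := by
    rw [mem_insert, not_or]
    exact ⟨fun h => c.hj (congrArg Prod.snd h), not_core cor1⟩
  have n4 : (i', j) ∉ insert (i, j') (core M₁ i i' j j') := by
    rw [mem_insert, not_or]
    exact ⟨fun h => c.hj (congrArg Prod.snd h), not_core cor4⟩
  obtain ⟨l, hl, Y, sY, cY, pY, w⟩ := s.drop s1 rfl par sX cX (mem_insert_self _ _) cor3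
    fun Y A B k t1 t2 t3 t4 => by
      have b1 : j ∈ B 1 := k.nB 0 _ _ t1 (Or.inl (s.vis₂ par cX s.ai s.bj m1 n1))
      have a1 : i' ∈ A 2 := k.nA 1 _ _ b1 (Or.inl (s.vis₂ par cX s.ai' s.bj m2 n4))
      exact ⟨k.mA 0 4 (by omega) t1, k.mA 2 4 (by omega) a1, k.mB 1 4 (by omega) b1,
        k.mB 0 4 (by omega) t4⟩
  obtain rfl : Y = X₂ := by
    refine cz_inj ?_
    rw [cY, c2]
    congr 1
    refine Subset.antisymm (fun f hf => ?_) pY.sub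
    obtain ⟨hf, h⟩ := mem_filter.1 hf
    rcases mem_insert.1 hf with h' | h'
    · exact h h'
    · exact mem_dbl_cz.2 (core2 f h')
  exact ⟨1 + l, by omega, (Walk.single R1).trans w⟩

/-- The graphs are connected if both `(i, j)` and `(i', j')` are double edges of `M₁`. -/
theorem Cfg.caseB (c : Cfg G₁ M₁ G₂ M₂ x y x' y' i i' j j') {m : ℕ} (hd : 1 ≤ d)
    (h1 : (dbl M₁).card ≤ m) (h2 : (dbl M₂).card ≤ m)
    (hW : (5 * m + 2) * (1 + d + d ^ 2) = W) (hn : W ≤ n)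
    (hK : (dbl M₁).card + (dbl M₂).card ≤ K + 1)
    (s1 : (i, j) ∈ dbl M₁) (s2 : (i', j') ∈ dbl M₁) :
    ∃ l ≤ 2 * (dbl M₁).card + 3 + 2 * (dbl M₂).card, Walk (RT W K G₁ M₁ G₂ M₂) l G₁ G₂ := by
  obtain ⟨BL, BR, P, Q, s⟩ := c.setup hd h1 h2 hW hn hK (i' + x (i, j))
  obtain ⟨⟨v1, v2⟩, v3, v4⟩ := c.vals
  have v0 : cz M₁ i j = 2 := mem_dbl_cz.1 s1
  have v0' : cz M₁ i' j' = 2 := mem_dbl_cz.1 s2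
  have q2 := c.rev.p
  have q3 := c.rev.p'
  have ne12 : (i, j) ≠ (i', j') := fun h => c.hj (congrArg Prod.snd h)
  have ne34 : (i, j') ≠ (i', j) := fun h => c.hi (congrArg Prod.fst h)
  have ne13 : (i, j) ≠ (i, j') := fun h => c.hj (congrArg Prod.snd h)
  have ne14 : (i, j) ≠ (i', j) := fun h => c.hi (congrArg Prod.fst h)
  have ne23 : (i', j') ≠ (i, j') := fun h => c.hi (congrArg Prod.fst h).symm
  have ne24 : (i', j') ≠ (i', j) := fun h => c.hj (congrArg Prod.snd h).symm
  have k12 : (i, j) ∉ insert (i', j') (core M₁ i i' j j') := by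
    rw [mem_insert, not_or]; exact ⟨ne12, not_core cor1⟩
  have k34 : (i, j') ∉ insert (i', j) (core M₁ i i' j j') := by
    rw [mem_insert, not_or]; exact ⟨ne34, not_core cor3⟩
  have e1 : dbl M₁ = insert (i, j) (insert (i', j') (core M₁ i i' j j')) := by
    ext f
    rw [mem_insert, mem_insert]
    refine ⟨fun h => ?_, ?_⟩
    · rcases c.corner_dbl₁ h with h' | h' | h' <;> tauto
    · rintro (rfl | rfl | h)
      · exact s1
      · exact s2
      · exact (mem_filter.1 h).1
  let φ : Fin n × Fin n → Fin n × Fin n := fun f =>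
    if f = (i, j') then (i, j) else if f = (i', j) then (i', j') else f
  have φ1 : φ (i, j') = (i, j) := if_pos rfl
  have φ3 : φ (i', j) = (i', j') := by simp only [φ, ne34.symm, if_false, if_true]
  have φ2 : ∀ f ∈ core M₁ i i' j j', φ f = f := fun f hf => by
    have n3 : f ≠ (i, j') := fun h => not_core cor3 (h ▸ hf)
    have n4 : f ≠ (i', j) := fun h => not_core cor4 (h ▸ hf)
    simp only [φ, n3, n4, if_false]
  have core2 : ∀ f ∈ core M₁ i i' j j', cz M₂ f.1 f.2 = 2 := fun f hf => by
    rw [← c.core₂] at hf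
    exact mem_dbl_cz.1 (mem_filter.1 hf).1
  have sp : ∀ {f}, f ∈ insert (i, j') (insert (i', j) (core M₁ i i' j j')) →
      f = (i, j') ∨ f = (i', j) ∨ f ∈ core M₁ i i' j j' := by
    intro f hf
    rwa [mem_insert, mem_insert] at hf
  have par : Par M₁ M₂ BL BR i i' j j' (insert (i, j') (insert (i', j) (core M₁ i i' j j'))) φ := by
    refine ⟨fun f hf => ?_, fun f hf g hg h => ?_, fun f hf => ?_, fun f hf => ?_, fun f hf => ?_,
      fun f hf => ?_, fun f hf => ?_, fun f hf => ?_⟩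
    · rcases sp hf with rfl | rfl | hf
      · rwa [φ1]
      · rwa [φ3]
      · rw [φ2 f hf]
        exact (mem_filter.1 hf).1
    · rcases sp hf with rfl | rfl | hf <;> rcases sp hg with rfl | rfl | hg
      · rfl
      · rw [φ1, φ3] at h
        exact absurd h ne12
      · rw [φ1, φ2 g hg] at h
        exact absurd (h ▸ hg) (not_core cor1)
      · rw [φ1, φ3] at h
        exact absurd h.symm ne12
      · rfl
      · rw [φ3, φ2 g hg] at h
        exact absurd (h ▸ hg) (not_core cor2)
      · rw [φ1, φ2 f hf] at h
        exact absurd (h ▸ hf) (not_core cor1)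
      · rw [φ3, φ2 f hf] at h
        exact absurd (h ▸ hf) (not_core cor2)
      · rwa [φ2 f hf, φ2 g hg] at h
    · rw [mem_insert, mem_insert]
      rcases c.corner_dbl₂ hf with h | h | h <;> tauto
    · rcases sp hf with rfl | rfl | hf
      · exact q2
      · exact q3
      · rw [core2 f hf]; norm_num
    · rcases sp hf with rfl | rfl | hf
      · exact s.ai
      · exact s.ai'
      · exact s.b.d1 f (mem_filter.1 hf).1
    · rcases sp hf with rfl | rfl | hf
      · exact s.bj'
      · exact s.bj
      · exact s.b.d2 f (mem_filter.1 hf).1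
    · rcases sp hf with rfl | rfl | hf
      · exact Or.inr cor3
      · exact Or.inr cor4
      · exact Or.inl (core2 f hf)
    · rcases c.corner_dbl₁ hf with h | rfl | rfl
      · exact Or.inl (mem_insert_of_mem (mem_insert_of_mem h))
      · exact Or.inr cor1
      · exact Or.inr cor2
  refine s.conn (φ := φ) s1 (fun f hf => par.hφ f (par.sub hf))
    (fun f hf g hg => par.inj f (par.sub hf) g (par.sub hg)) (beta_comp1 s.hW s1 (by omega))
    (beta_comp2 s.hW (by omega) (by omega) (by omega)) fun X₁ X₂ sX₁ sX₂ c1 c2 p1 p2 => ?_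
  obtain ⟨X, cX, sX⟩ := park_graph (s.pv₂ par) c.t2 fun u v h => par.sub (mem_dbl_cz.2 h)
  have R1 : RT W K G₁ M₁ G₂ M₂ X₁ X := by
    refine s.midRT (φ := id) s1 (a := P (i, j)) (a' := P (i', j'))
      (fun h => ne12 (s.F.pi _ s1 _ s2 h)) c.hj sX₁ sX (fun u v => ?_) (M := M₁)
      (fun _ _ h => absurd rfl h) (D := dbl M₁) c1 p1 (fun f hf => hf)
      (fun f hf => Or.inl (mem_dbl_cz.1 hf)) (fun f hf => Or.inl hf) (Or.inl rfl)
      fun A B k t1 t2 t3 t4 => ?_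
    · rw [c1, cX, e1, park_insert k12, park_insert (not_core cor2), park_insert k34,
        park_insert (not_core cor4), c.park_core φ2, φ1, φ3]
      unfold rk
      ring
    · have a1 : i ∈ A 1 := k.nA 0 _ _ t3 (Or.inl (s.vis₁ c1 s.ai s.bj (by omega)))
      have a2 : i' ∈ A 1 := k.nA 0 _ _ t4 (Or.inl (s.vis₁ c1 s.ai' s.bj' (by omega)))
      exact ⟨⟨k.mA 1 4 (by omega) a1, k.mA 1 4 (by omega) a2, k.mB 0 4 (by omega) t3,
        k.mB 0 4 (by omega) t4⟩, (i, j), s1, k.mA 0 4 (by omega) t1⟩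
  have m1 : cz M₂ i j ≠ 0 := by omega
  have m2 : cz M₂ i' j' ≠ 0 := by omega
  have n1 : (i, j) ∉ insert (i, j') (insert (i', j) (core M₁ i i' j j')) := by
    rw [mem_insert, mem_insert, not_or, not_or]
    exact ⟨ne13, ne14, not_core cor1⟩
  have n2 : (i', j') ∉ insert (i, j') (insert (i', j) (core M₁ i i' j j')) := by
    rw [mem_insert, mem_insert, not_or, not_or]
    exact ⟨ne23, ne24, not_core cor2⟩
  obtain ⟨l, hl, Y, sY, cY, pY, w⟩ := s.drop s1 rfl par sX cX (mem_insert_self _ _) cor3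
    fun Y A B k t1 t2 t3 t4 => by
      have b1 : j ∈ B 1 := k.nB 0 _ _ t1 (Or.inl (s.vis₂ par cX s.ai s.bj m1 n1))
      have a1 : i' ∈ A 1 := k.nA 0 _ _ t4 (Or.inl (s.vis₂ par cX s.ai' s.bj' m2 n2))
      exact ⟨k.mA 0 4 (by omega) t1, k.mA 1 4 (by omega) a1, k.mB 1 4 (by omega) b1,
        k.mB 0 4 (by omega) t4⟩
  obtain ⟨l', hl', Z, sZ, cZ, pZ, w'⟩ := s.drop s1 rfl pY sY cY
    (mem_filter.2 ⟨mem_insert_of_mem (mem_insert_self _ _), fun h => absurd h.symm ne34⟩) cor4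
    fun Y A B k t1 t2 t3 t4 => by
      have a1 : i ∈ A 1 := k.nA 0 _ _ t4 (Or.inl (s.vis₂ pY cY s.ai s.bj m1
        fun h => n1 (mem_filter.1 h).1))
      have b1 : j' ∈ B 1 := k.nB 0 _ _ t1 (Or.inl (s.vis₂ pY cY s.ai' s.bj' m2
        fun h => n2 (mem_filter.1 h).1))
      exact ⟨k.mA 1 4 (by omega) a1, k.mA 0 4 (by omega) t1, k.mB 0 4 (by omega) t4,
        k.mB 1 4 (by omega) b1⟩
  obtain rfl : Z = X₂ := by
    refine cz_inj ?_
    rw [cZ, c2]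
    congr 1
    refine Subset.antisymm (fun f hf => ?_) pZ.sub
    obtain ⟨hf, h⟩ := mem_filter.1 hf
    obtain ⟨hf, h'⟩ := mem_filter.1 hf
    rcases sp hf with q | q | q
    · exact h' q
    · exact h q
    · exact mem_dbl_cz.2 (core2 f q)
  exact ⟨1 + l + l', by omega, ((Walk.single R1).trans w).trans w'⟩

end beta

section dispatch
variable {n d : ℕ} {G₁ M₁ G₂ M₂ : OmegaBC n d} {x y x' y' : Fin n × Fin n → Fin n}
  {i i' j j' : Fin n} [NeZero n] {W K m : ℕ}

/-- The graphs are connected as soon as the switching destroys a double edge. -/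
theorem Cfg.destroy (c : Cfg G₁ M₁ G₂ M₂ x y x' y' i i' j j') (hd : 1 ≤ d)
    (h1 : (dbl M₁).card ≤ m) (h2 : (dbl M₂).card ≤ m)
    (hW : (5 * m + 2) * (1 + d + d ^ 2) = W) (hn : W ≤ n)
    (hK : (dbl M₁).card + (dbl M₂).card ≤ K + 1)
    (nd : ¬((i, j') ∈ dbl M₂ ∧ (i', j) ∈ dbl M₂))
    (h : (i, j) ∈ dbl M₁ ∨ (i', j') ∈ dbl M₁) :
    ∃ l ≤ 2 * (dbl M₁).card + 3 + 2 * (dbl M₂).card, Walk (RT W K G₁ M₁ G₂ M₂) l G₁ G₂ := by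
  by_cases s1 : (i, j) ∈ dbl M₁
  · by_cases s2 : (i', j') ∈ dbl M₁
    · exact c.caseB hd h1 h2 hW hn hK s1 s2
    by_cases s4 : (i', j) ∈ dbl M₂
    · exact c.caseA hd h1 h2 hW hn hK s1 s2 (fun h => nd ⟨h, s4⟩) s4
    · exact c.caseC hd h1 h2 hW hn hK s1 s2 s4
  · have s2 := h.resolve_left s1
    by_cases s3 : (i, j') ∈ dbl M₂
    · exact c.swap.caseA hd h1 h2 hW hn hK s2 s1 (fun h => nd ⟨s3, h⟩) s3
    · exact c.swap.caseC hd h1 h2 hW hn hK s2 s1 s3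

theorem Cfg.walk (c : Cfg G₁ M₁ G₂ M₂ x y x' y' i i' j j') (hd : 1 ≤ d)
    (h1 : (dbl M₁).card ≤ m) (h2 : (dbl M₂).card ≤ m)
    (hW : (5 * m + 2) * (1 + d + d ^ 2) = W) (hn : W ≤ n)
    (hK : (dbl M₁).card + (dbl M₂).card ≤ K + 1)
    (link : dbl M₂ = dbl M₁ → ∃ e ∈ dbl M₁,
      cz M₁ i e.2 ≠ 0 ∨ cz M₁ i' e.2 ≠ 0 ∨ cz M₁ e.1 j ≠ 0 ∨ cz M₁ e.1 j' ≠ 0) :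
    ∃ l ≤ 2 * (dbl M₁).card + 3 + 2 * (dbl M₂).card, Walk (RT W K G₁ M₁ G₂ M₂) l G₁ G₂ := by
  have hrev : (∃ l ≤ 2 * (dbl M₂).card + 3 + 2 * (dbl M₁).card,
      Walk (RT W K G₂ M₂ G₁ M₁) l G₂ G₁) →
      ∃ l ≤ 2 * (dbl M₁).card + 3 + 2 * (dbl M₂).card,
        Walk (RT W K G₁ M₁ G₂ M₂) l G₁ G₂ := by
    rintro ⟨l, hl, w⟩
    exact ⟨l, by omega, w.rev fun a b h => h.rev⟩
  by_cases b2 : (i, j') ∈ dbl M₂ ∧ (i', j) ∈ dbl M₂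
  · exact hrev (c.rev.caseB hd h2 h1 hW hn (by omega) b2.1 b2.2)
  by_cases b1 : (i, j) ∈ dbl M₁ ∨ (i', j') ∈ dbl M₁
  · exact c.destroy hd h1 h2 hW hn hK b2 b1
  by_cases b3 : (i, j') ∈ dbl M₂ ∨ (i', j) ∈ dbl M₂
  · exact hrev (c.rev.destroy hd h2 h1 hW hn (by omega) (fun h => b1 (Or.inl h.1)) b3)
  have e1 : dbl M₁ = core M₁ i i' j j' := by
    refine Subset.antisymm (fun f hf => ?_) (filter_subset _ _)
    rcases c.corner_dbl₁ hf with h | rfl | rfl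
    · exact h
    · exact absurd (Or.inl hf) b1
    · exact absurd (Or.inr hf) b1
  have e2 : dbl M₂ = core M₁ i i' j j' := by
    refine Subset.antisymm (fun f hf => ?_) ?_
    · rcases c.corner_dbl₂ hf with h | rfl | rfl
      · exact h
      · exact absurd (Or.inl hf) b3
      · exact absurd (Or.inr hf) b3
    · rw [← c.core₂]
      exact filter_subset _ _
  have e := e2.trans e1.symm
  exact c.alpha hd h1 e hW hn hK (link e)

end dispatch

/-- A double edge next to one of the four vertices of the switching exists unless the pair is
perfect. -/
theorem link_of_not_perfect {n d m k : ℕ} {M₁ M₂ : OmegaBC n d} {i i' j j' : Fin n}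
    (hi : i ≠ i') (hj : j ≠ j') (t1 : 1 ≤ M₁.1 i j) (t2 : 1 ≤ M₁.1 i' j')
    (hM : M₂.1 = switchResMG M₁.1 i i' j j') (c1 : InCat k M₁) (c2 : InCat k M₂) (hk : 1 ≤ k)
    (hm : k ≤ m) (np : ¬PerfectPair m M₁ M₂) :
    ∃ e ∈ dbl M₁, cz M₁ i e.2 ≠ 0 ∨ cz M₁ i' e.2 ≠ 0 ∨ cz M₁ e.1 j ≠ 0 ∨ cz M₁ e.1 j' ≠ 0 := by
  by_contra hc
  push Not at hc
  have two : ∀ u v, ¬M₁.1 u v ≤ 1 → (u, v) ∈ dbl M₁ := fun u v h =>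
    mem_dbl.2 (le_antisymm (c1.2.2 u v) (not_le.1 h))
  have L : ∀ u, (∀ e ∈ dbl M₁, cz M₁ u e.2 = 0) → GoodLeft M₁ u := fun u hu => by
    have key : ∀ v, 1 ≤ M₁.1 u v → ∀ w, M₁.1 w v ≤ 1 := fun v hv w => by
      by_contra h
      have := hu _ (two w v h)
      simp only [cz] at this
      omega
    refine ⟨fun v => ?_, key⟩
    by_contra h
    exact h (key v (by omega) u)
  have R : ∀ v, (∀ e ∈ dbl M₁, cz M₁ e.1 v = 0) → GoodRight M₁ v := fun v hv => by
    have key : ∀ u, 1 ≤ M₁.1 u v → ∀ w, M₁.1 u w ≤ 1 := fun u hu w => by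
      by_contra h
      have := hv _ (two u w h)
      simp only [cz] at this
      omega
    refine ⟨fun u => ?_, key⟩
    by_contra h
    exact h (key u (by omega) v)
  exact np ⟨k, hk, hm, c1, c2, i, i', j, j', hi, hj, t1, t2, hM, L i fun e he => (hc e he).1,
    L i' fun e he => (hc e he).2.1, R j fun e he => (hc e he).2.2.1,
    R j' fun e he => (hc e he).2.2.2⟩

theorem InCat.eq {n d k l : ℕ} {G : OmegaBC n d} (h : InCat k G) (h' : InCat l G) : k = l :=
  h.1.symm.trans h'.1

theorem InCat.simple {n d : ℕ} {G : OmegaBC n d} (h : InCat 0 G) : IsSimpleG G := fun u v => by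
  have h0 : dbl G = ∅ := card_eq_zero.1 h.card
  by_contra hc
  have : (u, v) ∈ dbl G := mem_dbl.2 (le_antisymm (h.2.2 u v) (not_le.1 hc))
  rw [h0] at this
  exact absurd this (notMem_empty _)

/-- The path of a tuple: its length is linear in the number of double edges, and each of its steps
determines the tuple up to `k₁ + k₂ - 1` vertices and boundedly many bits. -/
theorem main_path {n d m W k₁ k₂ : ℕ} [NeZero n] (hd : 1 ≤ d)
    (hW : (5 * m + 2) * (1 + d + d ^ 2) = W) (hn : W ≤ n)
    {T : OmegaBC n d × OmegaBC n d × OmegaBC n d × OmegaBC n d} (hT : T ∈ TupleSet n d m)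
    (c1 : InCat k₁ T.2.1) (c2 : InCat k₂ T.2.2.2) :
    1 ≤ k₁ + k₂ ∧ ∃ l ≤ 5 * (k₁ + k₂),
      Walk (RT W (k₁ + k₂ - 1) T.1 T.2.1 T.2.2.1 T.2.2.2) l T.1 T.2.2.1 := by
  obtain ⟨G₁, M₁, G₂, M₂⟩ := T
  obtain ⟨⟨⟨i, i', j, j', hi, hj, t1, t2, hM⟩, ⟨l₁, -, hl₁, c1'⟩, ⟨l₂, -, hl₂, c2'⟩, ns, np⟩, hs1, hs2⟩
    := hT
  simp only at hM c1 c2 c1' c2' ns np hs1 hs2 t1 t2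
  obtain rfl := c1.eq c1'
  obtain rfl := c2.eq c2'
  have hpos : 1 ≤ k₁ + k₂ := by
    by_contra h
    obtain ⟨rfl, rfl⟩ : k₁ = 0 ∧ k₂ = 0 := by omega
    exact ns ⟨c1.simple, c2.simple⟩
  obtain ⟨x, y, p, g1⟩ := SN_park c1 hs1
  obtain ⟨x', y', p', g2⟩ := SN_park c2 hs2
  have d1 := c1.card
  have d2 := c2.card
  have c : Cfg G₁ M₁ G₂ M₂ x y x' y' i i' j j' := by
    have p1 : 1 ≤ cz M₁ i j := by simp only [cz]; exact_mod_cast t1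
    have p2 : 1 ≤ cz M₁ i' j' := by simp only [cz]; exact_mod_cast t2
    exact
      { hi := hi
        hj := hj
        p := p1
        p' := p2
        e := (switch_iff hi hj t1 t2).1 hM
        t1 := c1.le_two
        t2 := c2.le_two
        v1 := p
        v2 := p'
        g1 := g1
        g2 := g2 }
  obtain ⟨l, hl, w⟩ := c.walk (K := k₁ + k₂ - 1) hd (d1.trans_le hl₁) (d2.trans_le hl₂) hW hn
    (by omega) fun e => by
      have : k₂ = k₁ := by rw [← d1, ← d2, e]
      subst this
      exact link_of_not_perfect hi hj t1 t2 hM c1 c2 (by omega) hl₁ np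
  exact ⟨hpos, l, by omega, w⟩

/-! ### Congestion -/

theorem chain_simple {n d : ℕ} {L : List (OmegaBC n d)} {G : OmegaBC n d} (hG : IsSimpleG G)
    (h : L.IsChain fun a b => SimpleAdj a b) (hh : L.head? = some G) : ∀ H ∈ L, IsSimpleG H := by
  induction L generalizing G with
  | nil => simp
  | cons a t ih =>
    obtain rfl : a = G := by simpa using hh
    cases t with
    | nil => simpa using hG
    | cons b t =>
      rw [List.isChain_cons_cons] at h
      intro H hH
      rcases List.mem_cons.1 hH with rfl | hH
      · exact hG
      · exact ih h.1.2.1 h.2 rfl H hH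

theorem SN_simple {n d k : ℕ} {G H : OmegaBC n d} (hc : InCat k G) (h : H ∈ SN G) :
    IsSimpleG H := by
  obtain ⟨x, y, p, e⟩ := SN_park hc h
  obtain ⟨H', e', s⟩ := park_graph p hc.le_two fun u v h => mem_dbl_cz.2 h
  rwa [cz_inj (e.trans e'.symm)]

theorem SN_lower {n d k m : ℕ} (hd : 1 ≤ d) {G : OmegaBC n d} (hc : InCat k G) (hk : k ≤ m)
    (hn : 4 * (1 + d + d ^ 2) * (m + 1) ≤ n) :
    n ^ k ≤ (8 * (1 + d + d ^ 2)) ^ k * (SN G).ncard := by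
  set q := 1 + d + d ^ 2 with hq
  have q0 : 0 < 2 * q := by omega
  have lt := Nat.lt_mul_div_succ n q0
  have le := Nat.mul_div_le n (2 * q)
  set N := n / (2 * q) with hN
  have hm : 2 * m + 1 ≤ N := by
    rw [hN, Nat.le_div_iff_mul_le q0]
    nlinarith
  have hN1 : n ≤ 4 * q * N := by nlinarith
  have hS := SN_card hd hc (N := N) (by rw [← hq]; nlinarith) (by omega)
  calc n ^ k ≤ (4 * q * N) ^ k := Nat.pow_le_pow_left hN1 k
    _ = (4 * q) ^ k * N ^ k := mul_pow _ _ _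
    _ ≤ (4 * q) ^ k * (2 ^ k * (SN G).ncard) := Nat.mul_le_mul_left _ hS
    _ = (8 * q) ^ k * (SN G).ncard := by
      rw [← mul_assoc, ← mul_pow]
      ring_nf

/-- The exponent in base two controlling the congestion: `d`, `W`, `s` are the degree, the size of
the balls and the number of remembered vertices. -/
def expo (d m : ℕ) : ℕ :=
  (2 * m + 1) + 3200 * m ^ 2 + 8 * (1 + d + d ^ 2) * (2 * m) +
    8 * sB d ((5 * m + 2) * (1 + d + d ^ 2)) (2 * m + 3) 14 ^ 2

theorem PB_expo (d : ℕ) : PB fun m => 2 * expo d m + (5 * m + 2) * (1 + d + d ^ 2) +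
    4 * (1 + d + d ^ 2) * (m + 1) := by
  have hW : PB fun m => (5 * m + 2) * (1 + d + d ^ 2) :=
    (((PB.const 5).mul PB.id).add (PB.const 2)).mul (PB.const _)
  have hs : PB fun m => 2 * m + 3 := ((PB.const 2).mul PB.id).add (PB.const 3)
  refine PB.add (PB.add ((PB.const 2).mul ?_) hW) ((PB.const _).mul (PB.id.add (PB.const 1)))
  unfold expo
  exact ((((PB.const 2).mul PB.id).add (PB.const 1)).add ((PB.const 3200).mul (PB.id.pow 2))).add
    ((PB.const _).mul ((PB.const 2).mul PB.id)) |>.add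
    ((PB.const 8).mul ((PB.sB hW hs 14).pow 2))

theorem le_expo (d m : ℕ) :
    (2 * m + 1) * (3200 * m ^ 2) * (8 * (1 + d + d ^ 2)) ^ (2 * m) *
      (3 ^ sB d ((5 * m + 2) * (1 + d + d ^ 2)) (2 * m + 3) 14 ^ 2) ^ 4 ≤ 2 ^ expo d m := by
  unfold expo
  generalize sB d ((5 * m + 2) * (1 + d + d ^ 2)) (2 * m + 3) 14 ^ 2 = s
  rw [pow_add, pow_add, pow_add, pow_mul 2 (8 * (1 + d + d ^ 2)) (2 * m)]
  have h3 : ((3 : ℕ) ^ s) ^ 4 ≤ 2 ^ (8 * s) := by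
    rw [← pow_mul, mul_comm s 4, pow_mul, pow_mul]
    exact Nat.pow_le_pow_left (by norm_num) s
  gcongr
  · exact Nat.lt_two_pow_self.le
  · exact Nat.lt_two_pow_self.le
  · exact Nat.lt_two_pow_self.le

section congestion
variable {n d m W : ℕ} [NeZero n]

/-- One summand of the congestion sum. -/
theorem term_le (hd : 2 ≤ d) (hn : 4 * (1 + d + d ^ 2) * (m + 1) ≤ n)
    {T : OmegaBC n d × OmegaBC n d × OmegaBC n d × OmegaBC n d} (hT : T ∈ TupleSet n d m)
    {H : OmegaBC n d} (hH : IsSimpleG H) {k₁ k₂ : ℕ} (c1 : InCat k₁ T.2.1)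
    (c2 : InCat k₂ T.2.2.2) (h1 : k₁ ≤ m) (h2 : k₂ ≤ m) {l : ℝ} (l0 : 0 ≤ l)
    (hl : l ≤ 5 * ((k₁ : ℝ) + k₂)) :
    piBC n d T.2.1 * Qc n d T.2.1 T.2.2.2 / (((SN T.2.1).ncard : ℝ) * ((SN T.2.2.2).ncard : ℝ)) *
        l ^ 2 ≤
      piUval n d * (2 / ((n * d : ℝ) * ((n * d : ℝ) - 1))) * (3200 * m ^ 2 : ℕ) *
        ((8 * (1 + d + d ^ 2)) ^ (2 * m) : ℕ) / n ^ (k₁ + k₂) := by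
  set q := 8 * (1 + d + d ^ 2) with hq
  have n1 : 1 ≤ n := NeZero.one_le
  have n0 : (0 : ℝ) < n := by exact_mod_cast n1
  have s1 := SN_lower (by omega) c1 h1 hn
  have s2 := SN_lower (by omega) c2 h2 hn
  rw [← hq] at s1 s2
  set S₁ := (SN T.2.1).ncard
  set S₂ := (SN T.2.2.2).ncard
  have hS : n ^ (k₁ + k₂) ≤ q ^ (2 * m) * (S₁ * S₂) := by
    calc n ^ (k₁ + k₂) = n ^ k₁ * n ^ k₂ := pow_add _ _ _
      _ ≤ (q ^ k₁ * S₁) * (q ^ k₂ * S₂) := Nat.mul_le_mul s1 s2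
      _ = q ^ (k₁ + k₂) * (S₁ * S₂) := by ring
      _ ≤ q ^ (2 * m) * (S₁ * S₂) := by
        gcongr
        · omega
        · omega
  have hpos : 0 < n ^ (k₁ + k₂) := pow_pos n1 _
  have hSS : 0 < S₁ * S₂ := by
    by_contra h
    rw [Nat.eq_zero_of_not_pos h, mul_zero] at hS
    omega
  have hinv : 1 / ((S₁ : ℝ) * S₂) ≤ ((q ^ (2 * m) : ℕ) : ℝ) / (n : ℝ) ^ (k₁ + k₂) := by
    rw [div_le_div_iff₀ (by exact_mod_cast hSS) (by positivity), one_mul]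
    exact_mod_cast hS
  obtain ⟨Q0, Q1⟩ := Qc_le (Nat.mul_pos n1 (by omega : 0 < d)) hT.1.1 c1.2.2
  have hpi := piBC_le T.2.1 hH
  have hll : l ^ 2 ≤ 100 * (m : ℝ) ^ 2 := by
    have : l ≤ 10 * (m : ℝ) := by
      have : (k₁ : ℝ) ≤ m := by exact_mod_cast h1
      have : (k₂ : ℝ) ≤ m := by exact_mod_cast h2
      linarith
    nlinarith
  set c := 2 / ((n * d : ℝ) * ((n * d : ℝ) - 1))
  have c0 : 0 ≤ 32 * c := Q0.trans Q1
  have u0 : 0 ≤ piUval n d := (piBC_nonneg T.2.1).trans hpi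
  calc piBC n d T.2.1 * Qc n d T.2.1 T.2.2.2 / ((S₁ : ℝ) * (S₂ : ℝ)) * l ^ 2
      = (piBC n d T.2.1 * Qc n d T.2.1 T.2.2.2) * (1 / ((S₁ : ℝ) * S₂)) * l ^ 2 := by ring
    _ ≤ (piUval n d * (32 * c)) * (((q ^ (2 * m) : ℕ) : ℝ) / (n : ℝ) ^ (k₁ + k₂)) *
        (100 * (m : ℝ) ^ 2) := by
      gcongr
    _ = _ := by
      push_cast
      ring

/-- The congestion of an edge, the summands being grouped by the total number of double edges. -/
theorem congestion (hd : 2 ≤ d) (hn : 4 * (1 + d + d ^ 2) * (m + 1) ≤ n)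
    (hA : (2 ^ expo d m) ^ 2 ≤ n) (hW : (5 * m + 2) * (1 + d + d ^ 2) = W)
    {conn : OmegaBC n d × OmegaBC n d × OmegaBC n d × OmegaBC n d → List (OmegaBC n d)}
    {H H' : OmegaBC n d} (hH : SimpleAdj H H')
    (key : ∀ T ∈ TupleSet n d m, ∀ k₁ k₂, InCat k₁ T.2.1 → InCat k₂ T.2.2.2 → 1 ≤ k₁ + k₂ ∧
      1 ≤ (conn T).length ∧ ((conn T).length : ℝ) - 1 ≤ 5 * ((k₁ : ℝ) + k₂) ∧
      ∀ p ∈ (conn T).zip (conn T).tail,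
        RT W (k₁ + k₂ - 1) T.1 T.2.1 T.2.2.1 T.2.2.2 p.1 p.2) :
    (∑ T ∈ Finset.univ.filter
        (fun T : OmegaBC n d × OmegaBC n d × OmegaBC n d × OmegaBC n d =>
          T ∈ TupleSet n d m ∧ (H, H') ∈ (conn T).zip (conn T).tail),
      piBC n d T.2.1 * Qc n d T.2.1 T.2.2.2 /
          (((SN T.2.1).ncard : ℝ) * ((SN T.2.2.2).ncard : ℝ)) *
        (((conn T).length : ℝ) - 1) ^ 2) ≤
      5 * piUval n d * (2 / ((n * d : ℝ) * ((n * d : ℝ) - 1))) / Real.sqrt n := by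
  have n1 : 1 ≤ n := NeZero.one_le
  have n0 : (0 : ℝ) < n := by exact_mod_cast n1
  set F := Finset.univ.filter
    (fun T : OmegaBC n d × OmegaBC n d × OmegaBC n d × OmegaBC n d =>
      T ∈ TupleSet n d m ∧ (H, H') ∈ (conn T).zip (conn T).tail) with hF
  set q := 8 * (1 + d + d ^ 2) with hq
  set c := 2 / ((n * d : ℝ) * ((n * d : ℝ) - 1)) with hc
  set s := sB d W (2 * m + 3) 14 with hs
  set B := (3 ^ s ^ 2) ^ 4 with hB
  have c0 : 0 ≤ c := by
    have : (1 : ℝ) ≤ (n : ℝ) * d := by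
      have : 1 ≤ n * d := Nat.mul_pos n1 (by omega)
      exact_mod_cast this
    rw [hc]
    exact div_nonneg (by norm_num) (mul_nonneg (by linarith) (by linarith))
  have u0 : 0 ≤ piUval n d := (piBC_nonneg H).trans (piBC_le H hH.1)
  have cat : ∀ T ∈ F, ∃ k₁ k₂, k₁ ≤ m ∧ k₂ ≤ m ∧ InCat k₁ T.2.1 ∧ InCat k₂ T.2.2.2 ∧
      (dbl T.2.1).card + (dbl T.2.2.2).card = k₁ + k₂ := by
    intro T hT
    obtain ⟨⟨-, ⟨k₁, -, h1, c1⟩, ⟨k₂, -, h2, c2⟩, -⟩, -⟩ := (mem_filter.1 hT).2.1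
    exact ⟨k₁, k₂, h1, h2, c1, c2, by rw [← c1.card, ← c2.card]⟩
  have maps : ∀ T ∈ F, (dbl T.2.1).card + (dbl T.2.2.2).card ∈ range (2 * m + 1) := by
    intro T hT
    obtain ⟨k₁, k₂, h1, h2, -, -, e⟩ := cat T hT
    rw [mem_range]
    omega
  rw [← sum_fiberwise_of_maps_to maps]
  have fib : ∀ k ∈ range (2 * m + 1),
      (∑ T ∈ F with (dbl T.2.1).card + (dbl T.2.2.2).card = k,
        piBC n d T.2.1 * Qc n d T.2.1 T.2.2.2 /
          (((SN T.2.1).ncard : ℝ) * ((SN T.2.2.2).ncard : ℝ)) *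
        (((conn T).length : ℝ) - 1) ^ 2) ≤
      piUval n d * c * ((3200 * m ^ 2 : ℕ) * (q ^ (2 * m) : ℕ) * (B : ℕ)) / n := by
    intro k hk
    rw [mem_range] at hk
    by_cases k0 : k = 0
    · rw [sum_eq_zero]
      · positivity
      · intro T hT
        exfalso
        obtain ⟨hT, e'⟩ := mem_filter.1 hT
        obtain ⟨k₁, k₂, h1, h2, c1, c2, e⟩ := cat T hT
        have := (key T (mem_filter.1 hT).2.1 k₁ k₂ c1 c2).1
        omega
    have hcard : ((F.filter fun T => (dbl T.2.1).card + (dbl T.2.2.2).card = k).card : ℝ) ≤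
        n ^ (k - 1) * (B : ℕ) := by
      have h1 := count_RT W (k - 1) hH
      have h2 : n ^ (k - 1) * (3 ^ sB d W (k - 1 + 3) 14 ^ 2) ^ 4 ≤ n ^ (k - 1) * B := by
        have := sB_mono (d := d) (W := W) (show k - 1 + 3 ≤ 2 * m + 3 by omega) 14
        rw [hB, hs]
        gcongr
        · norm_num
      suffices h : (F.filter fun T => (dbl T.2.1).card + (dbl T.2.2.2).card = k).card ≤
          n ^ (k - 1) * B by exact_mod_cast h
      refine (card_le_card fun T hT => ?_).trans (h1.trans h2)
      obtain ⟨hT, e'⟩ := mem_filter.1 hT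
      obtain ⟨k₁, k₂, -, -, c1, c2, e⟩ := cat T hT
      obtain ⟨-, hTT, hz⟩ := mem_filter.1 hT
      have hr := (key T hTT k₁ k₂ c1 c2).2.2.2 _ hz
      rw [← e, e'] at hr
      exact mem_filter.2 ⟨mem_univ _, hr,
        fun u v => (SN_simple c1 hTT.2.1 u v).trans (by norm_num), c1.2.2,
        fun u v => (SN_simple c2 hTT.2.2 u v).trans (by norm_num), c2.2.2⟩
    have hterm : ∀ T ∈ F.filter fun T => (dbl T.2.1).card + (dbl T.2.2.2).card = k,
        piBC n d T.2.1 * Qc n d T.2.1 T.2.2.2 /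
          (((SN T.2.1).ncard : ℝ) * ((SN T.2.2.2).ncard : ℝ)) *
        (((conn T).length : ℝ) - 1) ^ 2 ≤
        piUval n d * c * (3200 * m ^ 2 : ℕ) * (q ^ (2 * m) : ℕ) / n ^ k := by
      intro T hT
      obtain ⟨hT, e'⟩ := mem_filter.1 hT
      obtain ⟨k₁, k₂, h1, h2, c1, c2, e⟩ := cat T hT
      obtain ⟨-, hTT, hz⟩ := mem_filter.1 hT
      obtain ⟨-, l1, l2, -⟩ := key T hTT k₁ k₂ c1 c2
      rw [← e', e]
      refine term_le hd hn hTT hH.1 c1 c2 h1 h2 (sub_nonneg.2 (by exact_mod_cast l1)) l2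
    refine (sum_le_card_nsmul _ _ _ hterm).trans ?_
    rw [nsmul_eq_mul]
    refine (mul_le_mul_of_nonneg_right hcard (by positivity)).trans (le_of_eq ?_)
    obtain ⟨k, rfl⟩ := Nat.exists_eq_succ_of_ne_zero k0
    rw [Nat.succ_sub_one, Nat.succ_eq_add_one]
    field_simp
    ring
  refine (sum_le_sum fib).trans ?_
  rw [sum_const, card_range, nsmul_eq_mul]
  have hE := le_expo d m
  rw [hW, ← hs, ← hB, ← hq] at hE
  have hR : (((2 * m + 1 : ℕ) : ℝ) * ((3200 * m ^ 2 : ℕ) * (q ^ (2 * m) : ℕ) * (B : ℕ))) ≤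
      Real.sqrt n := by
    refine Real.le_sqrt_of_sq_le ?_
    have := (Nat.pow_le_pow_left hE 2).trans hA
    rw [mul_assoc, mul_assoc] at this
    rw [mul_assoc]
    exact_mod_cast this
  have hsq : (0 : ℝ) < Real.sqrt n := Real.sqrt_pos.2 n0
  have hss : Real.sqrt n * Real.sqrt n = n := Real.mul_self_sqrt n0.le
  calc ((2 * m + 1 : ℕ) : ℝ) *
        (piUval n d * c * ((3200 * m ^ 2 : ℕ) * (q ^ (2 * m) : ℕ) * (B : ℕ)) / n)
      = piUval n d * c * (((2 * m + 1 : ℕ) : ℝ) *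
        ((3200 * m ^ 2 : ℕ) * (q ^ (2 * m) : ℕ) * (B : ℕ))) / n := by ring
    _ ≤ piUval n d * c * Real.sqrt n / n := by gcongr
    _ = piUval n d * c / Real.sqrt n := by
      rw [div_eq_div_iff n0.ne' hsq.ne', mul_assoc, hss]
    _ ≤ 5 * piUval n d * c / Real.sqrt n := by
      gcongr
      nlinarith

end congestion

/-- Proposition 4.5 (Connections): for each fixed `d` and `n` large enough, there is
a collection of paths in `Ω^B_n(d)` indexed by `ℋ`, with controlled lengths and
congestion. A path is recorded as the list of its `|P| + 1` visited states, so its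
length is `(list length) - 1`, and the edge `(H,H')` is traversed by `P` iff
`(H,H') ∈ P.zip P.tail`. -/
theorem connections_exist :
    ∃ C : ℝ, 0 < C ∧
      ∀ d : ℕ, 2 ≤ d →
        ∃ N : ℕ, ∀ n : ℕ, N ≤ n → 2 * d ≤ n →
          ∃ conn : OmegaBC n d × OmegaBC n d × OmegaBC n d × OmegaBC n d →
              List (OmegaBC n d),
            (∀ T ∈ TupleSet n d (mfl n),
              (∀ H ∈ conn T, IsSimpleG H) ∧
              (conn T).Chain' (fun a b => SimpleAdj a b) ∧
              (conn T).head? = some T.1 ∧ (conn T).getLast? = some T.2.2.1 ∧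
              ∀ k₁ k₂ : ℕ, InCat k₁ T.2.1 → InCat k₂ T.2.2.2 →
                ((conn T).length : ℝ) - 1 ≤ C * (k₁ + k₂)) ∧
            ∀ H H' : OmegaBC n d, SimpleAdj H H' →
              (∑ T ∈ Finset.univ.filter
                  (fun T : OmegaBC n d × OmegaBC n d × OmegaBC n d × OmegaBC n d =>
                    T ∈ TupleSet n d (mfl n) ∧ (H, H') ∈ (conn T).zip (conn T).tail),
                piBC n d T.2.1 * Qc n d T.2.1 T.2.2.2 /
                    (((SN T.2.1).ncard : ℝ) * ((SN T.2.2.2).ncard : ℝ)) *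
                  (((conn T).length : ℝ) - 1) ^ 2) ≤
              C * piUval n d * QuC n d H H' / Real.sqrt n := by
  refine ⟨5, by norm_num, fun d hd => ?_⟩
  obtain ⟨N, hN⟩ := (PB_expo d).eventually
  refine ⟨N, fun n hn hdn => ?_⟩
  have big := hN n hn
  set m := mfl n
  have : NeZero n := ⟨by omega⟩
  have lin : 2 * expo d m + (5 * m + 2) * (1 + d + d ^ 2) + 4 * (1 + d + d ^ 2) * (m + 1) ≤ n :=
    Nat.lt_two_pow_self.le.trans big
  have hA : (2 ^ expo d m) ^ 2 ≤ n := by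
    rw [← pow_mul, mul_comm]
    refine le_trans (Nat.pow_le_pow_right (by norm_num) ?_) big
    omega
  obtain ⟨W, hW⟩ : ∃ W, (5 * m + 2) * (1 + d + d ^ 2) = W := ⟨_, rfl⟩
  have ex : ∀ T : OmegaBC n d × OmegaBC n d × OmegaBC n d × OmegaBC n d,
      ∃ L : List (OmegaBC n d), T ∈ TupleSet n d m →
        (∀ H ∈ L, IsSimpleG H) ∧ L.IsChain (fun a b => SimpleAdj a b) ∧
        L.head? = some T.1 ∧ L.getLast? = some T.2.2.1 ∧
        ∀ k₁ k₂ : ℕ, InCat k₁ T.2.1 → InCat k₂ T.2.2.2 → 1 ≤ k₁ + k₂ ∧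
          1 ≤ L.length ∧ (L.length : ℝ) - 1 ≤ 5 * ((k₁ : ℝ) + k₂) ∧
          ∀ p ∈ L.zip L.tail, RT W (k₁ + k₂ - 1) T.1 T.2.1 T.2.2.1 T.2.2.2 p.1 p.2 := by
    intro T
    by_cases hT : T ∈ TupleSet n d m
    swap
    · exact ⟨[], fun h => absurd h hT⟩
    obtain ⟨⟨-, ⟨k₁, -, -, c1⟩, ⟨k₂, -, -, c2⟩, -⟩, hs, -⟩ := id hT
    obtain ⟨hk, l, hl, w⟩ := main_path (by omega) hW (by omega) hT c1 c2
    obtain ⟨L, len, hh, ht, hc, hz⟩ := w.toList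
    have hc' : L.IsChain fun a b => SimpleAdj a b := hc.imp fun a b h => h.1
    refine ⟨L, fun _ => ⟨chain_simple (SN_simple c1 hs) hc' hh, hc', hh, ht,
      fun l₁ l₂ e1 e2 => ?_⟩⟩
    obtain rfl := c1.eq e1
    obtain rfl := c2.eq e2
    refine ⟨hk, by omega, ?_, hz⟩
    have : (l : ℝ) ≤ 5 * ((k₁ : ℝ) + k₂) := by exact_mod_cast hl
    rw [len]
    push_cast
    linarith
  choose conn hconn using ex
  refine ⟨conn, fun T hT => ?_, fun H H' hH => ?_⟩
  · obtain ⟨a, b, c, e, f⟩ := hconn T hT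
    exact ⟨a, b, c, e, fun k₁ k₂ h1 h2 => (f k₁ k₂ h1 h2).2.2.1⟩
  · rw [QuC, if_pos hH]
    exact congestion hd (by omega) hA hW hH fun T hT => (hconn T hT).2.2.2.2
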